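/- Fix $r \in \mathbb{N}$ and $\varepsilon > 0$. If $k$ is sufficiently large in terms of $r$ and $\varepsilon$, then for every integer $\ell$ with $0 < \ell < \binom{k}{r}$, we have $\mathrm{ind}_r(k, \ell) \le 1/e + \varepsilon$. -/

import Mathlib

open Finset
open scoped Classical

/-- `Nmax r k ℓ n` is the maximum, over all `r`-uniform hypergraphs `G` on `n` vertices,
of the number of `k`-vertex subsets of `G` inducing exactly `ℓ` edges. -/
noncomputable def Nmax (r k ℓ n : ℕ) : ℕ :=
  sSup {c : ℕ | ∃ E : Finset (Finset (Fin n)), (∀ e ∈ E, e.card = r) ∧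
    c = (((Finset.univ : Finset (Fin n)).powersetCard k).filter
        (fun U => (E.filter (fun e => e ⊆ U)).card = ℓ)).card}

/-!
Passing to the complementary hypergraph we may assume `2ℓ ≤ C(k, r)`. Fix a hypergraph with 0/1
edge weights and call a `k`-set good if it has weight `ℓ`. The degrees of the vertices of a good
set, measured inside the set, are compared with `ℓ`.

* Few good sets have all their degrees below `βℓ`, for some constant `β > 0`. The weight of a
  subset is a function of low degree, so whether it equals `ℓ` is noise stable (the influences of
  a low-degree threshold function are small). Hence, when a small proportion of the vertices of a
  random good set is exchanged, the weight typically stays equal to `ℓ` throughout, and descending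
  in the uniformity one finds that typical `θk`-subsets of good sets span no edge or all edges. If
  all degrees were small, the number of edges in a random `θk`-subset would have small variance
  and this would fail.
* Few good sets have many vertices of degree at least `aℓ`, for any constant `a > 0`. By the same
  noise stability, such a vertex could often be exchanged for an outside vertex without changing
  the weight, but a set has only boundedly many pairs of vertices with this property.
* By pigeonhole over a sequence of scales there is therefore a gap `[a, b)` with `a` much smaller
  than `b` such that most good sets have a vertex of degree at least `b`, but none of degree in
  `[a, b)`.
* To count the latter sets, remove from each its largest vertex of degree at least `b`, and let
  `F x` be the fibre over the `(k - 1)`-set `x`. For every small `S ⊆ F x` and almost every `W ⊆ x`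
  of the same size `m`, the set `(x ∪ S) \ W` determines `S`, its heavy part. Double counting
  these sets shows that `∑ m, u ^ m / m!` is at most about `1` on average over `x`, where
  `u = k |F x| / n`. As `u ≤ e⁻¹ exp u`, the average of `u`, which is the proportion of the sets
  counted, is at most about `1 / e`.
-/

namespace EdgeStatistics

universe u

/-! ### Threshold functions of low degree on the cube -/

section Cube

variable {ι R : Type*} [DecidableEq ι] [AddCommGroup R]

/-- The discrete derivative of a function on the cube in direction `i`. -/
def cubeDiff (i : ι) (p : (ι → Bool) → R) : (ι → Bool) → R :=
  fun x ↦ p (Function.update x i true) - p (Function.update x i false)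

/-- `p` has degree at most `d` on the cube: all its discrete derivatives of order `d` are
constant. -/
def CubeDegLE : ℕ → ((ι → Bool) → R) → Prop
  | 0, p => ∀ x y, p x = p y
  | d + 1, p => ∀ i, CubeDegLE d (cubeDiff i p)

lemma cubeDegLE_of_forall_eq (d : ℕ) {p : (ι → Bool) → R} (h : ∀ x y, p x = p y) :
    CubeDegLE d p := by
  induction d generalizing p with
  | zero => exact h
  | succ _ ih =>
    exact fun i ↦ ih fun x y ↦ by simp only [cubeDiff, sub_eq_zero.2 (h _ _)]

lemma cubeDegLE_of_dependsOn (d : ℕ) (S : Finset ι) (p : (ι → Bool) → R) (hS : #S ≤ d)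
    (hp : DependsOn p S) : CubeDegLE d p := by
  induction d generalizing S p with
  | zero =>
    intro x y
    obtain rfl : S = ∅ := by simpa using hS
    exact hp (by simp)
  | succ d ih =>
    intro i
    by_cases hi : i ∈ S
    · refine ih (S.erase i) _ (by rw [card_erase_of_mem hi]; omega) fun x y hxy ↦ ?_
      have hupdate : ∀ b, p (Function.update x i b) = p (Function.update y i b) := by
        refine fun b ↦ hp fun j hj ↦ ?_
        rcases eq_or_ne j i with rfl | hji
        · simp
        · simp [hji, hxy j (by simpa [hji] using hj)]
      simp only [cubeDiff, hupdate]
    · refine cubeDegLE_of_forall_eq d fun x y ↦ ?_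
      have hzero : ∀ z, cubeDiff i p z = 0 := fun z ↦ sub_eq_zero.2 <| hp fun j hj ↦ by
        have hji : j ≠ i := fun h ↦ hi (h ▸ hj)
        simp [hji]
      rw [hzero, hzero]

lemma CubeDegLE.add {d : ℕ} {p q : (ι → Bool) → R} (hp : CubeDegLE d p) (hq : CubeDegLE d q) :
    CubeDegLE d (p + q) := by
  induction d generalizing p q with
  | zero => exact fun x y ↦ congrArg₂ (· + ·) (hp x y) (hq x y)
  | succ d ih =>
    intro i
    have hdiff : cubeDiff i (p + q) = cubeDiff i p + cubeDiff i q := by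
      ext x; simp only [cubeDiff, Pi.add_apply]; abel
    exact hdiff ▸ ih (hp i) (hq i)

lemma CubeDegLE.sum {d : ℕ} {κ : Type*} {s : Finset κ} {p : κ → (ι → Bool) → R}
    (h : ∀ a ∈ s, CubeDegLE d (p a)) : CubeDegLE d (∑ a ∈ s, p a) :=
  sum_induction p (CubeDegLE d) (fun _ _ ↦ CubeDegLE.add)
    (cubeDegLE_of_forall_eq d fun _ _ ↦ rfl) h

variable [LinearOrder R]

/-- The sign of `y`, with the convention that the sign of `0` is `1`. -/
def thresholdSign (y : R) : ℤ := if 0 ≤ y then 1 else -1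

lemma thresholdSign_eq_one_or (y : R) : thresholdSign y = 1 ∨ thresholdSign y = -1 := by
  unfold thresholdSign; split_ifs <;> simp

lemma thresholdSign_mul_self (y : R) : thresholdSign y * thresholdSign y = 1 := by
  rcases thresholdSign_eq_one_or y with h | h <;> simp [h]

lemma thresholdSign_sub_mul [IsOrderedAddMonoid R] (a b : R) :
    (thresholdSign a - thresholdSign b) * thresholdSign (a - b) =
      1 - thresholdSign a * thresholdSign b := by
  unfold thresholdSign
  split_ifs with ha hb hab hab hb hab hab <;> try norm_num
  · exact hab (sub_nonneg.2 ((not_le.1 hb).le.trans ha))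
  · exact ha (hb.trans (sub_nonneg.1 hab))

/-- The integer `±1` encoded by a coordinate of the cube. -/
def boolSign (b : Bool) : ℤ := if b then 1 else -1

/-- The sign of the discrete derivative of `p` in direction `i`, oriented by the `i`-th
coordinate. -/
def orientedDiffSign (i : ι) (p : (ι → Bool) → R) (x : ι → Bool) : ℤ :=
  boolSign (x i) * thresholdSign (cubeDiff i p x)

lemma orientedDiffSign_mul_self (i : ι) (p : (ι → Bool) → R) (x : ι → Bool) :
    orientedDiffSign i p x * orientedDiffSign i p x = 1 := by
  have h : boolSign (x i) * boolSign (x i) = 1 := by cases x i <;> rfl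
  rw [orientedDiffSign, mul_mul_mul_comm, h, thresholdSign_mul_self, one_mul]

lemma orientedDiffSign_update_self (i : ι) (p : (ι → Bool) → R) (x : ι → Bool) (b : Bool) :
    orientedDiffSign i p (Function.update x i b) =
      boolSign b * thresholdSign (cubeDiff i p x) := by
  simp [orientedDiffSign, cubeDiff]

lemma orientedDiffSign_update_of_ne {i j : ι} (hij : i ≠ j) (p : (ι → Bool) → R)
    (x : ι → Bool) (b : Bool) :
    orientedDiffSign i p (Function.update x j b) =
      boolSign (x i) * thresholdSign (cubeDiff i p (Function.update x j b)) := by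
  rw [orientedDiffSign, Function.update_of_ne hij]

variable [Fintype ι]

/-- The influence of coordinate `i` on the sign of `p`, unnormalised: every point of an edge of the
cube in direction `i` across which the sign of `p` changes contributes `2`. -/
def influence (i : ι) (p : (ι → Bool) → R) : ℤ :=
  ∑ x, (1 - thresholdSign (p (Function.update x i true)) *
    thresholdSign (p (Function.update x i false)))

lemma influence_nonneg (i : ι) (p : (ι → Bool) → R) : 0 ≤ influence i p := by
  refine sum_nonneg fun x _ ↦ ?_
  rcases thresholdSign_eq_one_or (p (Function.update x i true)) with h | h <;>
  rcases thresholdSign_eq_one_or (p (Function.update x i false)) with h' | h' <;>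
  rw [h, h'] <;> norm_num

lemma influence_eq_zero_of_forall_eq {p : (ι → Bool) → R} (hp : ∀ x y, p x = p y) (i : ι) :
    influence i p = 0 :=
  sum_eq_zero fun x _ ↦ by
    rw [hp (Function.update x i true) (Function.update x i false), thresholdSign_mul_self, sub_self]

lemma two_mul_sum_cube (i : ι) (h : (ι → Bool) → ℤ) :
    2 * ∑ x, h x = ∑ x, (h (Function.update x i true) + h (Function.update x i false)) := by
  have hflip : Function.Involutive fun x : ι → Bool ↦ Function.update x i (!x i) := fun x ↦ by simp
  have hsum : ∑ x, h (Function.update x i (!x i)) = ∑ x, h x := Equiv.sum_comp hflip.toPerm h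
  rw [two_mul]
  nth_rw 2 [← hsum]
  rw [← sum_add_distrib]
  refine sum_congr rfl fun x _ ↦ ?_
  conv_lhs => enter [1]; rw [← Function.update_eq_self i x]
  cases x i
  · rw [Bool.not_false, add_comm]
  · rw [Bool.not_true]

lemma influence_eq_two_mul_sum [IsOrderedAddMonoid R] (i : ι) (p : (ι → Bool) → R) :
    influence i p = 2 * ∑ x, thresholdSign (p x) * orientedDiffSign i p x := by
  rw [two_mul_sum_cube i, influence]
  refine sum_congr rfl fun x _ ↦ ?_
  rw [orientedDiffSign_update_self, orientedDiffSign_update_self, ← thresholdSign_sub_mul]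
  simp only [cubeDiff, boolSign, if_true, Bool.false_eq_true, if_false]
  ring

lemma two_mul_sum_orientedDiffSign_mul_le {i j : ι} (hij : i ≠ j) (p : (ι → Bool) → R) :
    2 * ∑ x, orientedDiffSign i p x * orientedDiffSign j p x ≤ influence j (cubeDiff i p) := by
  rw [two_mul_sum_cube j, influence]
  refine sum_le_sum fun x _ ↦ ?_
  simp only [orientedDiffSign_update_of_ne hij, orientedDiffSign_update_self]
  rcases thresholdSign_eq_one_or (cubeDiff i p (Function.update x j true)) with h | h <;>
  rcases thresholdSign_eq_one_or (cubeDiff i p (Function.update x j false)) with h' | h' <;>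
  rcases thresholdSign_eq_one_or (cubeDiff j p x) with h'' | h'' <;>
  cases x i <;> simp [h, h', h'', boolSign]

lemma two_mul_sum_sq_sum_orientedDiffSign_le (p : (ι → Bool) → R) :
    2 * ∑ x, (∑ i, orientedDiffSign i p x) ^ 2 ≤
      2 * Fintype.card ι * 2 ^ Fintype.card ι + ∑ i, ∑ j, influence j (cubeDiff i p) := by
  have hpair : ∀ i j, 2 * ∑ x, orientedDiffSign i p x * orientedDiffSign j p x ≤
      (if i = j then 2 * 2 ^ Fintype.card ι else 0) + influence j (cubeDiff i p) := by
    intro i j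
    rcases eq_or_ne i j with rfl | hij
    · simpa [orientedDiffSign_mul_self] using influence_nonneg i (cubeDiff i p)
    · simpa [hij] using two_mul_sum_orientedDiffSign_mul_le hij p
  calc 2 * ∑ x, (∑ i, orientedDiffSign i p x) ^ 2
      = ∑ i, ∑ j, 2 * ∑ x, orientedDiffSign i p x * orientedDiffSign j p x := by
        simp only [pow_two, sum_mul_sum, ← mul_sum _ _ (2 : ℤ)]
        rw [sum_comm]
        exact congrArg _ (sum_congr rfl fun i _ ↦ sum_comm)
    _ ≤ ∑ i, ∑ j, ((if i = j then 2 * 2 ^ Fintype.card ι else 0) + influence j (cubeDiff i p)) :=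
        sum_le_sum fun i _ ↦ sum_le_sum fun j _ ↦ hpair i j
    _ = _ := by
        simp only [sum_add_distrib, sum_ite_eq, mem_univ, if_true, sum_const, card_univ,
          nsmul_eq_mul]
        ring

-- The total influence is the correlation of `thresholdSign ∘ p` with the sum of the oriented
-- derivative signs; Cauchy–Schwarz bounds it by the total influences of the derivatives of `p`.
lemma sq_sum_influence_le [IsOrderedAddMonoid R] (p : (ι → Bool) → R) :
    (∑ i, influence i p) ^ 2 ≤ 2 * 2 ^ Fintype.card ι *
      (2 * Fintype.card ι * 2 ^ Fintype.card ι + ∑ i, ∑ j, influence j (cubeDiff i p)) := by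
  have htotal : ∑ i, influence i p =
      2 * ∑ x, thresholdSign (p x) * ∑ i, orientedDiffSign i p x := by
    simp only [influence_eq_two_mul_sum, ← mul_sum]
    rw [sum_comm]
    simp only [mul_sum]
  have hsigns : ∑ x : ι → Bool, thresholdSign (p x) ^ 2 = 2 ^ Fintype.card ι := by
    simp [pow_two, thresholdSign_mul_self]
  have hcs := sum_mul_sq_le_sq_mul_sq univ (fun x ↦ thresholdSign (p x))
    fun x ↦ ∑ i, orientedDiffSign i p x
  rw [hsigns] at hcs
  calc (∑ i, influence i p) ^ 2
      = 4 * (∑ x, thresholdSign (p x) * ∑ i, orientedDiffSign i p x) ^ 2 := by rw [htotal]; ring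
    _ ≤ 4 * (2 ^ Fintype.card ι * ∑ x, (∑ i, orientedDiffSign i p x) ^ 2) := by gcongr
    _ = 2 * 2 ^ Fintype.card ι * (2 * ∑ x, (∑ i, orientedDiffSign i p x) ^ 2) := by ring
    _ ≤ _ := by gcongr; exact two_mul_sum_sq_sum_orientedDiffSign_le p

theorem CubeDegLE.exists_sum_influence_le [IsOrderedAddMonoid R] (d : ℕ) {η : ℝ} (hη : 0 < η) :
    ∃ m₀ : ℕ, ∀ (ι : Type) [Fintype ι] [DecidableEq ι], m₀ ≤ Fintype.card ι →
      ∀ p : (ι → Bool) → R, CubeDegLE d p →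
        ((∑ i, influence i p : ℤ) : ℝ) ≤ η * Fintype.card ι * 2 ^ Fintype.card ι := by
  induction d generalizing η with
  | zero =>
    refine ⟨0, fun ι _ _ _ p hp ↦ ?_⟩
    rw [sum_eq_zero fun i _ ↦ influence_eq_zero_of_forall_eq hp i, Int.cast_zero]
    positivity
  | succ d ih =>
    obtain ⟨m₁, hm₁⟩ := ih (η := η ^ 2 / 4) (by positivity)
    obtain ⟨m₂, hm₂⟩ := exists_nat_gt (8 / η ^ 2)
    refine ⟨max m₁ m₂, fun ι _ _ hm p hp ↦ ?_⟩
    set m := Fintype.card ι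
    have hlarge : 8 < m * η ^ 2 := by
      rw [← div_lt_iff₀ (by positivity)]
      exact hm₂.trans_le (by exact_mod_cast (le_max_right _ _).trans hm)
    have hderiv : ∑ i, ((∑ j, influence j (cubeDiff i p) : ℤ) : ℝ) ≤
        m * (η ^ 2 / 4 * m * 2 ^ m) := by
      refine (sum_le_card_nsmul _ _ _ fun i _ ↦
        hm₁ ι ((le_max_left _ _).trans hm) _ (hp i)).trans_eq ?_
      rw [card_univ, nsmul_eq_mul]
    have hsq : ((∑ i, influence i p : ℤ) : ℝ) ^ 2 ≤ 2 * 2 ^ m * (2 * m * 2 ^ m +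
        ∑ i, ((∑ j, influence j (cubeDiff i p) : ℤ) : ℝ)) := by
      exact_mod_cast sq_sum_influence_le p
    refine le_of_sq_le_sq ?_ (by positivity)
    calc ((∑ i, influence i p : ℤ) : ℝ) ^ 2
        ≤ 2 * 2 ^ m * (2 * m * 2 ^ m + m * (η ^ 2 / 4 * m * 2 ^ m)) := hsq.trans (by gcongr)
      _ = (2 ^ m) ^ 2 * m * (4 + m * η ^ 2 / 2) := by ring
      _ ≤ (2 ^ m) ^ 2 * m * (m * η ^ 2) := by gcongr; linarith
      _ = (η * m * 2 ^ m) ^ 2 := by ring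

end Cube

/-! ### Functions of low degree on slices -/

section Slice

variable {α G : Type*} [DecidableEq α]

lemma subset_sdiff_pair {P A : Finset α} {p q : α} :
    A ⊆ P \ {p, q} ↔ A ⊆ P ∧ p ∉ A ∧ q ∉ A := by
  simp [subset_sdiff]

lemma eq_of_forall_swap_eq {β : Type*} {g : Finset α → β} {P A B : Finset α} {s : ℕ}
    (h : ∀ p ∈ P, ∀ q ∈ P, p ≠ q → ∀ Z ⊆ P \ {p, q}, #Z = s → g (insert p Z) = g (insert q Z))
    (hA : A ⊆ P) (hB : B ⊆ P) (hAs : #A = s + 1) (hBs : #B = s + 1) : g A = g B := by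
  induction hn : #(A \ B) generalizing A with
  | zero =>
    have hAB : A ⊆ B := by simpa [sdiff_eq_empty_iff_subset] using hn
    rw [eq_of_subset_of_card_le hAB (by omega)]
  | succ n ih =>
    obtain ⟨p, hp⟩ : (A \ B).Nonempty := card_pos.1 (by omega)
    obtain ⟨q, hq⟩ : (B \ A).Nonempty := by
      rw [← card_pos, ← card_sdiff_comm (hAs.trans hBs.symm)]
      omega
    rw [mem_sdiff] at hp hq
    have hpq : p ≠ q := fun e ↦ hp.2 (e ▸ hq.1)
    have hqA : q ∉ A.erase p := fun h ↦ hq.2 (mem_of_mem_erase h)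
    have hcard : #(A.erase p) = s := by rw [card_erase_of_mem hp.1]; omega
    have hswap : g A = g (insert q (A.erase p)) := by
      have := h p (hA hp.1) q (hB hq.1) hpq (A.erase p)
        (subset_sdiff_pair.2 ⟨(erase_subset _ _).trans hA, notMem_erase _ _, hqA⟩) hcard
      rwa [insert_erase hp.1] at this
    have hsdiff : insert q (A.erase p) \ B = (A \ B).erase p := by
      rw [insert_sdiff_of_mem _ hq.1, erase_sdiff_comm]
    rw [hswap]
    refine ih (insert_subset (hB hq.1) ((erase_subset _ _).trans hA)) ?_ ?_
    · rw [card_insert_of_notMem hqA, hcard]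
    · rw [hsdiff, card_erase_of_mem (mem_sdiff.2 hp)]; omega

variable [AddCommGroup G]

/-- The effect on `g` of exchanging the element `q` for the element `p`: the discrete derivative
on slices. -/
def swapDiff (p q : α) (g : Finset α → G) : Finset α → G :=
  fun Z ↦ g (insert p Z) - g (insert q Z)

/-- `g` has degree at most `d` on every slice of the powerset of `P`: exchanging `d` disjoint pairs
of elements of `P` leaves a function that only depends on the cardinality. -/
def SliceDegLE : ℕ → Finset α → (Finset α → G) → Prop
  | 0, P, g => ∀ A ⊆ P, ∀ B ⊆ P, #A = #B → g A = g B
  | d + 1, P, g => ∀ p ∈ P, ∀ q ∈ P, p ≠ q → SliceDegLE d (P \ {p, q}) (swapDiff p q g)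

lemma sliceDegLE_of_forall_eq (d : ℕ) {P : Finset α} {g : Finset α → G}
    (h : ∀ A ⊆ P, ∀ B ⊆ P, g A = g B) : SliceDegLE d P g := by
  induction d generalizing P g with
  | zero => exact fun A hA B hB _ ↦ h A hA B hB
  | succ _ ih =>
    intro p hp q hq _
    have hzero : ∀ A ⊆ P \ {p, q}, swapDiff p q g A = 0 := fun A hA ↦ by
      have hAP := (subset_sdiff_pair.1 hA).1
      exact sub_eq_zero.2 (h _ (insert_subset hp hAP) _ (insert_subset hq hAP))
    exact ih fun A hA B hB ↦ by rw [hzero A hA, hzero B hB]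

lemma SliceDegLE.add {d : ℕ} {P : Finset α} {g h : Finset α → G} (hg : SliceDegLE d P g)
    (hh : SliceDegLE d P h) : SliceDegLE d P (g + h) := by
  induction d generalizing P g h with
  | zero =>
    exact fun A hA B hB hAB ↦ congrArg₂ (· + ·) (hg A hA B hB hAB) (hh A hA B hB hAB)
  | succ d ih =>
    intro p hp q hq hpq
    have hdiff : swapDiff p q (g + h) = swapDiff p q g + swapDiff p q h := by
      ext Z; simp only [swapDiff, Pi.add_apply]; abel
    exact hdiff ▸ ih (hg p hp q hq hpq) (hh p hp q hq hpq)

lemma SliceDegLE.sum {d : ℕ} {P : Finset α} {κ : Type*} {I : Finset κ} {g : κ → Finset α → G}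
    (h : ∀ a ∈ I, SliceDegLE d P (g a)) : SliceDegLE d P (∑ a ∈ I, g a) :=
  sum_induction g (SliceDegLE d P) (fun _ _ ↦ SliceDegLE.add)
    (sliceDegLE_of_forall_eq d fun _ _ _ _ ↦ rfl) h

lemma sliceDegLE_of_inter (d : ℕ) {P S : Finset α} {g : Finset α → G} (hS : #S ≤ d)
    (h : ∀ A ⊆ P, ∀ B ⊆ P, A ∩ S = B ∩ S → g A = g B) : SliceDegLE d P g := by
  induction d generalizing P S g with
  | zero =>
    obtain rfl : S = ∅ := by simpa using hS
    exact sliceDegLE_of_forall_eq 0 fun A hA B hB ↦ h A hA B hB (by simp)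
  | succ d ih =>
    intro p hp q hq _
    have hins : ∀ A ⊆ P \ {p, q}, ∀ B ⊆ P \ {p, q}, A ∩ S = B ∩ S →
        swapDiff p q g A = swapDiff p q g B := by
      intro A hA B hB hAB
      have hx : ∀ x ∈ P, g (insert x A) = g (insert x B) := fun x hx ↦
        h _ (insert_subset hx (subset_sdiff_pair.1 hA).1) _
          (insert_subset hx (subset_sdiff_pair.1 hB).1) (by
            by_cases hxS : x ∈ S
            · rw [insert_inter_of_mem hxS, insert_inter_of_mem hxS, hAB]
            · rw [insert_inter_of_notMem hxS, insert_inter_of_notMem hxS, hAB])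
      simp only [swapDiff, hx p hp, hx q hq]
    have hdrop : ∀ x ∈ S, x ∈ ({p, q} : Finset α) →
        SliceDegLE d (P \ {p, q}) (swapDiff p q g) := by
      intro x hxS hx
      refine ih (S := S.erase x) (by rw [card_erase_of_mem hxS]; omega) fun A hA B hB hAB ↦ ?_
      have hxA : x ∉ A := fun hxA ↦ (mem_sdiff.1 (hA hxA)).2 hx
      have hxB : x ∉ B := fun hxB ↦ (mem_sdiff.1 (hB hxB)).2 hx
      rw [inter_erase, inter_erase, erase_eq_of_notMem fun h ↦ hxA (mem_inter.1 h).1,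
        erase_eq_of_notMem fun h ↦ hxB (mem_inter.1 h).1] at hAB
      exact hins A hA B hB hAB
    by_cases hpS : p ∈ S
    · exact hdrop p hpS (by simp)
    by_cases hqS : q ∈ S
    · exact hdrop q hqS (by simp)
    have hzero : ∀ A ⊆ P \ {p, q}, swapDiff p q g A = 0 := fun A hA ↦ by
      have hAP := (subset_sdiff_pair.1 hA).1
      refine sub_eq_zero.2 (h _ (insert_subset hp hAP) _ (insert_subset hq hAP) ?_)
      rw [insert_inter_of_notMem hpS, insert_inter_of_notMem hqS]
    exact sliceDegLE_of_forall_eq d fun A hA B hB ↦ by rw [hzero A hA, hzero B hB]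

lemma card_swapDiff_ne_zero_le [DecidableEq G] {P : Finset α} {p q : α} (hp : p ∈ P) (hq : q ∈ P)
    (g : Finset α → G) (s : ℕ) :
    #{A ∈ (P \ {p, q}).powersetCard s | swapDiff p q g A ≠ 0} ≤
      #{A ∈ P.powersetCard (s + 1) | g A ≠ 0} := by
  set f : Finset α → Finset α := fun A ↦ if g (insert p A) ≠ 0 then insert p A else insert q A
    with hf
  have hinv : ∀ A ⊆ P \ {p, q}, f A \ {p, q} = A := by
    intro A hA
    have hdisj := disjoint_of_subset_left hA sdiff_disjoint
    simp only [hf]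
    split_ifs <;> rw [insert_sdiff_of_mem _ (by simp), sdiff_eq_self_of_disjoint hdisj]
  refine card_le_card_of_injOn f ?_ fun A hA B hB hAB ↦ ?_
  · intro A hA
    simp only [coe_filter, mem_powersetCard, Set.mem_ofPred_eq] at hA ⊢
    obtain ⟨⟨hA, hAs⟩, hdiff⟩ := hA
    obtain ⟨hAP, hpA, hqA⟩ := subset_sdiff_pair.1 hA
    simp only [hf]
    split_ifs with hgp
    · exact ⟨⟨insert_subset hp hAP, by rw [card_insert_of_notMem hpA, hAs]⟩, hgp⟩
    · refine ⟨⟨insert_subset hq hAP, by rw [card_insert_of_notMem hqA, hAs]⟩, fun hgq ↦ hdiff ?_⟩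
      rw [swapDiff, not_not.1 hgp, hgq, sub_self]
  · simp only [coe_filter, mem_powersetCard, Set.mem_ofPred_eq] at hA hB
    rw [← hinv A hA.1.1, ← hinv B hB.1.1, hAB]

lemma centralBinom_succ_le (s : ℕ) : (s + 1).centralBinom ≤ 4 * s.centralBinom := by
  have := Nat.succ_mul_centralBinom_succ s
  by_contra! hlt
  nlinarith

theorem SliceDegLE.centralBinom_le [DecidableEq G] {d s : ℕ} {P : Finset α} {g : Finset α → G}
    (hg : SliceDegLE d P g) (hP : #P = 2 * s) (hne : ∃ R ∈ P.powersetCard s, g R ≠ 0) :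
    s.centralBinom ≤ 4 ^ d * #{R ∈ P.powersetCard s | g R ≠ 0} := by
  have hconst {d s : ℕ} {P : Finset α} {g : Finset α → G} (hP : #P = 2 * s)
      (hne : ∃ R ∈ P.powersetCard s, g R ≠ 0)
      (h : ∀ A ∈ P.powersetCard s, ∀ B ∈ P.powersetCard s, g A = g B) :
      s.centralBinom ≤ 4 ^ d * #{R ∈ P.powersetCard s | g R ≠ 0} := by
    obtain ⟨R, hR, hgR⟩ := hne
    rw [filter_true_of_mem fun A hA ↦ h A hA R hR ▸ hgR, card_powersetCard, hP]
    exact Nat.le_mul_of_pos_left _ (by positivity)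
  induction d generalizing s P g with
  | zero =>
    refine hconst hP hne fun A hA B hB ↦ ?_
    rw [mem_powersetCard] at hA hB
    exact hg A hA.1 B hB.1 (hA.2.trans hB.2.symm)
  | succ d ih =>
    by_cases hc : ∀ A ∈ P.powersetCard s, ∀ B ∈ P.powersetCard s, g A = g B
    · exact hconst hP hne hc
    rcases s with _ | s
    · simp at hc
    obtain ⟨p, hp, q, hq, hpq, Z, hZ, hZs, hgZ⟩ : ∃ p ∈ P, ∃ q ∈ P, p ≠ q ∧
        ∃ Z ⊆ P \ {p, q}, #Z = s ∧ g (insert p Z) ≠ g (insert q Z) := by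
      by_contra! hswap
      refine hc fun A hA B hB ↦ ?_
      rw [mem_powersetCard] at hA hB
      exact eq_of_forall_swap_eq hswap hA.1 hB.1 hA.2 hB.2
    have hcard : #(P \ {p, q}) = 2 * s := by
      rw [card_sdiff_of_subset (by simp [insert_subset_iff, hp, hq]), card_pair hpq]; omega
    have hrec := ih (hg p hp q hq hpq) hcard
      ⟨Z, mem_powersetCard.2 ⟨hZ, hZs⟩, sub_ne_zero.2 hgZ⟩
    calc (s + 1).centralBinom ≤ 4 * s.centralBinom := centralBinom_succ_le s
      _ ≤ 4 * (4 ^ d * #{R ∈ P.powersetCard (s + 1) | g R ≠ 0}) := by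
        gcongr
        exact hrec.trans (Nat.mul_le_mul_left _ (card_swapDiff_ne_zero_le hp hq g s))
      _ = _ := by ring

end Slice

/-! ### Random relabelings -/

section Relabel

variable {α β M : Type*}

/-- The weight function `φ` on finite sets, pulled back along the permutation `σ` of the
vertices. -/
def relabel (σ : Equiv.Perm α) (φ : Finset α → β) : Finset α → β :=
  fun W ↦ φ (W.map σ.toEmbedding)

lemma relabel_mul (σ τ : Equiv.Perm α) (φ : Finset α → β) :
    relabel (σ * τ) φ = relabel τ (relabel σ φ) := by
  ext W
  simp only [relabel, map_map]
  rfl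

/-- The total weight of the `r`-subsets of `X`. When `ψ` is the indicator of the edge set of an
`r`-uniform hypergraph, this is the number of edges induced by `X`. -/
def edgeWeight [AddCommMonoid M] (r : ℕ) (ψ : Finset α → M) (X : Finset α) : M :=
  ∑ W ∈ X.powersetCard r, ψ W

lemma edgeWeight_relabel [AddCommMonoid M] (r : ℕ) (ψ : Finset α → M) (τ : Equiv.Perm α)
    (X : Finset α) : edgeWeight r (relabel τ ψ) X = edgeWeight r ψ (X.map τ.toEmbedding) := by
  simp only [edgeWeight, powersetCard_map, sum_map]
  rfl

lemma exists_perm_map_eq [Finite α] {ι : Type*} {A A' : ι → Finset α}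
    (hA : Pairwise (Function.onFun Disjoint A)) (hA' : Pairwise (Function.onFun Disjoint A'))
    (hcard : ∀ i, #(A i) = #(A' i)) :
    ∃ τ : Equiv.Perm α, ∀ i, (A i).map τ.toEmbedding = A' i := by
  have hcoe {B : ι → Finset α} (hB : Pairwise (Function.onFun Disjoint B)) :
      Pairwise (Function.onFun Disjoint fun i ↦ (B i : Set α)) :=
    fun i j hij ↦ disjoint_coe.2 (hB hij)
  let e : (⋃ i, (A i : Set α)) ≃ (⋃ i, (A' i : Set α)) :=
    (Set.unionEqSigmaOfDisjoint (hcoe hA)).trans <|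
      (Equiv.sigmaCongrRight fun i ↦ equivOfCardEq (hcard i)).trans
        (Set.unionEqSigmaOfDisjoint (hcoe hA')).symm
  have he : ∀ i x (hx : x ∈ A i), (e ⟨x, Set.mem_iUnion.2 ⟨i, hx⟩⟩ : α) ∈ A' i := by
    intro i x hx
    have hmk : Set.unionEqSigmaOfDisjoint (hcoe hA) ⟨x, Set.mem_iUnion.2 ⟨i, hx⟩⟩ = ⟨i, x, hx⟩ := by
      rw [← Equiv.eq_symm_apply]
      rfl
    simp only [e, Equiv.trans_apply, hmk, Set.coe_unionEqSigmaOfDisjoint_symm_apply]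
    exact Subtype.prop _
  refine ⟨e.extendSubtype, fun i ↦ eq_of_subset_of_card_le ?_ (by rw [card_map, hcard])⟩
  intro y hy
  obtain ⟨x, hx, rfl⟩ := mem_map.1 hy
  rw [Equiv.coe_toEmbedding, e.extendSubtype_apply_of_mem x (Set.mem_iUnion.2 ⟨i, hx⟩)]
  exact he i x hx

lemma exists_perm_map_eq_triple [Finite α] {A B C A' B' C' : Finset α}
    (hAB : Disjoint A B) (hAC : Disjoint A C) (hBC : Disjoint B C)
    (hAB' : Disjoint A' B') (hAC' : Disjoint A' C') (hBC' : Disjoint B' C')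
    (hA : #A = #A') (hB : #B = #B') (hC : #C = #C') :
    ∃ τ : Equiv.Perm α, A.map τ.toEmbedding = A' ∧ B.map τ.toEmbedding = B' ∧
      C.map τ.toEmbedding = C' := by
  obtain ⟨τ, hτ⟩ := exists_perm_map_eq (A := ![A, B, C]) (A' := ![A', B', C'])
    (by intro i j hij; fin_cases i <;> fin_cases j <;> simp_all [Function.onFun, disjoint_comm])
    (by intro i j hij; fin_cases i <;> fin_cases j <;> simp_all [Function.onFun, disjoint_comm])
    (by intro i; fin_cases i <;> simpa)
  exact ⟨τ, hτ 0, hτ 1, hτ 2⟩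

lemma exists_perm_map_eq_pair [Finite α] [DecidableEq α] {X Y X' Y' : Finset α} (hX : #X = #X')
    (hY : #Y = #Y') (hXY : #(X \ Y) = #(X' \ Y')) :
    ∃ τ : Equiv.Perm α, X.map τ.toEmbedding = X' ∧ Y.map τ.toEmbedding = Y' := by
  have hcard := card_sdiff_add_card_inter X Y
  have hcard' := card_sdiff_add_card_inter X' Y'
  have hcardY := card_sdiff_add_card_inter Y X
  have hcardY' := card_sdiff_add_card_inter Y' X'
  rw [inter_comm] at hcardY hcardY'
  have hdisj (X Y : Finset α) : Disjoint (X ∩ Y) (X \ Y) := (disjoint_sdiff_inter X Y).symm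
  obtain ⟨τ, hinter, hXsdiff, hYsdiff⟩ :=
    exists_perm_map_eq_triple (hdisj X Y) (inter_comm X Y ▸ hdisj Y X) disjoint_sdiff_sdiff
      (hdisj X' Y') (inter_comm X' Y' ▸ hdisj Y' X') disjoint_sdiff_sdiff
      (by omega) hXY (by omega)
  refine ⟨τ, ?_, ?_⟩
  · rw [← sdiff_union_inter X Y, map_union, hinter, hXsdiff, sdiff_union_inter]
  · rw [← sdiff_union_inter Y X, map_union, hYsdiff, inter_comm, hinter, inter_comm,
      sdiff_union_inter]

variable [Fintype α] [DecidableEq α] {ι κ : Type*} {φ : Finset α → β}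

/-- The probability that `Q` holds for the relabeling of `φ` by a uniformly random permutation.
Fixing a `k`-set and relabeling `φ` at random amounts to choosing a random `k`-set. -/
noncomputable def relabelProb (φ : Finset α → β) (Q : (Finset α → β) → Prop) : ℝ :=
  #{σ : Equiv.Perm α | Q (relabel σ φ)} / Fintype.card (Equiv.Perm α)

lemma card_perm_pos : (0 : ℝ) < Fintype.card (Equiv.Perm α) := by
  exact_mod_cast Fintype.card_pos

lemma relabelProb_eq_zero {Q : (Finset α → β) → Prop} (h : ∀ σ, ¬ Q (relabel σ φ)) :
    relabelProb φ Q = 0 := by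
  simp [relabelProb, h]

lemma relabelProb_mono {Q Q' : (Finset α → β) → Prop}
    (h : ∀ σ, Q (relabel σ φ) → Q' (relabel σ φ)) : relabelProb φ Q ≤ relabelProb φ Q' := by
  unfold relabelProb
  gcongr with σ
  exact h σ

lemma relabelProb_le_add {Q Q₁ Q₂ : (Finset α → β) → Prop}
    (h : ∀ σ, Q (relabel σ φ) → Q₁ (relabel σ φ) ∨ Q₂ (relabel σ φ)) :
    relabelProb φ Q ≤ relabelProb φ Q₁ + relabelProb φ Q₂ := by
  refine (relabelProb_mono (Q' := fun ψ ↦ Q₁ ψ ∨ Q₂ ψ) h).trans ?_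
  simp only [relabelProb, ← add_div, filter_or]
  gcongr
  exact_mod_cast card_union_le _ _

lemma relabelProb_congr {Q Q' : (Finset α → β) → Prop} (τ : Equiv.Perm α)
    (h : ∀ ψ, Q ψ ↔ Q' (relabel τ ψ)) : relabelProb φ Q = relabelProb φ Q' := by
  unfold relabelProb
  congr 2
  refine card_equiv (Equiv.mulRight τ) fun σ ↦ ?_
  simp [h, relabel_mul]

lemma sum_relabelProb (I : Finset ι) (Q : ι → (Finset α → β) → Prop)
    [∀ i, DecidablePred (Q i)] :
    ∑ i ∈ I, relabelProb φ (Q i) =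
      (∑ σ : Equiv.Perm α, (#{i ∈ I | Q i (relabel σ φ)} : ℝ)) /
        Fintype.card (Equiv.Perm α) := by
  simp only [relabelProb, ← sum_div, card_filter, Nat.cast_sum]
  rw [sum_comm]
  congr! 5

lemma mul_sum_relabelProb_le {I : Finset ι} {J : Finset κ} {Q : ι → (Finset α → β) → Prop}
    {Q' : κ → (Finset α → β) → Prop} [∀ i, DecidablePred (Q i)] [∀ j, DecidablePred (Q' j)]
    {c : ℝ} (h : ∀ σ, c * #{i ∈ I | Q i (relabel σ φ)} ≤ #{j ∈ J | Q' j (relabel σ φ)}) :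
    c * ∑ i ∈ I, relabelProb φ (Q i) ≤ ∑ j ∈ J, relabelProb φ (Q' j) := by
  rw [sum_relabelProb, sum_relabelProb, ← mul_div_assoc, mul_sum]
  gcongr
  exact h _

lemma sum_relabelProb_le {I : Finset ι} {Q : ι → (Finset α → β) → Prop}
    [∀ i, DecidablePred (Q i)] {c : ℝ} (h : ∀ σ, #{i ∈ I | Q i (relabel σ φ)} ≤ c) :
    ∑ i ∈ I, relabelProb φ (Q i) ≤ c := by
  rw [sum_relabelProb, div_le_iff₀ card_perm_pos]
  simpa [mul_comm c] using sum_le_card_nsmul univ _ c fun σ _ ↦ h σ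

lemma mul_relabelProb_le_sum {J : Finset κ} {Q : (Finset α → β) → Prop}
    {Q' : κ → (Finset α → β) → Prop} [∀ j, DecidablePred (Q' j)] {c : ℝ}
    (h : ∀ σ, Q (relabel σ φ) → c ≤ #{j ∈ J | Q' j (relabel σ φ)}) :
    c * relabelProb φ Q ≤ ∑ j ∈ J, relabelProb φ (Q' j) := by
  rw [sum_relabelProb, relabelProb, mul_div_assoc', mul_comm, ← nsmul_eq_mul, ← sum_const,
    sum_filter]
  gcongr with σ
  split_ifs with hQ
  · exact h σ hQ
  · positivity

lemma relabelProb_le_sum {I : Finset ι} {Q : (Finset α → β) → Prop}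
    {Q' : ι → (Finset α → β) → Prop} (h : ∀ σ, Q (relabel σ φ) → ∃ i ∈ I, Q' i (relabel σ φ)) :
    relabelProb φ Q ≤ ∑ i ∈ I, relabelProb φ (Q' i) := by
  rw [← one_mul (relabelProb φ Q)]
  refine mul_relabelProb_le_sum fun σ hQ ↦ ?_
  exact_mod_cast (filter_nonempty_iff.2 (h σ hQ)).card_pos

lemma mul_relabelProb_le_of_forall_le {I : Finset ι} (hI : I.Nonempty)
    {A : (Finset α → β) → Prop} {B : ι → (Finset α → β) → Prop} [∀ i, DecidablePred (B i)]
    {ε η : ℝ} (h : ∀ i ∈ I, relabelProb φ (fun ψ ↦ A ψ ∧ B i ψ) ≤ ε) :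
    η * relabelProb φ (fun ψ ↦ A ψ ∧ η * #I ≤ #{i ∈ I | B i ψ}) ≤ ε := by
  have hle : η * #I * relabelProb φ (fun ψ ↦ A ψ ∧ η * #I ≤ #{i ∈ I | B i ψ}) ≤ #I • ε :=
    (mul_relabelProb_le_sum fun σ hσ ↦ by simpa [hσ.1] using hσ.2).trans
      (sum_le_card_nsmul I _ ε h)
  rw [nsmul_eq_mul, mul_right_comm, mul_comm] at hle
  exact le_of_mul_le_mul_left hle (by exact_mod_cast hI.card_pos)

end Relabel

/-! ### Noise sensitivity of edge statistics -/

section Blocks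

variable {α ι τ γ : Type*} [Fintype τ] [Fintype γ] [Fintype ι]

/-- The set selected by the point `x` of a cube: the common part `γ`, together with one of the two
copies of the block `τ` for each coordinate. Changing one coordinate exchanges one block. -/
def blockSet (e : (ι × τ × Bool) ⊕ γ ↪ α) (x : ι → Bool) : Finset α :=
  (disjSum {z | x z.1 = z.2.2} univ).map e

lemma card_blockSet (e : (ι × τ × Bool) ⊕ γ ↪ α) (x : ι → Bool) :
    #(blockSet e x) = Fintype.card ι * Fintype.card τ + Fintype.card γ := by
  rw [blockSet, card_map, card_disjSum, card_univ]
  simp only [card_filter, Fintype.sum_prod_type, sum_ite_eq, mem_univ, if_true, sum_const,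
    card_univ, smul_eq_mul, mul_one]

lemma card_blockSet_update_sdiff [DecidableEq α] [DecidableEq ι] (e : (ι × τ × Bool) ⊕ γ ↪ α)
    (x : ι → Bool) (i : ι) :
    #(blockSet e (Function.update x i true) \ blockSet e (Function.update x i false)) =
      Fintype.card τ := by
  have hsdiff : blockSet e (Function.update x i true) \ blockSet e (Function.update x i false) =
      (({i} ×ˢ univ ×ˢ {true} : Finset (ι × τ × Bool)).map .inl).map e := by
    rw [blockSet, blockSet, ← Finset.map_sdiff]
    congr 1
    ext (⟨j, t, b⟩ | c)
    · by_cases hj : j = i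
      · subst hj; cases b <;> simp
      · simp [hj, Ne.symm hj]
    · simp
  simp [hsdiff]

lemma exists_dependsOn_subset_blockSet (e : (ι × τ × Bool) ⊕ γ ↪ α) (W : Finset α) :
    ∃ S : Finset ι, #S ≤ #W ∧ DependsOn (fun x ↦ W ⊆ blockSet e x) (S : Set ι) := by
  classical
  set T := W.preimage e e.injective.injOn with hT
  have hTW : #T ≤ #W := card_le_card_of_injOn e (by intro z; simp [hT]) e.injective.injOn
  refine ⟨T.toLeft.image Prod.fst, card_image_le.trans (card_toLeft_le.trans hTW), ?_⟩
  suffices himp : ∀ x y : ι → Bool, (∀ i ∈ T.toLeft.image Prod.fst, x i = y i) →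
      W ⊆ blockSet e x → W ⊆ blockSet e y from
    fun x y hxy ↦ propext ⟨himp x y hxy, himp y x fun i hi ↦ (hxy i hi).symm⟩
  intro x y hxy hW w hw
  obtain ⟨z, hz, rfl⟩ := mem_map.1 (hW hw)
  refine mem_map_of_mem e ?_
  rcases z with z | c
  · have : x z.1 = y z.1 := hxy _ (mem_image_of_mem _ (by simpa [hT] using hw))
    simpa [← this] using hz
  · simp

end Blocks

lemma edgeWeight_eq_sum_ite {α M : Type*} [Fintype α] [DecidableEq α] [AddCommMonoid M] (r : ℕ)
    (ψ : Finset α → M) (X : Finset α) :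
    edgeWeight r ψ X = ∑ W ∈ univ.powersetCard r, if W ⊆ X then ψ W else 0 := by
  rw [edgeWeight, ← sum_filter]
  congr 1
  ext W
  simp [mem_powersetCard, and_comm]

section NoiseSensitivity

variable {α ι : Type*} [Fintype ι] [DecidableEq ι]

lemma cubeDegLE_edgeWeight_blockSet {τ γ M : Type*} [Finite α] [Fintype τ] [Fintype γ]
    [AddCommGroup M]
    (e : (ι × τ × Bool) ⊕ γ ↪ α) (r : ℕ) (ψ : Finset α → M) (a : M) :
    CubeDegLE r (fun x ↦ edgeWeight r ψ (blockSet e x) - a) := by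
  classical
  cases nonempty_fintype α
  have hsum : (fun x ↦ edgeWeight r ψ (blockSet e x) - a) =
      (∑ W ∈ univ.powersetCard r, fun x ↦ if W ⊆ blockSet e x then ψ W else 0) + fun _ ↦ -a := by
    ext x
    simp [edgeWeight_eq_sum_ite, sub_eq_add_neg]
  rw [hsum]
  refine .add (.sum fun W hW ↦ ?_) (cubeDegLE_of_forall_eq r fun _ _ ↦ rfl)
  obtain ⟨S, hS, hdep⟩ := exists_dependsOn_subset_blockSet e W
  refine cubeDegLE_of_dependsOn r S _ (hS.trans_eq (mem_powersetCard.1 hW).2) fun x y hxy ↦ ?_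
  simp only [hdep hxy]

lemma ite_eq_and_ne_le (u v l : ℤ) : (if u = l ∧ v ≠ l then (2 : ℤ) else 0) ≤
    (1 - thresholdSign (u - l) * thresholdSign (v - l)) +
      (1 - thresholdSign (u - (l + 1)) * thresholdSign (v - (l + 1))) := by
  simp only [thresholdSign]
  split_ifs <;> omega

lemma two_mul_card_update_le (p : (ι → Bool) → ℤ) (l : ℤ) :
    2 * (#{z : (ι → Bool) × ι | p (Function.update z.1 z.2 true) = l ∧
        p (Function.update z.1 z.2 false) ≠ l} : ℤ) ≤
      ∑ i, influence i (fun x ↦ p x - l) + ∑ i, influence i (fun x ↦ p x - (l + 1)) := by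
  rw [card_filter, Nat.cast_sum, mul_sum, Fintype.sum_prod_type_right, ← sum_add_distrib]
  refine sum_le_sum fun i _ ↦ ?_
  rw [influence, influence, ← sum_add_distrib]
  refine sum_le_sum fun x _ ↦ le_trans ?_ (ite_eq_and_ne_le _ _ l)
  split_ifs <;> norm_num

/-- Average over the edges of the cube: each is equally likely to be the pair `(X, Y)`, and
`edgeWeight r ψ` starts or stops being equal to `l` along few of them. -/
lemma relabelProb_edgeWeight_ne_le_of_influence_le {τ γ : Type*} [Fintype α] [DecidableEq α]
    [Nonempty ι] [Fintype τ] [Fintype γ] (e : (ι × τ × Bool) ⊕ γ ↪ α) (r : ℕ) {ε : ℝ}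
    (φ : Finset α → ℤ) (l : ℤ) {X Y : Finset α}
    (hX : #X = Fintype.card ι * Fintype.card τ + Fintype.card γ) (hXY : #X = #Y)
    (hsdiff : #(X \ Y) = Fintype.card τ)
    (h : ∀ (ψ : Finset α → ℤ) (a : ℤ),
      (∑ i, influence i (fun x ↦ edgeWeight r ψ (blockSet e x) - a) : ℤ) ≤
      ε * Fintype.card ι * 2 ^ Fintype.card ι) :
    relabelProb φ (fun ψ ↦ edgeWeight r ψ X = l ∧ edgeWeight r ψ Y ≠ l) ≤ ε := by
  let crosses : (ι → Bool) × ι → (Finset α → ℤ) → Prop := fun z ψ ↦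
    edgeWeight r ψ (blockSet e (Function.update z.1 z.2 true)) = l ∧
      edgeWeight r ψ (blockSet e (Function.update z.1 z.2 false)) ≠ l
  have hprob (z) : relabelProb φ (crosses z) =
      relabelProb φ (fun ψ ↦ edgeWeight r ψ X = l ∧ edgeWeight r ψ Y ≠ l) := by
    obtain ⟨τ, hτX, hτY⟩ := exists_perm_map_eq_pair (hX.trans (card_blockSet e _).symm)
      ((hXY.symm.trans hX).trans (card_blockSet e _).symm)
      (hsdiff.trans (card_blockSet_update_sdiff e z.1 z.2).symm)
    refine relabelProb_congr τ fun ψ ↦ ?_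
    simp only [crosses, edgeWeight_relabel, hτX, hτY]
  have hcount : ∀ ψ, #{z | crosses z ψ} ≤ ε * Fintype.card ι * 2 ^ Fintype.card ι := fun ψ ↦ by
    have htwo := two_mul_card_update_le (fun x ↦ edgeWeight r ψ (blockSet e x)) l
    rw [← Int.cast_le (R := ℝ)] at htwo
    push_cast at htwo
    have hl := h ψ l
    have hl' := h ψ (l + 1)
    push_cast at hl hl'
    linarith
  have hsum := sum_relabelProb_le (φ := φ) (Q := crosses) fun σ ↦ hcount (relabel σ φ)
  simp only [hprob, sum_const, card_univ, nsmul_eq_mul, Fintype.card_prod, Fintype.card_fun,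
    Fintype.card_bool, Nat.cast_mul, Nat.cast_pow, Nat.cast_ofNat] at hsum
  have hpos : (0 : ℝ) < 2 ^ Fintype.card ι * Fintype.card ι := by positivity
  exact le_of_mul_le_mul_left (by linarith) hpos

theorem exists_relabelProb_edgeWeight_ne_le (r : ℕ) {ε : ℝ} (hε : 0 < ε) :
    ∃ θ : ℝ, 0 < θ ∧ ∀ {α : Type u} [Fintype α] [DecidableEq α] {k : ℕ} (φ : Finset α → ℤ) (l : ℤ)
      {X Y : Finset α}, 2 * k ≤ Fintype.card α → #X = k → #Y = k → #(X \ Y) ≤ θ * k →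
      relabelProb φ (fun ψ ↦ edgeWeight r ψ X = l ∧ edgeWeight r ψ Y ≠ l) ≤ ε := by
  obtain ⟨m₀, hm₀⟩ := CubeDegLE.exists_sum_influence_le (R := ℤ) r hε
  refine ⟨1 / (m₀ + 1), by positivity, fun {α} _ _ {k} φ l {X Y} hn hX hY hXY ↦ ?_⟩
  obtain ⟨t, ht⟩ : ∃ t, #(X \ Y) = t := ⟨_, rfl⟩
  rcases Nat.eq_zero_or_pos t with rfl | htpos
  · obtain rfl : X = Y := eq_of_subset_of_card_le (by simpa using ht) (by omega)
    rw [relabelProb_eq_zero fun σ ↦ by tauto]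
    exact hε.le
  have hmk : m₀ + 1 ≤ k / t := by
    rw [Nat.le_div_iff_mul_le htpos]
    rw [ht, one_div_mul_eq_div, le_div_iff₀ (by positivity), mul_comm] at hXY
    exact_mod_cast hXY
  set m := k / t
  have hmt : m * t ≤ k := Nat.div_mul_le_self k t
  obtain ⟨e⟩ : Nonempty ((Fin m × Fin t × Bool) ⊕ Fin (k - m * t) ↪ α) := by
    refine Function.Embedding.nonempty_of_card_le ?_
    simp only [Fintype.card_sum, Fintype.card_prod, Fintype.card_fin, Fintype.card_bool]
    have : m * (t * 2) = 2 * (m * t) := by ring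
    omega
  have : Nonempty (Fin m) := Fin.pos_iff_nonempty.1 (by omega)
  refine relabelProb_edgeWeight_ne_le_of_influence_le e r φ l ?_ (hX.trans hY.symm) (by simpa)
    fun ψ a ↦ hm₀ _ (by rw [Fintype.card_fin]; omega) _ (cubeDegLE_edgeWeight_blockSet e r ψ a)
  simp only [Fintype.card_fin]
  omega

end NoiseSensitivity

section NonconstantSlice

variable {α : Type*} [DecidableEq α]

lemma sliceDegLE_edgeWeight_union {M : Type*} [Finite α] [AddCommGroup M] (r : ℕ)
    (ψ : Finset α → M) (l : M) (b P : Finset α) :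
    SliceDegLE r P (fun R ↦ edgeWeight r ψ (b ∪ R) - l) := by
  cases nonempty_fintype α
  have hsum : (fun R ↦ edgeWeight r ψ (b ∪ R) - l) =
      (∑ W ∈ univ.powersetCard r, fun R ↦ if W ⊆ b ∪ R then ψ W else 0) + fun _ ↦ -l := by
    ext R
    simp [edgeWeight_eq_sum_ite, sub_eq_add_neg]
  rw [hsum]
  refine .add (.sum fun W hW ↦ ?_) (sliceDegLE_of_forall_eq r fun _ _ _ _ ↦ rfl)
  refine sliceDegLE_of_inter r (mem_powersetCard.1 hW).2.le fun A _ B _ hAB ↦ ?_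
  have hsub (R : Finset α) : W ⊆ b ∪ R ↔ W ⊆ b ∪ R ∩ W := by
    simp only [subset_iff, mem_union, mem_inter]
    exact forall₂_congr fun x hx ↦ by simp [hx]
  simp only [hsub A, hsub B, hAB]

lemma card_le_four_pow_mul_card_edgeWeight_ne [Finite α] {r s : ℕ} {ψ : Finset α → ℤ} {l : ℤ}
    {b P : Finset α} (hP : #P = 2 * s) (h : ∃ A ∈ P.powersetCard s, edgeWeight r ψ (b ∪ A) ≠ l) :
    #(P.powersetCard s) ≤ 4 ^ r * #{A ∈ P.powersetCard s | edgeWeight r ψ (b ∪ A) ≠ l} := by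
  rw [card_powersetCard, hP, ← Nat.centralBinom_eq_two_mul_choose]
  simpa only [sub_ne_zero] using (sliceDegLE_edgeWeight_union r ψ l b P).centralBinom_le hP
    (by simpa only [sub_ne_zero] using h)

lemma card_mul_card_edgeWeight_eq_le [Finite α] {r s : ℕ} {ψ : Finset α → ℤ} {l : ℤ}
    {b P : Finset α} (hP : #P = 2 * s) :
    (#(P.powersetCard s) / 4 ^ r : ℝ) * #{A ∈ P.powersetCard s | edgeWeight r ψ (b ∪ A) = l ∧
        ∃ A ∈ P.powersetCard s, edgeWeight r ψ (b ∪ A) ≠ l} ≤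
      #{z ∈ P.powersetCard s ×ˢ P.powersetCard s |
        edgeWeight r ψ (b ∪ z.1) = l ∧ edgeWeight r ψ (b ∪ z.2) ≠ l} := by
  by_cases hne : ∃ A ∈ P.powersetCard s, edgeWeight r ψ (b ∪ A) ≠ l
  · have hslice : (#(P.powersetCard s) : ℝ) ≤
        4 ^ r * #{A ∈ P.powersetCard s | edgeWeight r ψ (b ∪ A) ≠ l} := by
      exact_mod_cast card_le_four_pow_mul_card_edgeWeight_ne hP hne
    rw [filter_product (fun A ↦ edgeWeight r ψ (b ∪ A) = l)
      (fun A ↦ edgeWeight r ψ (b ∪ A) ≠ l), card_product, Nat.cast_mul, mul_comm]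
    simp only [hne, and_true]
    gcongr
    rwa [div_le_iff₀' (by positivity)]
  · simp only [hne, and_false, filter_false, card_empty, Nat.cast_zero, mul_zero, Nat.cast_nonneg]

variable [Fintype α]

lemma relabelProb_nonconstant_congr {r s : ℕ} (φ : Finset α → ℤ) {l : ℤ} {b P R R' : Finset α}
    (hbP : Disjoint b P) (hR : R ∈ P.powersetCard s) (hR' : R' ∈ P.powersetCard s) :
    relabelProb φ (fun ψ ↦ edgeWeight r ψ (b ∪ R) = l ∧
        ∃ A ∈ P.powersetCard s, edgeWeight r ψ (b ∪ A) ≠ l) =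
      relabelProb φ (fun ψ ↦ edgeWeight r ψ (b ∪ R') = l ∧
        ∃ A ∈ P.powersetCard s, edgeWeight r ψ (b ∪ A) ≠ l) := by
  rw [mem_powersetCard] at hR hR'
  obtain ⟨τ, hτb, hτR, hτP⟩ := exists_perm_map_eq_triple
    (disjoint_of_subset_right hR'.1 hbP) (disjoint_of_subset_right sdiff_subset hbP)
    disjoint_sdiff (disjoint_of_subset_right hR.1 hbP)
    (disjoint_of_subset_right sdiff_subset hbP) disjoint_sdiff rfl (hR'.2.trans hR.2.symm)
    (show #(P \ R') = #(P \ R) by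
      rw [card_sdiff_of_subset hR.1, card_sdiff_of_subset hR'.1, hR.2, hR'.2])
  have hτ : P.map τ.toEmbedding = P := by
    rw [← union_sdiff_of_subset hR'.1, map_union, hτR, hτP, union_sdiff_of_subset hR.1,
      union_sdiff_of_subset hR'.1]
  refine relabelProb_congr τ fun ψ ↦ ?_
  conv_lhs => rw [← hτ]
  simp only [edgeWeight_relabel, map_union, hτb, hτR, powersetCard_map, mem_map,
    exists_exists_and_eq_and, RelEmbedding.coe_toEmbedding, mapEmbedding_apply]

/-- If `edgeWeight` is not constant on the slice, it differs from `l` on a proportion at least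
`4⁻ʳ` of it, so that a pair of points of the slice separating `l` from other values is not rare. -/
theorem exists_relabelProb_nonconstant_le (r : ℕ) {ε : ℝ} (hε : 0 < ε) :
    ∃ θ : ℝ, 0 < θ ∧ ∀ {α : Type u} [Fintype α] [DecidableEq α] {k s : ℕ} (φ : Finset α → ℤ) (l : ℤ)
      {b P R : Finset α}, 2 * k ≤ Fintype.card α → Disjoint b P → R ∈ P.powersetCard s →
      #P = 2 * s → #b + s = k → s ≤ θ * k →
      relabelProb φ (fun ψ ↦ edgeWeight r ψ (b ∪ R) = l ∧
        ∃ A ∈ P.powersetCard s, edgeWeight r ψ (b ∪ A) ≠ l) ≤ ε := by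
  obtain ⟨θ, hθ, hnoise⟩ := exists_relabelProb_edgeWeight_ne_le.{u} r (ε := ε / 4 ^ r)
    (by positivity)
  refine ⟨θ, hθ, fun {α} _ _ {k s} φ l {b P R} hn hbP hR hP hb hs ↦ ?_⟩
  set I := P.powersetCard s
  set π := relabelProb φ (fun ψ ↦ edgeWeight r ψ (b ∪ R) = l ∧
    ∃ A ∈ I, edgeWeight r ψ (b ∪ A) ≠ l) with hπ
  have hcard : ∀ A ∈ I, #(b ∪ A) = k := fun A hA ↦ by
    rw [mem_powersetCard] at hA
    rw [card_union_of_disjoint (disjoint_of_subset_right hA.1 hbP), hA.2, hb]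
  have hpair : ∀ z ∈ I ×ˢ I, relabelProb φ (fun ψ ↦ edgeWeight r ψ (b ∪ z.1) = l ∧
      edgeWeight r ψ (b ∪ z.2) ≠ l) ≤ ε / 4 ^ r := by
    intro z hz
    obtain ⟨hz₁, hz₂⟩ := mem_product.1 hz
    refine hnoise φ l hn (hcard _ hz₁) (hcard _ hz₂) (le_trans ?_ hs)
    have hsub : (b ∪ z.1) \ (b ∪ z.2) ⊆ z.1 := by
      rw [union_sdiff_distrib, sdiff_eq_empty_iff_subset.2 subset_union_left, empty_union]
      exact sdiff_subset
    exact_mod_cast (card_le_card hsub).trans_eq (mem_powersetCard.1 hz₁).2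
  have hcongr : ∀ A ∈ I, relabelProb φ (fun ψ ↦ edgeWeight r ψ (b ∪ A) = l ∧
      ∃ A ∈ I, edgeWeight r ψ (b ∪ A) ≠ l) = π := fun A hA ↦
    relabelProb_nonconstant_congr φ hbP hA hR
  have hlower : (#I / 4 ^ r : ℝ) * ∑ A ∈ I, relabelProb φ (fun ψ ↦ edgeWeight r ψ (b ∪ A) = l ∧
        ∃ A ∈ I, edgeWeight r ψ (b ∪ A) ≠ l) ≤
      ∑ z ∈ I ×ˢ I, relabelProb φ (fun ψ ↦ edgeWeight r ψ (b ∪ z.1) = l ∧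
        edgeWeight r ψ (b ∪ z.2) ≠ l) :=
    mul_sum_relabelProb_le fun σ ↦ card_mul_card_edgeWeight_eq_le hP
  have hsum := hlower.trans (sum_le_card_nsmul _ _ _ hpair)
  rw [sum_congr rfl hcongr, sum_const, nsmul_eq_mul, nsmul_eq_mul, card_product,
    Nat.cast_mul] at hsum
  have hIpos : (0 : ℝ) < #I * #I / 4 ^ r := by
    have : 0 < #I := card_pos.2 ⟨R, hR⟩
    positivity
  refine le_of_mul_le_mul_left ?_ hIpos
  linear_combination hsum

end NonconstantSlice

/-! ### Homogeneity of small subsets -/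

section SwapVanishing

variable {α G : Type*} [DecidableEq α] [AddCommGroup G] {j w s c : ℕ} {b P V : Finset α}
  {φ : Finset α → G} {p q : α}

/-- Exchanging `j` disjoint pairs of elements of `P` turns `φ` into a function which vanishes on
the remaining `w`-subsets of `P`. -/
def SwapVanishing : ℕ → ℕ → Finset α → (Finset α → G) → Prop
  | 0, w, P, φ => ∀ W ⊆ P, #W = w → φ W = 0
  | j + 1, w, P, φ => ∀ p ∈ P, ∀ q ∈ P, p ≠ q → SwapVanishing j w (P \ {p, q}) (swapDiff p q φ)

lemma SwapVanishing.mono {P' : Finset α} (h : SwapVanishing j w P φ) (hP : P' ⊆ P) :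
    SwapVanishing j w P' φ := by
  induction j generalizing P P' φ with
  | zero => exact fun W hW ↦ h W (hW.trans hP)
  | succ j ih =>
    exact fun p hp q hq hpq ↦ ih (h p (hP hp) q (hP hq) hpq) (sdiff_subset_sdiff hP le_rfl)

lemma SwapVanishing.apply_eq (h : SwapVanishing 1 w P φ) {A B : Finset α} (hA : A ⊆ P)
    (hB : B ⊆ P) (hAw : #A = w + 1) (hBw : #B = w + 1) : φ A = φ B :=
  eq_of_forall_swap_eq
    (fun p hp q hq hpq Z hZ hZw ↦ sub_eq_zero.1 (h p hp q hq hpq Z hZ hZw)) hA hB hAw hBw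

lemma SwapVanishing.swapDiff_union (h : SwapVanishing (j + 1) w (P ∪ V) φ) (hPV : Disjoint P V)
    (hp : p ∈ P) (hq : q ∈ P) (hpq : p ≠ q) :
    SwapVanishing j w (P \ {p, q} ∪ V) (swapDiff p q φ) := by
  have hV : V ⊆ V \ {p, q} :=
    subset_sdiff_pair.2 ⟨le_rfl, disjoint_left.1 hPV hp, disjoint_left.1 hPV hq⟩
  refine (h p (mem_union_left _ hp) q (mem_union_left _ hq) hpq).mono ?_
  rw [union_sdiff_distrib]
  exact union_subset_union_right hV

lemma card_le_card_sdiff_pair (P : Finset α) (p q : α) : #P ≤ #(P \ {p, q}) + 2 := by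
  have hsdiff := le_card_sdiff {p, q} P
  have hpair : #{p, q} ≤ 2 := card_le_two
  omega

lemma edgeWeight_insert (w : ℕ) (φ : Finset α → G) {X : Finset α} (hp : p ∉ X) :
    edgeWeight (w + 1) φ (insert p X) =
      edgeWeight (w + 1) φ X + ∑ W ∈ X.powersetCard w, φ (insert p W) := by
  have hmem {A : Finset α} (hA : A ∈ X.powersetCard w) : p ∉ A :=
    fun h ↦ hp ((mem_powersetCard.1 hA).1 h)
  rw [edgeWeight, powersetCard_succ_insert hp, sum_union, sum_image, edgeWeight]
  · intro A hA B hB hAB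
    rw [← erase_insert (hmem hA), ← erase_insert (hmem hB), hAB]
  · refine disjoint_left.2 fun A hA hA' ↦ ?_
    obtain ⟨B, _, rfl⟩ := mem_image.1 hA'
    exact hp ((mem_powersetCard.1 hA).1 (mem_insert_self _ _))

lemma edgeWeight_swapDiff (w : ℕ) (φ : Finset α → G) {X : Finset α} (hp : p ∉ X) (hq : q ∉ X) :
    edgeWeight w (swapDiff p q φ) X =
      edgeWeight (w + 1) φ (insert p X) - edgeWeight (w + 1) φ (insert q X) := by
  rw [edgeWeight_insert w φ hp, edgeWeight_insert w φ hq, add_sub_add_left_eq_sub]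
  simp only [edgeWeight, swapDiff, sum_sub_distrib]

lemma edgeWeight_swapDiff_eq_zero {l : G} (hbP : Disjoint b P)
    (h : ∀ Z ⊆ P, #Z = s + 1 → edgeWeight (w + 1) φ (b ∪ Z) = l) (hp : p ∈ P) (hq : q ∈ P)
    {Z : Finset α} (hZ : Z ⊆ P \ {p, q}) (hZs : #Z = s) :
    edgeWeight w (swapDiff p q φ) (b ∪ Z) = 0 := by
  obtain ⟨hZP, hpZ, hqZ⟩ := subset_sdiff_pair.1 hZ
  have hb {x : α} (hx : x ∈ P) : x ∉ b := disjoint_right.1 hbP hx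
  have hw {x : α} (hx : x ∈ P) (hxZ : x ∉ Z) : edgeWeight (w + 1) φ (insert x (b ∪ Z)) = l := by
    rw [← union_insert]
    exact h _ (insert_subset hx hZP) (by rw [card_insert_of_notMem hxZ, hZs])
  rw [edgeWeight_swapDiff w φ (by simp [hb hp, hpZ]) (by simp [hb hq, hqZ]), hw hp hpZ, hw hq hqZ,
    sub_self]

lemma swapVanishing_zero_of_edgeWeight_eq_zero (hbP : Disjoint b P) (hc : c + 2 * j ≤ #P)
    (h : ∀ Z ⊆ P, #Z = c + j → edgeWeight j φ (b ∪ Z) = 0) : SwapVanishing j 0 P φ := by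
  induction j generalizing P φ with
  | zero =>
    intro W _ hW
    obtain ⟨Z, hZ, hZc⟩ := exists_subset_card_eq (show c ≤ #P by omega)
    simpa [edgeWeight, card_eq_zero.1 hW] using h Z hZ hZc
  | succ j ih =>
    intro p hp q hq _
    have hcard := card_le_card_sdiff_pair P p q
    exact ih (disjoint_of_subset_right sdiff_subset hbP) (by omega)
      fun Z hZ hZc ↦ edgeWeight_swapDiff_eq_zero hbP h hp hq hZ hZc

end SwapVanishing

section Density

lemma card_filter_superset_powersetCard {α : Type*} [DecidableEq α] {U e : Finset α} {s : ℕ}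
    (he : e ⊆ U) (hs : #e ≤ s) :
    #{R ∈ U.powersetCard s | e ⊆ R} = (#U - #e).choose (s - #e) := by
  have hdisj {T : Finset α} (hT : T ∈ (U \ e).powersetCard (s - #e)) : Disjoint T e :=
    disjoint_of_subset_left (mem_powersetCard.1 hT).1 sdiff_disjoint
  rw [← card_sdiff_of_subset he, ← card_powersetCard]
  refine (card_bij (fun T _ ↦ T ∪ e) ?_ ?_ ?_).symm
  · intro T hT
    have hTcard := card_union_of_disjoint (hdisj hT)
    rw [mem_powersetCard] at hT
    rw [mem_filter, mem_powersetCard]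
    exact ⟨⟨union_subset (hT.1.trans sdiff_subset) he, by omega⟩, subset_union_right⟩
  · intro T hT T' hT' h
    rw [← union_sdiff_cancel_right (hdisj hT), ← union_sdiff_cancel_right (hdisj hT'), h]
  · intro R hR
    rw [mem_filter, mem_powersetCard] at hR
    refine ⟨R \ e, mem_powersetCard.2 ⟨sdiff_subset_sdiff hR.1.1 le_rfl, ?_⟩,
      sdiff_union_of_subset hR.2⟩
    rw [card_sdiff_of_subset hR.2, hR.1.2]

lemma card_filter_powersetCard_le_of_superset {α : Type*} {b : Finset α} {t s : ℕ} {η : ℝ}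
    (hts : t ≤ s) (hsb : s ≤ #b) {Q Q' : Finset α → Prop} [DecidablePred Q] [DecidablePred Q']
    (hQ : ∀ V ∈ b.powersetCard s, ∀ W ⊆ V, #W = t → Q W → Q' V)
    (hη : #{V ∈ b.powersetCard s | Q' V} ≤ η * (#b).choose s) :
    #{W ∈ b.powersetCard t | Q W} ≤ η * (#b).choose t := by
  classical
  set m := #{W ∈ b.powersetCard t | Q W}
  set n := #{V ∈ b.powersetCard s | Q' V}
  have hdouble : m * (#b - t).choose (s - t) ≤ n * s.choose t := by
    refine card_mul_le_card_mul (· ⊆ ·) (fun W hW ↦ ?_) fun V hV ↦ ?_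
    · rw [mem_filter, mem_powersetCard] at hW
      rw [← hW.1.2, ← card_filter_superset_powersetCard hW.1.1 (by omega)]
      refine card_le_card fun V hV ↦ ?_
      rw [mem_filter] at hV
      exact mem_filter.2 ⟨mem_filter.2 ⟨hV.1, hQ V hV.1 W hV.2 hW.1.2 hW.2⟩, hV.2⟩
    · rw [mem_filter, mem_powersetCard] at hV
      rw [← hV.1.2, ← card_powersetCard]
      refine card_le_card fun W hW ↦ ?_
      simp only [bipartiteBelow, mem_filter, mem_powersetCard] at hW
      exact mem_powersetCard.2 ⟨hW.2, hW.1.1.2⟩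
  have hchoose : ((#b).choose s : ℝ) * s.choose t =
      (#b).choose t * (#b - t).choose (s - t) := by
    exact_mod_cast Nat.choose_mul hts
  have hpos : (0 : ℝ) < (#b - t).choose (s - t) := by
    exact_mod_cast Nat.choose_pos (by omega)
  refine le_of_mul_le_mul_right ?_ hpos
  calc (m * (#b - t).choose (s - t) : ℝ) ≤ n * s.choose t := by exact_mod_cast hdouble
    _ ≤ η * (#b).choose s * s.choose t := by gcongr
    _ = η * (#b).choose t * (#b - t).choose (s - t) := by rw [mul_assoc, hchoose, mul_assoc]

lemma choose_add_le_choose_add_mul (b c w : ℕ) :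
    (b + c).choose (w + 1) ≤ b.choose (w + 1) + c * (b + c - 1).choose w := by
  induction c with
  | zero => simp
  | succ c ih =>
    have hmono : c * (b + c - 1).choose w ≤ c * (b + c).choose w := by gcongr; omega
    rw [← add_assoc, Nat.choose_succ_succ, Nat.add_sub_cancel]
    linarith

lemma choose_add_le_choose_add_mul_choose {b c w : ℕ} {δ : ℝ} (hδ : (w + 1) * c ≤ δ * b)
    (hδ₀ : 0 ≤ δ) : ((b + c).choose (w + 1) : ℝ) ≤
      b.choose (w + 1) + δ * (b + c).choose (w + 1) := by
  rcases Nat.eq_zero_or_pos (b + c) with h | h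
  · obtain ⟨rfl, rfl⟩ := Nat.add_eq_zero_iff.1 h
    simp
  have hle : ((b + c).choose (w + 1) : ℝ) ≤ b.choose (w + 1) + c * (b + c - 1).choose w := by
    exact_mod_cast choose_add_le_choose_add_mul b c w
  have habsorb : ((b + c : ℕ) : ℝ) * (b + c - 1).choose w = (b + c).choose (w + 1) * (w + 1) := by
    have := Nat.add_one_mul_choose_eq (b + c - 1) w
    rw [Nat.sub_add_cancel h] at this
    exact_mod_cast this
  have hmul : (c * (b + c - 1).choose w : ℝ) ≤ δ * (b + c).choose (w + 1) := by
    refine le_of_mul_le_mul_left ?_ (Nat.cast_pos.2 h)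
    calc ((b + c : ℕ) : ℝ) * (c * (b + c - 1).choose w)
        = (b + c).choose (w + 1) * ((w + 1) * c) := by linear_combination (c : ℝ) * habsorb
      _ ≤ (b + c).choose (w + 1) * (δ * (b + c : ℕ)) := by
          refine mul_le_mul_of_nonneg_left ?_ (by positivity)
          exact hδ.trans (by gcongr; omega)
      _ = (b + c : ℕ) * (δ * (b + c).choose (w + 1)) := by ring
  linarith

lemma card_filter_powersetCard_union_le {α : Type*} [DecidableEq α] {b Z : Finset α} {w : ℕ}
    {δ : ℝ} (hbZ : Disjoint b Z) (hδ : (w + 1) * #Z ≤ δ * #b) (hδ₀ : 0 ≤ δ)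
    (Q : Finset α → Prop) [DecidablePred Q] :
    (#{W ∈ (b ∪ Z).powersetCard (w + 1) | Q W} : ℝ) ≤
      #{W ∈ b.powersetCard (w + 1) | Q W} + δ * (#(b ∪ Z)).choose (w + 1) := by
  have hsub : b.powersetCard (w + 1) ⊆ (b ∪ Z).powersetCard (w + 1) :=
    powersetCard_mono subset_union_left
  have hsplit : #{W ∈ (b ∪ Z).powersetCard (w + 1) | Q W} + (#b).choose (w + 1) ≤
      #{W ∈ b.powersetCard (w + 1) | Q W} + (#(b ∪ Z)).choose (w + 1) := by
    have hsdiff := card_sdiff_add_card_eq_card hsub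
    have hfilter : #{W ∈ (b ∪ Z).powersetCard (w + 1) | Q W} ≤
        #{W ∈ b.powersetCard (w + 1) | Q W} +
          #((b ∪ Z).powersetCard (w + 1) \ b.powersetCard (w + 1)) := by
      refine (card_le_card fun W hW ↦ ?_).trans (card_union_le _ _)
      simp only [mem_filter, mem_union, mem_sdiff] at hW ⊢
      tauto
    simp only [card_powersetCard] at hsdiff
    omega
  have hchoose := choose_add_le_choose_add_mul_choose hδ hδ₀
  rw [← card_union_of_disjoint hbZ] at hchoose
  have hsplit' : (#{W ∈ (b ∪ Z).powersetCard (w + 1) | Q W} : ℝ) + (#b).choose (w + 1) ≤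
      #{W ∈ b.powersetCard (w + 1) | Q W} + (#(b ∪ Z)).choose (w + 1) := by exact_mod_cast hsplit
  linarith

lemma card_le_mul_card_filter_ne_of_sum_eq_zero {ι : Type*} {I : Finset ι} {f : ι → ℤ} {B : ℕ}
    {γ : ℤ} (hsum : ∑ i ∈ I, f i = 0) (hB : ∀ i ∈ I, |f i| ≤ B) (hγ : γ ≠ 0) :
    #I ≤ (B + 1) * #{i ∈ I | f i ≠ γ} := by
  have heq : ∑ i ∈ I with f i = γ, f i = #{i ∈ I | f i = γ} * γ := by
    rw [sum_congr rfl fun i hi ↦ (mem_filter.1 hi).2, sum_const, nsmul_eq_mul]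
  have hne : |∑ i ∈ I with ¬ f i = γ, f i| ≤ #{i ∈ I | f i ≠ γ} * B := by
    refine (abs_sum_le_sum_abs _ _).trans ?_
    refine (sum_le_card_nsmul _ _ _ fun i hi ↦ hB i (mem_filter.1 hi).1).trans_eq ?_
    rw [nsmul_eq_mul]
  have hcard := card_filter_add_card_filter_not (s := I) (f · = γ)
  rw [← sum_filter_add_sum_filter_not _ (f · = γ), heq] at hsum
  rw [← abs_neg, ← eq_neg_of_add_eq_zero_left hsum, abs_mul, Nat.abs_cast] at hne
  have hle : (#{i ∈ I | f i = γ} : ℤ) ≤ #{i ∈ I | f i ≠ γ} * B :=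
    (le_mul_of_one_le_right (by positivity) (Int.one_le_abs hγ)).trans hne
  zify at hcard ⊢
  linarith

end Density

section Vanishing

variable {α : Type*} [DecidableEq α] {c w s : ℕ} {η : ℝ} {b P : Finset α}

/- If `φ` took a nonzero value `γ` on `P`, it would be equal to `γ` on almost all `(w + 1)`-subsets
of `b ∪ Z`, hence could not sum to zero. -/
lemma swapVanishing_zero_of_card_le {B : ℕ} {φ : Finset α → ℤ} (hη : 0 ≤ η)
    (hBη : (B + 1) * (2 * η) < 1) (hB : ∀ W, |φ W| ≤ B) (hbP : Disjoint b P) (hcP : c ≤ #P)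
    (hws : w + 1 ≤ s) (hsb : s ≤ #b) (hcη : (w + 1) * c ≤ η * #b)
    (hsum : ∀ Z ⊆ P, #Z = c → edgeWeight (w + 1) φ (b ∪ Z) = 0)
    (hbad : #{V ∈ b.powersetCard s | ¬ SwapVanishing 1 w (P ∪ V) φ} ≤ η * (#b).choose s) :
    SwapVanishing 0 (w + 1) P φ := by
  intro W₀ hW₀ hW₀w
  by_contra hγ
  obtain ⟨Z, hZ, rfl⟩ := exists_subset_card_eq hcP
  have hb : (#{W ∈ b.powersetCard (w + 1) | φ W ≠ φ W₀} : ℝ) ≤ η * (#b).choose (w + 1) := by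
    refine card_filter_powersetCard_le_of_superset hws hsb ?_ hbad
    intro V _ W hW hWw hne hV
    exact hne (hV.apply_eq (hW.trans subset_union_right) (hW₀.trans subset_union_left) hWw hW₀w)
  have hbZ := card_filter_powersetCard_union_le (disjoint_of_subset_right hZ hbP) hcη hη
    (φ · ≠ φ W₀)
  have hI := card_le_mul_card_filter_ne_of_sum_eq_zero (hsum Z hZ rfl) (fun W _ ↦ hB W) hγ
  set N := (#(b ∪ Z)).choose (w + 1)
  rw [card_powersetCard] at hI
  have hbN : (#b).choose (w + 1) ≤ N :=
    Nat.choose_le_choose _ (card_le_card subset_union_left)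
  have hNpos : 0 < N := (Nat.choose_pos (hws.trans hsb)).trans_le hbN
  refine lt_irrefl (N : ℝ) ?_
  calc (N : ℝ) ≤ (B + 1) * #{W ∈ (b ∪ Z).powersetCard (w + 1) | φ W ≠ φ W₀} := by
        exact_mod_cast hI
    _ ≤ (B + 1) * (η * (#b).choose (w + 1) + η * N) := by gcongr; linarith
    _ ≤ (B + 1) * (η * N + η * N) := by gcongr
    _ = (B + 1) * (2 * η) * N := by ring
    _ < N := mul_lt_of_lt_one_left (by exact_mod_cast hNpos) hBη

lemma abs_swapDiff_le {B : ℕ} {φ : Finset α → ℤ} (hB : ∀ W, |φ W| ≤ B) (p q : α)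
    (W : Finset α) : |swapDiff p q φ W| ≤ (2 * B : ℕ) := by
  refine (abs_sub _ _).trans ?_
  push_cast
  linarith [hB (insert p W), hB (insert q W)]

lemma card_not_swapVanishing_swapDiff_le {j : ℕ} {φ : Finset α → ℤ} (hbP : Disjoint b P) {p q : α}
    (hp : p ∈ P) (hq : q ∈ P) (hpq : p ≠ q) :
    #{V ∈ b.powersetCard s | ¬ SwapVanishing j w (P \ {p, q} ∪ V) (swapDiff p q φ)} ≤
      #{V ∈ b.powersetCard s | ¬ SwapVanishing (j + 1) w (P ∪ V) φ} := by
  refine card_le_card fun V hV ↦ ?_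
  rw [mem_filter] at hV ⊢
  exact ⟨hV.1, fun h ↦ hV.2 <| h.swapDiff_union
    (disjoint_of_subset_right (mem_powersetCard.1 hV.1).1 hbP.symm) hp hq hpq⟩

lemma swapVanishing_of_card_le {j B : ℕ} {φ : Finset α → ℤ} (hη : 0 ≤ η)
    (hBη : ((B * 2 ^ j : ℕ) + 1) * (2 * η) < 1) (hB : ∀ W, |φ W| ≤ B) (hbP : Disjoint b P)
    (hcP : c + 2 * j ≤ #P) (hws : w + 1 ≤ s) (hsb : s ≤ #b) (hcη : (w + 1) * c ≤ η * #b)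
    (hsum : ∀ Z ⊆ P, #Z = c + j → edgeWeight (w + 1 + j) φ (b ∪ Z) = 0)
    (hbad : #{V ∈ b.powersetCard s | ¬ SwapVanishing (j + 1) w (P ∪ V) φ} ≤
      η * (#b).choose s) :
    SwapVanishing j (w + 1) P φ := by
  induction j generalizing B P φ with
  | zero =>
    exact swapVanishing_zero_of_card_le hη (by simpa using hBη) hB hbP hcP hws hsb hcη hsum hbad
  | succ j ih =>
    intro p hp q hq hpq
    have hcard := card_le_card_sdiff_pair P p q
    refine ih (B := 2 * B) (by rwa [show 2 * B * 2 ^ j = B * 2 ^ (j + 1) by ring])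
      (abs_swapDiff_le hB p q) (disjoint_of_subset_right sdiff_subset hbP) (by omega)
      (fun Z hZ hZc ↦ edgeWeight_swapDiff_eq_zero hbP hsum hp hq hZ hZc) (hbad.trans' ?_)
    exact_mod_cast card_not_swapVanishing_swapDiff_le hbP hp hq hpq

variable {j : ℕ} {φ : Finset α → ℤ} {l : ℤ}

lemma swapVanishing_zero_of_edgeWeight_eq (hbP : Disjoint b P) (hP : #P = 2 * s) (hjs : j < s)
    (h : ∀ A ∈ P.powersetCard s, edgeWeight (j + 1) φ (b ∪ A) = l) :
    SwapVanishing (j + 1) 0 P φ := by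
  intro p hp q hq _
  have hcard := card_le_card_sdiff_pair P p q
  refine swapVanishing_zero_of_edgeWeight_eq_zero (c := s - 1 - j)
    (disjoint_of_subset_right sdiff_subset hbP) (by omega) fun Z hZ hZc ↦ ?_
  exact edgeWeight_swapDiff_eq_zero hbP (s := s - 1)
    (fun Z hZ hZs ↦ h Z (mem_powersetCard.2 ⟨hZ, by omega⟩)) hp hq hZ (by omega)

lemma swapVanishing_of_edgeWeight_eq (hη : 0 ≤ η) (hjη : (2 ^ (j + 1) + 1) * (2 * η) < 1)
    (hφ : ∀ W, |φ W| ≤ 1) (hbP : Disjoint b P) (hP : #P = 2 * s) (hjs : j < s) (hws : w + 1 ≤ s)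
    (hsb : s ≤ #b) (hsη : (w + 1) * s ≤ η * #b)
    (h : ∀ A ∈ P.powersetCard s, edgeWeight (w + 1 + (j + 1)) φ (b ∪ A) = l)
    (hbad : #{V ∈ b.powersetCard s | ¬ SwapVanishing (j + 2) w (P ∪ V) φ} ≤
      η * (#b).choose s) :
    SwapVanishing (j + 1) (w + 1) P φ := by
  intro p hp q hq hpq
  have hcard := card_le_card_sdiff_pair P p q
  have hc : ((s - 1 - j : ℕ) : ℝ) ≤ s := by exact_mod_cast (by omega : s - 1 - j ≤ s)
  refine swapVanishing_of_card_le (c := s - 1 - j) (B := 2) hη ?_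
    (abs_swapDiff_le (B := 1) (by simpa using hφ) p q) (disjoint_of_subset_right sdiff_subset hbP)
    (by omega) hws hsb (hsη.trans' (by gcongr)) (fun Z hZ hZc ↦ ?_) (hbad.trans' ?_)
  · rw [← pow_succ']
    exact_mod_cast hjη
  · exact edgeWeight_swapDiff_eq_zero hbP (s := s - 1)
      (fun Z hZ hZs ↦ h Z (mem_powersetCard.2 ⟨hZ, by omega⟩)) hp hq hZ (by omega)
  · exact_mod_cast card_not_swapVanishing_swapDiff_le hbP hp hq hpq

end Vanishing

section Homogeneity

lemma relabelProb_not_swapVanishing_le {α : Type*} [Fintype α] [DecidableEq α] {j w k s : ℕ}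
    {ε θ : ℝ} {φ : Finset α → ℤ} {l : ℤ} {b P R V : Finset α}
    (h : ∀ {b P R : Finset α}, Disjoint b P → R ∈ P.powersetCard (2 * s) → #P = 2 * (2 * s) →
      #b + 2 * s = k → ((2 * s : ℕ) : ℝ) ≤ θ * k → relabelProb φ (fun ψ ↦
        edgeWeight (w + 1 + (j + 1)) ψ (b ∪ R) = l ∧ ¬ SwapVanishing (j + 2) w P ψ) ≤ ε)
    (hk : 2 * k ≤ Fintype.card α) (hbP : Disjoint b P) (hR : R ∈ P.powersetCard s)
    (hP : #P = 2 * s) (hb : #b + s = k) (hsk : 4 * s ≤ k) (hsθ : s ≤ θ / 2 * k)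
    (hV : V ∈ b.powersetCard s) :
    relabelProb φ (fun ψ ↦ edgeWeight (w + 1 + (j + 1)) ψ (b ∪ R) = l ∧
      ¬ SwapVanishing (j + 2) w (P ∪ V) ψ) ≤ ε := by
  rw [mem_powersetCard] at hR hV
  obtain ⟨N, hN, hNs⟩ : ∃ N ⊆ (b ∪ P)ᶜ, #N = s := by
    refine exists_subset_card_eq ?_
    rw [card_compl, card_union_of_disjoint hbP]
    omega
  have hNbP : Disjoint (b ∪ P) N := disjoint_right.2 fun x hx ↦ mem_compl.1 (hN hx)
  obtain ⟨hNb, hNP⟩ := disjoint_union_left.1 hNbP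
  have hVP : Disjoint P V := disjoint_of_subset_right hV.1 hbP.symm
  have hPV : Disjoint (P ∪ V) N :=
    disjoint_union_left.2 ⟨hNP, disjoint_of_subset_left hV.1 hNb⟩
  have hunion : b \ V ∪ (R ∪ V) = b ∪ R := by
    rw [union_comm R V, ← union_assoc, sdiff_union_of_subset hV.1]
  have hbound := h (b := b \ V) (P := P ∪ V ∪ N) (R := R ∪ V)
    (disjoint_union_right.2 ⟨disjoint_union_right.2
      ⟨disjoint_of_subset_left sdiff_subset hbP, sdiff_disjoint⟩,
      disjoint_of_subset_left sdiff_subset hNb⟩)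
    (mem_powersetCard.2 ⟨(union_subset_union_left hR.1).trans subset_union_left, by
      rw [card_union_of_disjoint (disjoint_of_subset_left hR.1 hVP)]; omega⟩)
    (by rw [card_union_of_disjoint hPV, card_union_of_disjoint hVP]; omega)
    (by rw [card_sdiff_of_subset hV.1]; omega) (by push_cast; linarith)
  rw [hunion] at hbound
  exact hbound.trans' <| relabelProb_mono fun σ hσ ↦
    ⟨hσ.1, fun hv ↦ hσ.2 (hv.mono subset_union_left)⟩

lemma relabelProb_not_swapVanishing_succ_le {α : Type*} [Fintype α] [DecidableEq α] {j w s : ℕ}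
    {η ε₁ ε₂ : ℝ} {φ : Finset α → ℤ} {l : ℤ} {b P R : Finset α} (hη : 0 < η)
    (hjη : (2 ^ (j + 1) + 1) * (2 * η) < 1) (hφ : ∀ W, |φ W| ≤ 1) (hbP : Disjoint b P)
    (hP : #P = 2 * s) (hjs : j < s) (hws : w + 1 ≤ s) (hsb : s ≤ #b)
    (hsη : (w + 1) * s ≤ η * #b)
    (hvanish : ∀ V ∈ b.powersetCard s, relabelProb φ (fun ψ ↦
      edgeWeight (w + 1 + (j + 1)) ψ (b ∪ R) = l ∧ ¬ SwapVanishing (j + 2) w (P ∪ V) ψ) ≤ η * ε₁)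
    (hconst : relabelProb φ (fun ψ ↦ edgeWeight (w + 1 + (j + 1)) ψ (b ∪ R) = l ∧
      ∃ A ∈ P.powersetCard s, edgeWeight (w + 1 + (j + 1)) ψ (b ∪ A) ≠ l) ≤ ε₂) :
    relabelProb φ (fun ψ ↦ edgeWeight (w + 1 + (j + 1)) ψ (b ∪ R) = l ∧
      ¬ SwapVanishing (j + 1) (w + 1) P ψ) ≤ ε₁ + ε₂ := by
  have hmarkov := mul_relabelProb_le_of_forall_le (φ := φ) (I := b.powersetCard s) (η := η)
    (A := fun ψ ↦ edgeWeight (w + 1 + (j + 1)) ψ (b ∪ R) = l)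
    (B := fun V ψ ↦ ¬ SwapVanishing (j + 2) w (P ∪ V) ψ) (powersetCard_nonempty.2 hsb) hvanish
  refine (relabelProb_le_add fun σ hσ ↦ ?_).trans
    (add_le_add (le_of_mul_le_mul_left hmarkov hη) hconst)
  by_contra! h
  have hbad := (h.1 hσ.1).le
  rw [card_powersetCard] at hbad
  exact hσ.2 (swapVanishing_of_edgeWeight_eq hη.le hjη (fun W ↦ hφ _) hbP hP hjs hws hsb hsη
    (h.2 hσ.1) hbad)

theorem exists_relabelProb_not_swapVanishing_le (j w : ℕ) {ε : ℝ} (hε : 0 < ε) :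
    ∃ θ : ℝ, 0 < θ ∧ ∀ {α : Type u} [Fintype α] [DecidableEq α] {k s : ℕ} {φ : Finset α → ℤ}
      {l : ℤ} {b P R : Finset α}, 2 * k ≤ Fintype.card α → (∀ W, |φ W| ≤ 1) → w + j < s →
      Disjoint b P → R ∈ P.powersetCard s → #P = 2 * s → #b + s = k → s ≤ θ * k →
      relabelProb φ (fun ψ ↦ edgeWeight (w + (j + 1)) ψ (b ∪ R) = l ∧
        ¬ SwapVanishing (j + 1) w P ψ) ≤ ε := by
  induction w generalizing j ε with
  | zero =>
    obtain ⟨θ, hθ, hconst⟩ := exists_relabelProb_nonconstant_le.{u} (0 + (j + 1)) hε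
    refine ⟨θ, hθ, fun {α} _ _ {k s φ l b P R} hk _ hjs hbP hR hP hb hsθ ↦ ?_⟩
    refine (relabelProb_mono ?_).trans (hconst φ l hk hbP hR hP hb hsθ)
    refine fun σ hσ ↦ ⟨hσ.1, ?_⟩
    by_contra! h
    rw [Nat.zero_add] at h hjs
    exact hσ.2 (swapVanishing_zero_of_edgeWeight_eq hbP hP hjs h)
  | succ w ih =>
    set η : ℝ := 1 / (4 * (2 ^ (j + 1) + 1)) with hη
    have hη₀ : 0 < η := by positivity
    obtain ⟨θ₁, hθ₁, hvanish⟩ := ih (j + 1) (ε := η * (ε / 2)) (by positivity)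
    obtain ⟨θ₂, hθ₂, hconst⟩ :=
      exists_relabelProb_nonconstant_le.{u} (w + 1 + (j + 1)) (half_pos hε)
    refine ⟨min (min (θ₁ / 2) θ₂) (min (1 / 4) (η / (2 * (w + 1)))), by positivity,
      fun {α} _ _ {k s φ l b P R} hk hφ hs hbP hR hP hb hsθ ↦ ?_⟩
    simp only [min_mul_of_nonneg _ _ (Nat.cast_nonneg (α := ℝ) k), le_min_iff] at hsθ
    obtain ⟨⟨hsθ₁, hsθ₂⟩, hsk, hsη⟩ := hsθ
    have hsk' : 4 * s ≤ k := by
      have : (4 : ℝ) * s ≤ k := by linarith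
      exact_mod_cast this
    have hsb : (w + 1) * s ≤ η * #b := by
      have hkb : (k : ℝ) ≤ 2 * #b := by exact_mod_cast (by omega : k ≤ 2 * #b)
      calc ((w + 1) * s : ℝ) ≤ (w + 1) * (η / (2 * (w + 1)) * k) := by gcongr
        _ = η * (k / 2) := by field_simp
        _ ≤ η * #b := by gcongr; linarith
    refine (relabelProb_not_swapVanishing_succ_le hη₀ ?_ hφ hbP hP (by omega) (by omega) (by omega)
      hsb (fun V hV ↦ relabelProb_not_swapVanishing_le (θ := θ₁) ?_ hk hbP hR hP hb hsk' hsθ₁ hV)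
      (hconst φ l hk hbP hR hP hb hsθ₂)).trans_eq (add_halves ε)
    · rw [hη]
      field_simp
      norm_num
    · intro b P R hbP hR hP hb hsθ
      have := hvanish (l := l) hk hφ (by omega) hbP hR hP hb hsθ
      rwa [show w + (j + 1 + 1) = w + 1 + (j + 1) by ring] at this

theorem exists_relabelProb_not_homogeneous_le {r : ℕ} (hr : r ≠ 0) {ε : ℝ} (hε : 0 < ε) :
    ∃ θ : ℝ, 0 < θ ∧ ∀ {α : Type u} [Fintype α] [DecidableEq α] {k s : ℕ} {φ : Finset α → ℤ}
      {l : ℤ} {U R : Finset α}, 2 * k ≤ Fintype.card α → (∀ W, φ W = 0 ∨ φ W = 1) → r ≤ s →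
      #U = k → R ∈ U.powersetCard s → s ≤ θ * k →
      relabelProb φ (fun ψ ↦ edgeWeight r ψ U = l ∧ edgeWeight r ψ R ≠ 0 ∧
        edgeWeight r ψ R ≠ s.choose r) ≤ ε := by
  obtain ⟨w, rfl⟩ := Nat.exists_eq_add_one_of_ne_zero hr
  obtain ⟨θ, hθ, hvanish⟩ := exists_relabelProb_not_swapVanishing_le.{u} 0 w hε
  refine ⟨θ, hθ, fun {α} _ _ {k s φ l U R} hk hφ hs hU hR hsθ ↦ ?_⟩
  rw [mem_powersetCard] at hR
  obtain ⟨N, hN, hNs⟩ : ∃ N ⊆ Uᶜ, #N = s := by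
    refine exists_subset_card_eq ?_
    have := card_le_card hR.1
    rw [card_compl]
    omega
  have hUN : Disjoint U N := disjoint_right.2 fun x hx ↦ mem_compl.1 (hN hx)
  have hRN : Disjoint R N := disjoint_of_subset_left hR.1 hUN
  have hbound := hvanish (φ := φ) (l := l) (b := U \ R) (P := R ∪ N) (R := R) hk
    (fun W ↦ by rcases hφ W with h | h <;> simp [h]) hs
    (disjoint_union_right.2 ⟨sdiff_disjoint, disjoint_of_subset_left sdiff_subset hUN⟩)
    (mem_powersetCard.2 ⟨subset_union_left, hR.2⟩)
    (by rw [card_union_of_disjoint hRN]; omega)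
    (by rw [card_sdiff_of_subset hR.1]; have := card_le_card hR.1; omega) hsθ
  rw [sdiff_union_of_subset hR.1] at hbound
  refine hbound.trans' (relabelProb_mono fun σ hσ ↦ ⟨hσ.1, fun hv ↦ ?_⟩)
  obtain ⟨W₀, hW₀⟩ := powersetCard_nonempty.2 (show w + 1 ≤ #R by omega)
  have hconst : ∀ W ∈ R.powersetCard (w + 1), relabel σ φ W = relabel σ φ W₀ := fun W hW ↦ by
    rw [mem_powersetCard] at hW hW₀
    exact hv.apply_eq (hW.1.trans subset_union_left) (hW₀.1.trans subset_union_left) hW.2 hW₀.2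
  have hweight : edgeWeight (w + 1) (relabel σ φ) R = s.choose (w + 1) * relabel σ φ W₀ := by
    rw [edgeWeight, sum_congr rfl hconst, sum_const, card_powersetCard, hR.2, nsmul_eq_mul]
  rcases hφ (W₀.map σ.toEmbedding) with h | h
  · exact hσ.2.1 (by rw [hweight, relabel, h, mul_zero])
  · exact hσ.2.2 (by rw [hweight, relabel, h, mul_one])

end Homogeneity

/-! ### The second moment method -/

section Choose

lemma choose_mul_choose_succ_le {x y : ℕ} (d : ℕ) (h : x ≤ y) :
    x.choose d * (y + 1).choose d ≤ (x + 1).choose d * y.choose d := by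
  rcases lt_or_ge x d with hx | hx
  · simp [Nat.choose_eq_zero_of_lt hx]
  obtain ⟨a, rfl⟩ := Nat.exists_eq_add_of_le hx
  obtain ⟨c, rfl⟩ := Nat.exists_eq_add_of_le h
  have hxsucc := Nat.choose_mul_succ_eq (d + a) d
  have hysucc := Nat.choose_mul_succ_eq (d + a + c) d
  rw [show d + a + 1 - d = a + 1 by omega] at hxsucc
  rw [show d + a + c + 1 - d = a + c + 1 by omega] at hysucc
  refine le_of_mul_le_mul_left ?_ (show 0 < (a + 1) * (a + c + 1) by positivity)
  calc (a + 1) * (a + c + 1) * ((d + a).choose d * (d + a + c + 1).choose d)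
      = (d + a).choose d * (d + a + c).choose d * ((a + 1) * (d + a + c + 1)) := by
        linear_combination (a + 1) * (d + a).choose d * hysucc.symm
    _ ≤ (d + a).choose d * (d + a + c).choose d * ((a + c + 1) * (d + a + 1)) := by
        refine Nat.mul_le_mul_left _ ?_
        nlinarith [Nat.zero_le (d * c)]
    _ = (a + 1) * (a + c + 1) * ((d + a + 1).choose d * (d + a + c).choose d) := by
        linear_combination (a + c + 1) * (d + a + c).choose d * hxsucc

lemma choose_mul_choose_add_le {x y : ℕ} (d t : ℕ) (h : x ≤ y) :
    x.choose d * (y + t).choose d ≤ (x + t).choose d * y.choose d := by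
  induction t with
  | zero => rfl
  | succ t ih =>
    rcases Nat.eq_zero_or_pos ((y + t).choose d) with h₀ | h₀
    · rw [Nat.choose_eq_zero_of_lt (n := x) (by rw [Nat.choose_eq_zero_iff] at h₀; omega),
        zero_mul]
      exact Nat.zero_le _
    have hstep := choose_mul_choose_succ_le (x := x + t) (y := y + t) d (by omega)
    refine le_of_mul_le_mul_left ?_ h₀
    calc (y + t).choose d * (x.choose d * (y + (t + 1)).choose d)
        = (x.choose d * (y + t).choose d) * (y + t + 1).choose d := by rw [← add_assoc]; ring
      _ ≤ ((x + t).choose d * y.choose d) * (y + t + 1).choose d := by gcongr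
      _ = ((x + t).choose d * (y + t + 1).choose d) * y.choose d := by ring
      _ ≤ ((x + t + 1).choose d * (y + t).choose d) * y.choose d := by gcongr
      _ = (y + t).choose d * ((x + (t + 1)).choose d * y.choose d) := by rw [← add_assoc]; ring

/- In a random `s`-subset of a `k`-set, the events of containing two given disjoint `r`-subsets are
negatively correlated. -/
lemma choose_sub_two_mul_mul_choose_le {k s r : ℕ} (hrs : 2 * r ≤ s) (hsk : s ≤ k) :
    (k - 2 * r).choose (s - 2 * r) * k.choose s ≤ (k - r).choose (s - r) ^ 2 := by
  have h := choose_mul_choose_add_le (x := k - 2 * r) (y := k - r) (k - s) r (by omega)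
  rw [show k - 2 * r + r = k - r by omega, show k - r + r = k by omega] at h
  rwa [sq, ← Nat.choose_symm hsk, ← Nat.choose_symm (show s - r ≤ k - r by omega),
    ← Nat.choose_symm (show s - 2 * r ≤ k - 2 * r by omega),
    show k - 2 * r - (s - 2 * r) = k - s by omega, show k - r - (s - r) = k - s by omega]

lemma pow_mul_choose_le_choose {k s r : ℕ} {θ : ℝ} (hθ : 0 ≤ θ) (hs : θ * k ≤ s + 1)
    (hk : 2 * r ≤ θ * k) (hrs : r ≤ s) : (θ / 2) ^ r * k.choose r ≤ s.choose r := by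
  have hlower : ((s + 1 - r : ℕ) : ℝ) ^ r ≤ r.factorial * s.choose r := by
    exact_mod_cast Nat.descFactorial_eq_factorial_mul_choose s r ▸ Nat.pow_sub_le_descFactorial s r
  have hupper : r.factorial * k.choose r ≤ (k : ℝ) ^ r := by
    exact_mod_cast Nat.descFactorial_eq_factorial_mul_choose k r ▸ Nat.descFactorial_le_pow k r
  have hhalf : θ / 2 * k ≤ ((s + 1 - r : ℕ) : ℝ) := by
    rw [Nat.cast_sub (by omega)]
    push_cast
    linarith
  refine le_of_mul_le_mul_left ?_ (show (0 : ℝ) < r.factorial by positivity)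
  calc r.factorial * ((θ / 2) ^ r * k.choose r) = (θ / 2) ^ r * (r.factorial * k.choose r) := by
        ring
    _ ≤ (θ / 2) ^ r * k ^ r := by gcongr
    _ = (θ / 2 * k) ^ r := by rw [mul_pow]
    _ ≤ ((s + 1 - r : ℕ) : ℝ) ^ r := by gcongr
    _ ≤ r.factorial * s.choose r := hlower

lemma pow_mul_choose_le_choose_sub {k s r : ℕ} {θ : ℝ} (hθ : 0 ≤ θ) (hs : θ * k ≤ s + 1)
    (hk : 2 * r ≤ θ * k) (hrs : r ≤ s) (hsk : s ≤ k) :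
    (θ / 2) ^ r * k.choose s ≤ (k - r).choose (s - r) := by
  have hmul : (k.choose s : ℝ) * s.choose r = k.choose r * (k - r).choose (s - r) := by
    exact_mod_cast Nat.choose_mul hrs
  have hpos : (0 : ℝ) < k.choose r := by exact_mod_cast Nat.choose_pos (hrs.trans hsk)
  refine le_of_mul_le_mul_left ?_ hpos
  rw [← hmul]
  calc k.choose r * ((θ / 2) ^ r * k.choose s)
      = k.choose s * ((θ / 2) ^ r * k.choose r) := by ring
    _ ≤ k.choose s * s.choose r := by gcongr; exact pow_mul_choose_le_choose hθ hs hk hrs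

end Choose

section SecondMoment

variable {α : Type*} [DecidableEq α] {E : Finset (Finset α)} {U : Finset α} {r s D : ℕ}

lemma card_filter_edge_subset (hE : E ⊆ U.powersetCard r) (hrs : r ≤ s) {e : Finset α}
    (he : e ∈ E) : #{R ∈ U.powersetCard s | e ⊆ R} = (#U - r).choose (s - r) := by
  obtain ⟨heU, her⟩ := mem_powersetCard.1 (hE he)
  rw [card_filter_superset_powersetCard heU (her.trans_le hrs), her]

lemma sum_card_filter_subset (hE : E ⊆ U.powersetCard r) (hrs : r ≤ s) :
    ∑ R ∈ U.powersetCard s, #{e ∈ E | e ⊆ R} = #E * (#U - r).choose (s - r) := by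
  calc ∑ R ∈ U.powersetCard s, #{e ∈ E | e ⊆ R}
      = ∑ e ∈ E, #{R ∈ U.powersetCard s | e ⊆ R} :=
        (sum_card_bipartiteAbove_eq_sum_card_bipartiteBelow fun (e R : Finset α) ↦ e ⊆ R).symm
    _ = #E * (#U - r).choose (s - r) := by
        rw [sum_congr rfl fun e he ↦ card_filter_edge_subset hE hrs he, sum_const, smul_eq_mul]

lemma card_filter_union_subset_le (hE : E ⊆ U.powersetCard r) (hrs : 2 * r ≤ s) {e e' : Finset α}
    (he : e ∈ E) (he' : e' ∈ E) :
    #{R ∈ U.powersetCard s | e ∪ e' ⊆ R} ≤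
      (#U - 2 * r).choose (s - 2 * r) + #(e ∩ e') * (#U - r).choose (s - r) := by
  by_cases hdisj : Disjoint e e'
  · obtain ⟨heU, her⟩ := mem_powersetCard.1 (hE he)
    obtain ⟨heU', her'⟩ := mem_powersetCard.1 (hE he')
    have hcard : #(e ∪ e') = 2 * r := by rw [card_union_of_disjoint hdisj]; omega
    rw [card_filter_superset_powersetCard (union_subset heU heU') (by omega), hcard]
    exact Nat.le_add_right _ _
  · calc #{R ∈ U.powersetCard s | e ∪ e' ⊆ R} ≤ #{R ∈ U.powersetCard s | e ⊆ R} :=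
          card_le_card (monotone_filter_right _ fun _ _ h ↦ subset_union_left.trans h)
      _ = 1 * (#U - r).choose (s - r) := by
          rw [card_filter_edge_subset hE (by omega) he, one_mul]
      _ ≤ #(e ∩ e') * (#U - r).choose (s - r) := by
          gcongr
          exact card_pos.2 (not_disjoint_iff_nonempty_inter.1 hdisj)
      _ ≤ _ := Nat.le_add_left _ _

lemma sum_sq_card_filter_subset_le (hE : E ⊆ U.powersetCard r) (hrs : 2 * r ≤ s)
    (hdeg : ∀ v ∈ U, #{e ∈ E | v ∈ e} ≤ D) :
    ∑ R ∈ U.powersetCard s, #{e ∈ E | e ⊆ R} ^ 2 ≤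
      #E ^ 2 * (#U - 2 * r).choose (s - 2 * r) + #E * (r * D) * (#U - r).choose (s - r) := by
  have hsq (R : Finset α) : #{e ∈ E | e ⊆ R} ^ 2 = #{z ∈ E ×ˢ E | z.1 ∪ z.2 ⊆ R} := by
    rw [sq, ← card_product, ← filter_product]
    simp only [union_subset_iff]
  have hinter : ∀ e ∈ E, ∑ e' ∈ E, #(e ∩ e') ≤ r * D := by
    intro e he
    obtain ⟨heU, her⟩ := mem_powersetCard.1 (hE he)
    rw [← her]
    exact sum_card_inter_le fun v hv ↦ hdeg v (heU hv)
  simp only [hsq]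
  calc ∑ R ∈ U.powersetCard s, #{z ∈ E ×ˢ E | z.1 ∪ z.2 ⊆ R}
      = ∑ z ∈ E ×ˢ E, #{R ∈ U.powersetCard s | z.1 ∪ z.2 ⊆ R} :=
        (sum_card_bipartiteAbove_eq_sum_card_bipartiteBelow
          fun (z : Finset α × Finset α) R ↦ z.1 ∪ z.2 ⊆ R).symm
    _ ≤ ∑ e ∈ E, ∑ e' ∈ E,
          ((#U - 2 * r).choose (s - 2 * r) + #(e ∩ e') * (#U - r).choose (s - r)) := by
        rw [sum_product]
        gcongr with _ he _ he'
        exact card_filter_union_subset_le hE hrs he he'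
    _ ≤ ∑ _e ∈ E,
          (#E * (#U - 2 * r).choose (s - 2 * r) + r * D * (#U - r).choose (s - r)) := by
        gcongr with _ he
        rw [sum_add_distrib, sum_const, smul_eq_mul, ← sum_mul]
        gcongr
        exact hinter _ he
    _ = _ := by
        rw [sum_const, smul_eq_mul]
        ring

lemma four_mul_choose_le_card_filter_ne_zero (hE : E ⊆ U.powersetCard r) (hE₀ : E.Nonempty)
    (hrs : 2 * r ≤ s) (hsU : s ≤ #U) (hdeg : ∀ v ∈ U, #{e ∈ E | v ∈ e} ≤ D)
    (hD : 4 * (r * D) * (#U).choose s ≤ #E * (#U - r).choose (s - r)) :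
    4 * (#U).choose s ≤ 5 * #{R ∈ U.powersetCard s | #{e ∈ E | e ⊆ R} ≠ 0} := by
  set p := #{R ∈ U.powersetCard s | #{e ∈ E | e ⊆ R} ≠ 0}
  set T := (#U).choose s
  set C₁ := (#U - r).choose (s - r)
  set C₂ := (#U - 2 * r).choose (s - 2 * r)
  have hcauchy : (#E * C₁) ^ 2 ≤ p * (#E ^ 2 * C₂ + #E * (r * D) * C₁) := by
    rw [← sum_card_filter_subset hE (by omega), ← sum_filter_ne_zero]
    refine sq_sum_le_card_mul_sum_sq.trans (Nat.mul_le_mul_left _ ?_)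
    exact (sum_le_sum_of_subset (filter_subset _ _)).trans
      (sum_sq_card_filter_subset_le hE hrs hdeg)
  have hC₂ : C₂ * T ≤ C₁ ^ 2 := choose_sub_two_mul_mul_choose_le hrs hsU
  have hpos : 0 < (#E * C₁) ^ 2 :=
    pow_pos (Nat.mul_pos hE₀.card_pos (Nat.choose_pos (by omega))) 2
  refine le_of_mul_le_mul_left ?_ hpos
  calc (#E * C₁) ^ 2 * (4 * T) ≤ p * (#E ^ 2 * C₂ + #E * (r * D) * C₁) * (4 * T) := by gcongr
    _ = p * (4 * #E ^ 2 * (C₂ * T) + #E * C₁ * (4 * (r * D) * T)) := by ring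
    _ ≤ p * (4 * #E ^ 2 * C₁ ^ 2 + #E * C₁ * (#E * C₁)) := by gcongr
    _ = (#E * C₁) ^ 2 * (5 * p) := by ring

lemma two_mul_card_filter_eq_choose_le (hE : E ⊆ U.powersetCard r) (hrs : r ≤ s)
    (hE₂ : 2 * #E ≤ (#U).choose r) :
    2 * #{R ∈ U.powersetCard s | #{e ∈ E | e ⊆ R} = s.choose r} ≤ (#U).choose s := by
  set q := #{R ∈ U.powersetCard s | #{e ∈ E | e ⊆ R} = s.choose r}
  have hq : q * s.choose r ≤ #E * (#U - r).choose (s - r) := by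
    rw [← sum_card_filter_subset hE hrs, ← smul_eq_mul, ← sum_const]
    refine (sum_congr rfl fun R hR ↦ (mem_filter.1 hR).2.symm).trans_le ?_
    exact sum_le_sum_of_subset (filter_subset _ _)
  refine le_of_mul_le_mul_right ?_ (Nat.choose_pos hrs)
  calc 2 * q * s.choose r ≤ 2 * #E * (#U - r).choose (s - r) := by
        rw [mul_assoc, mul_assoc]
        gcongr
    _ ≤ (#U).choose r * (#U - r).choose (s - r) := by gcongr
    _ = (#U).choose s * s.choose r := (Nat.choose_mul hrs).symm

lemma choose_le_four_mul_card_filter_mixed (hE : E ⊆ U.powersetCard r) (hE₀ : E.Nonempty)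
    (hE₂ : 2 * #E ≤ (#U).choose r) (hrs : 2 * r ≤ s) (hsU : s ≤ #U)
    (hdeg : ∀ v ∈ U, #{e ∈ E | v ∈ e} ≤ D)
    (hD : 4 * (r * D) * (#U).choose s ≤ #E * (#U - r).choose (s - r)) :
    (#U).choose s ≤ 4 * #{R ∈ U.powersetCard s |
      #{e ∈ E | e ⊆ R} ≠ 0 ∧ #{e ∈ E | e ⊆ R} ≠ s.choose r} := by
  have hpos := four_mul_choose_le_card_filter_ne_zero hE hE₀ hrs hsU hdeg hD
  have hfull := two_mul_card_filter_eq_choose_le hE (show r ≤ s by omega) hE₂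
  have hsplit : #{R ∈ U.powersetCard s | #{e ∈ E | e ⊆ R} ≠ 0} ≤
      #{R ∈ U.powersetCard s | #{e ∈ E | e ⊆ R} ≠ 0 ∧ #{e ∈ E | e ⊆ R} ≠ s.choose r} +
        #{R ∈ U.powersetCard s | #{e ∈ E | e ⊆ R} = s.choose r} := by
    refine le_trans (card_le_card fun R hR ↦ ?_) (card_union_le _ _)
    simp only [mem_filter, mem_union] at hR ⊢
    tauto
  omega

end SecondMoment

/-! ### Vertices carrying a positive proportion of the edges -/

section WeightedDegree

variable {α M : Type*} [DecidableEq α]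

/-- The total weight of the `r`-subsets of `X` containing `v`. When `ψ` is the indicator of the
edge set of an `r`-uniform hypergraph, this is the degree of `v` in the subhypergraph induced
by `X`. -/
def weightedDegree [AddCommMonoid M] (r : ℕ) (ψ : Finset α → M) (v : α) (X : Finset α) : M :=
  ∑ W ∈ X.powersetCard r with v ∈ W, ψ W

lemma weightedDegree_add_edgeWeight_erase [AddCommMonoid M] (r : ℕ) (ψ : Finset α → M) (v : α)
    (X : Finset α) :
    weightedDegree r ψ v X + edgeWeight r ψ (X.erase v) = edgeWeight r ψ X := by
  have herase : (X.erase v).powersetCard r = {W ∈ X.powersetCard r | v ∉ W} := by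
    ext W
    simp only [mem_powersetCard, mem_filter, subset_erase]
    tauto
  rw [weightedDegree, edgeWeight, herase, sum_filter_add_sum_filter_not, edgeWeight]

lemma sum_weightedDegree [AddCommMonoid M] (r : ℕ) (ψ : Finset α → M) (X : Finset α) :
    ∑ v ∈ X, weightedDegree r ψ v X = r • edgeWeight r ψ X := by
  simp only [weightedDegree, sum_filter, edgeWeight, smul_sum]
  rw [sum_comm]
  refine sum_congr rfl fun W hW ↦ ?_
  rw [mem_powersetCard] at hW
  rw [← sum_filter, sum_const, filter_mem_eq_inter, inter_eq_right.2 hW.1, hW.2]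

lemma weightedDegree_relabel [AddCommMonoid M] (r : ℕ) (ψ : Finset α → M) (τ : Equiv.Perm α)
    (v : α) (X : Finset α) :
    weightedDegree r (relabel τ ψ) v X = weightedDegree r ψ (τ v) (X.map τ.toEmbedding) := by
  simp only [weightedDegree, powersetCard_map, sum_filter, sum_map, relabel]
  simp

section Order

variable [AddCommMonoid M] [PartialOrder M] [IsOrderedAddMonoid M] {r : ℕ} {ψ : Finset α → M}

lemma weightedDegree_nonneg (hψ : ∀ W, 0 ≤ ψ W) (v : α) (X : Finset α) :
    0 ≤ weightedDegree r ψ v X :=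
  sum_nonneg fun W _ ↦ hψ W

lemma weightedDegree_mono (hψ : ∀ W, 0 ≤ ψ W) (v : α) {X Y : Finset α} (h : X ⊆ Y) :
    weightedDegree r ψ v X ≤ weightedDegree r ψ v Y :=
  sum_le_sum_of_subset_of_nonneg (filter_subset_filter _ (powersetCard_mono h)) fun W _ _ ↦ hψ W

lemma edgeWeight_le_sum_weightedDegree_add (hψ : ∀ W, 0 ≤ ψ W) (X D : Finset α) :
    edgeWeight r ψ X ≤ ∑ v ∈ D, weightedDegree r ψ v X + edgeWeight r ψ (X \ D) := by
  induction D using Finset.induction_on with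
  | empty => simp
  | insert a D ha ih =>
    refine ih.trans ?_
    rw [sum_insert ha, sdiff_insert, ← weightedDegree_add_edgeWeight_erase r ψ a (X \ D),
      ← add_assoc, add_comm (∑ v ∈ D, _)]
    gcongr
    exact weightedDegree_mono hψ a sdiff_subset

end Order

end WeightedDegree

section HeavyVertex

variable {α : Type*} [DecidableEq α] {r s l D : ℕ} {ψ : Finset α → ℤ} {U : Finset α}

lemma sum_eq_card_of_forall_eq_zero_or_one {ι : Type*} {I : Finset ι} {f : ι → ℤ}
    (hf : ∀ i, f i = 0 ∨ f i = 1) : ∑ i ∈ I, f i = #{i ∈ I | f i = 1} := by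
  rw [card_filter, Nat.cast_sum]
  refine sum_congr rfl fun i _ ↦ ?_
  rcases hf i with h | h <;> simp [h]

lemma edgeWeight_eq_card_filter_subset (hψ : ∀ W, ψ W = 0 ∨ ψ W = 1) {R : Finset α} (hR : R ⊆ U) :
    edgeWeight r ψ R = #{e ∈ {W ∈ U.powersetCard r | ψ W = 1} | e ⊆ R} := by
  rw [edgeWeight, sum_eq_card_of_forall_eq_zero_or_one hψ]
  congr 2
  ext W
  simp only [mem_filter, mem_powersetCard]
  exact ⟨fun h ↦ ⟨⟨⟨h.1.1.trans hR, h.1.2⟩, h.2⟩, h.1.1⟩, fun h ↦ ⟨⟨h.2, h.1.1.2⟩, h.1.2⟩⟩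

lemma choose_le_four_mul_card_filter_not_homogeneous (hψ : ∀ W, ψ W = 0 ∨ ψ W = 1) (hl : 0 < l)
    (hl₂ : 2 * l ≤ (#U).choose r) (hU : edgeWeight r ψ U = l) (hrs : 2 * r ≤ s) (hsU : s ≤ #U)
    (hdeg : ∀ v ∈ U, weightedDegree r ψ v U ≤ D)
    (hD : 4 * (r * D) * (#U).choose s ≤ l * (#U - r).choose (s - r)) :
    (#U).choose s ≤ 4 * #{R ∈ U.powersetCard s |
      edgeWeight r ψ R ≠ 0 ∧ edgeWeight r ψ R ≠ s.choose r} := by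
  set E := {W ∈ U.powersetCard r | ψ W = 1} with hE
  have hEl : #E = l := by
    rw [edgeWeight, sum_eq_card_of_forall_eq_zero_or_one hψ] at hU
    exact_mod_cast hU
  have hEdeg : ∀ v ∈ U, #{e ∈ E | v ∈ e} ≤ D := fun v hv ↦ by
    have := hdeg v hv
    rw [weightedDegree, sum_eq_card_of_forall_eq_zero_or_one hψ, filter_comm] at this
    exact_mod_cast this
  have hmixed := choose_le_four_mul_card_filter_mixed (filter_subset _ _)
    (card_pos.1 (hl.trans_eq hEl.symm)) (by rwa [hEl]) hrs hsU hEdeg (by rwa [hEl])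
  refine hmixed.trans_eq ?_
  congr 2
  refine filter_congr fun R hR ↦ ?_
  rw [edgeWeight_eq_card_filter_subset hψ (mem_powersetCard.1 hR).1]
  norm_cast

lemma four_mul_mul_floor_mul_le {r l m n : ℕ} {c : ℝ} (hc : 0 ≤ c) (h : c * m ≤ n) :
    4 * (r * ⌊c / (4 * r) * l⌋₊) * m ≤ l * n := by
  rcases r.eq_zero_or_pos with rfl | hr
  · simp
  have hfloor := Nat.floor_le (show 0 ≤ c / (4 * r) * l by positivity)
  rify
  calc 4 * (r * (⌊c / (4 * r) * l⌋₊ : ℝ)) * m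
      ≤ 4 * (r * (c / (4 * r) * l)) * m := by gcongr
    _ = l * (c * m) := by field_simp
    _ ≤ l * n := by gcongr

theorem exists_relabelProb_weightedDegree_lt_le {r : ℕ} (hr : r ≠ 0) {ε : ℝ} (hε : 0 < ε) :
    ∃ β : ℝ, 0 < β ∧ ∃ K : ℕ, ∀ {α : Type u} [Fintype α] [DecidableEq α] {k l : ℕ}
      {φ : Finset α → ℤ} {U : Finset α}, K ≤ k → 2 * k ≤ Fintype.card α →
      (∀ W, φ W = 0 ∨ φ W = 1) → 0 < l → 2 * l ≤ k.choose r → #U = k →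
      relabelProb φ (fun ψ ↦ edgeWeight r ψ U = l ∧
        ∀ v ∈ U, ((weightedDegree r ψ v U : ℤ) : ℝ) < β * l) ≤ ε := by
  obtain ⟨θ', hθ', hhom⟩ := exists_relabelProb_not_homogeneous_le.{u} hr (ε := 1 / 4 * ε)
    (by positivity)
  set θ := min θ' 1
  have hθ : 0 < θ := lt_min hθ' one_pos
  refine ⟨(θ / 2) ^ r / (4 * r), by positivity, ⌈(2 * r + 1) / θ⌉₊,
    fun {α} _ _ {k l φ U} hk hkα hφ hl hl₂ hU ↦ ?_⟩
  have hkθ : 2 * r + 1 ≤ θ * k := by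
    rw [Nat.ceil_le, div_le_iff₀ hθ] at hk
    linarith
  set s := ⌊θ * k⌋₊
  have hsθ : (s : ℝ) ≤ θ * k := Nat.floor_le (by positivity)
  have hθs : θ * k ≤ s + 1 := (Nat.lt_floor_add_one _).le
  have hrs : 2 * r ≤ s := by
    have : (2 * r : ℝ) ≤ s := by linarith
    exact_mod_cast this
  have hsk : s ≤ k := by
    exact_mod_cast hsθ.trans (mul_le_of_le_one_left (Nat.cast_nonneg k) (min_le_right θ' 1))
  have hmarkov := mul_relabelProb_le_of_forall_le (φ := φ) (I := U.powersetCard s) (η := 1 / 4)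
    (A := fun ψ ↦ edgeWeight r ψ U = l)
    (B := fun R ψ ↦ edgeWeight r ψ R ≠ 0 ∧ edgeWeight r ψ R ≠ s.choose r)
    (powersetCard_nonempty.2 (hsk.trans_eq hU.symm)) fun R hR ↦ hhom hkα hφ (by omega) hU hR
      (hsθ.trans (by gcongr; exact min_le_left _ _))
  refine le_trans (relabelProb_mono fun σ hσ ↦ ⟨hσ.1, ?_⟩)
    (le_of_mul_le_mul_left hmarkov (by norm_num))
  have hdeg : ∀ v ∈ U, weightedDegree r (relabel σ φ) v U ≤ ⌊(θ / 2) ^ r / (4 * r) * l⌋₊ := by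
    intro v hv
    rw [Int.natCast_floor_eq_floor (by positivity), Int.le_floor]
    exact (hσ.2 v hv).le
  have hD : 4 * (r * ⌊(θ / 2) ^ r / (4 * r) * l⌋₊) * k.choose s ≤
      l * (k - r).choose (s - r) :=
    four_mul_mul_floor_mul_le (by positivity)
      (pow_mul_choose_le_choose_sub hθ.le hθs (by linarith) (by omega) hsk)
  have hcount := choose_le_four_mul_card_filter_not_homogeneous (fun W ↦ hφ _) hl (hU ▸ hl₂) hσ.1
    hrs (hU ▸ hsk) hdeg (hU ▸ hD)
  rw [card_powersetCard]
  have : ((#U).choose s : ℝ) ≤ 4 * #{R ∈ U.powersetCard s |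
      edgeWeight r (relabel σ φ) R ≠ 0 ∧ edgeWeight r (relabel σ φ) R ≠ s.choose r} := by
    exact_mod_cast hcount
  linarith

end HeavyVertex

/-! ### Boundedly many heavy vertices -/

section Choose

lemma choose_add_mul_choose_le (m M s : ℕ) :
    m.choose (s + 1) + M * m.choose s ≤ (m + M).choose (s + 1) := by
  induction M with
  | zero => simp
  | succ M ih =>
    have hmono : m.choose s ≤ (m + M).choose s := Nat.choose_le_choose _ (Nat.le_add_right m M)
    rw [← add_assoc, Nat.choose_succ_succ' (m + M)]
    linarith

lemma two_mul_choose_le_choose_add {m M s : ℕ} (hs : s ≠ 0) (hm : m + M ≤ M * s) :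
    2 * m.choose s ≤ (m + M).choose s := by
  obtain ⟨s, rfl⟩ := Nat.exists_eq_succ_of_ne_zero hs
  have hle : m.choose (s + 1) ≤ M * m.choose s := by
    refine le_of_mul_le_mul_right ?_ s.succ_pos
    calc m.choose (s + 1) * (s + 1) = m.choose s * (m - s) := Nat.choose_succ_right_eq m s
      _ ≤ m.choose s * (M * (s + 1)) := by gcongr; lia
      _ = M * m.choose s * (s + 1) := by ring
  linarith [choose_add_mul_choose_le m M s]

lemma card_powersetCard_le_two_mul_card_filter {α : Type*} [DecidableEq α] {U H : Finset α} {s : ℕ}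
    (hHU : H ⊆ U) (hs : s ≠ 0) (hU : #U ≤ #H * s) :
    #(U.powersetCard s) ≤ 2 * #{R ∈ U.powersetCard s | ¬ Disjoint R H} := by
  have hdisj : {R ∈ U.powersetCard s | Disjoint R H} = (U \ H).powersetCard s := by
    ext R
    simp only [mem_filter, mem_powersetCard, subset_sdiff]
    tauto
  have hsplit := card_filter_add_card_filter_not (s := U.powersetCard s) (Disjoint · H)
  have hcard := card_sdiff_add_card_eq_card hHU
  have hhalf := two_mul_choose_le_choose_add hs (hcard.trans_le hU)
  rw [hdisj] at hsplit
  rw [hcard, ← card_powersetCard, ← card_powersetCard] at hhalf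
  omega

end Choose

section HeavySwap

variable {α : Type*} [DecidableEq α] {r l : ℕ} {a : ℝ} {z : Finset α} {ψ : Finset α → ℤ}

lemma card_filter_edgeWeight_erase_eq_le (hψ : ∀ W, 0 ≤ ψ W) (hl : 0 < l) (ha : 0 < a) :
    #{i ∈ z | edgeWeight r ψ (z.erase i) = l ∧ a * l ≤ ((weightedDegree r ψ i z : ℤ) : ℝ)} ≤
      r * (1 + 1 / a) := by
  set H := {i ∈ z | edgeWeight r ψ (z.erase i) = l ∧
    a * l ≤ ((weightedDegree r ψ i z : ℤ) : ℝ)}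
  set g : ℤ := edgeWeight r ψ z - l with hg
  have hdeg : ∀ i ∈ H, weightedDegree r ψ i z = g := fun i hi ↦ by
    rw [hg, ← weightedDegree_add_edgeWeight_erase r ψ i z, (mem_filter.1 hi).2.1]
    ring
  rcases H.eq_empty_or_nonempty with hH₀ | ⟨i, hi⟩
  · rw [hH₀, card_empty, Nat.cast_zero]
    positivity
  have hag : a * l ≤ g := hdeg i hi ▸ (mem_filter.1 hi).2.2
  have hg₀ : (0 : ℝ) < g := lt_of_lt_of_le (by positivity) hag
  have hsum : #H * g ≤ r * (l + g) := by
    calc #H * g = ∑ i ∈ H, weightedDegree r ψ i z := by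
          rw [sum_congr rfl hdeg, sum_const, nsmul_eq_mul]
      _ ≤ ∑ i ∈ z, weightedDegree r ψ i z :=
          sum_le_sum_of_subset_of_nonneg (filter_subset _ _) fun i _ _ ↦
            weightedDegree_nonneg hψ i z
      _ = r * (l + g) := by
          rw [sum_weightedDegree, nsmul_eq_mul, hg]
          ring
  refine le_of_mul_le_mul_right ?_ hg₀
  calc (#H : ℝ) * g ≤ r * (l + g) := by exact_mod_cast hsum
    _ ≤ r * (g / a + g) := by
        gcongr
        rwa [le_div_iff₀' ha]
    _ = r * (1 + 1 / a) * g := by ring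

/-- Exchanging `p.1` for `p.2` turns `z \ {p.2}` into `z \ {p.1}`; both sets have weight `l`
although `p.1` carries at least the proportion `a` of the weight of `z \ {p.2}`. -/
def HeavySwap (r l : ℕ) (a : ℝ) (z : Finset α) (p : α × α) (ψ : Finset α → ℤ) : Prop :=
  edgeWeight r ψ (z.erase p.2) = l ∧ edgeWeight r ψ (z.erase p.1) = l ∧
    a * l ≤ ((weightedDegree r ψ p.1 (z.erase p.2) : ℤ) : ℝ)

lemma card_filter_heavySwap_le (hψ : ∀ W, 0 ≤ ψ W) (hl : 0 < l) (ha : 0 < a) :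
    #{p ∈ z.offDiag | HeavySwap r l a z p ψ} ≤ (r * (1 + 1 / a)) ^ 2 := by
  set H := {i ∈ z | edgeWeight r ψ (z.erase i) = l ∧
    a * l ≤ ((weightedDegree r ψ i z : ℤ) : ℝ)}
  have hsub : {p ∈ z.offDiag | HeavySwap r l a z p ψ} ⊆ H ×ˢ H := by
    rintro ⟨i, j⟩ hp
    obtain ⟨hij, hwj, hwi, hheavy⟩ := mem_filter.1 hp
    obtain ⟨hi, hj, -⟩ := mem_offDiag.1 hij
    have hi_heavy : a * l ≤ ((weightedDegree r ψ i z : ℤ) : ℝ) :=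
      hheavy.trans (by exact_mod_cast weightedDegree_mono hψ i (erase_subset j z))
    have hdeg : weightedDegree r ψ j z = weightedDegree r ψ i z := by
      have hw : edgeWeight r ψ (z.erase i) = edgeWeight r ψ (z.erase j) := hwi.trans hwj.symm
      have hdi := weightedDegree_add_edgeWeight_erase r ψ i z
      have hdj := weightedDegree_add_edgeWeight_erase r ψ j z
      omega
    exact mem_product.2 ⟨mem_filter.2 ⟨hi, hwi, hi_heavy⟩,
      mem_filter.2 ⟨hj, hwj, by rwa [hdeg]⟩⟩
  calc (#{p ∈ z.offDiag | HeavySwap r l a z p ψ} : ℝ) ≤ #H ^ 2 := by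
        rw [sq, ← Nat.cast_mul, ← card_product]
        exact_mod_cast card_le_card hsub
    _ ≤ (r * (1 + 1 / a)) ^ 2 := by
        gcongr
        exact card_filter_edgeWeight_erase_eq_le hψ hl ha

lemma heavySwap_relabel {τ : Equiv.Perm α} (hz : z.map τ.toEmbedding = z) (p : α × α) :
    HeavySwap r l a z p (relabel τ ψ) ↔ HeavySwap r l a z (p.map τ τ) ψ := by
  simp only [HeavySwap, edgeWeight_relabel, weightedDegree_relabel, map_erase, hz, Prod.map,
    Equiv.coe_toEmbedding]

omit [DecidableEq α] in
lemma exists_perm_map_eq_of_mem_offDiag [Finite α] {p q : α × α} (hp : p ∈ z.offDiag)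
    (hq : q ∈ z.offDiag) :
    ∃ τ : Equiv.Perm α, p.map τ τ = q ∧ z.map τ.toEmbedding = z := by
  classical
  obtain ⟨hp₁, hp₂, hpne⟩ := mem_offDiag.1 hp
  obtain ⟨hq₁, hq₂, hqne⟩ := mem_offDiag.1 hq
  have hinsert {p : α × α} (hp₁ : p.1 ∈ z) (hp₂ : p.2 ∈ z) :
      {p.1} ∪ {p.2} ∪ z \ {p.1, p.2} = z := by
    rw [← insert_eq]
    exact union_sdiff_of_subset (insert_subset hp₁ (singleton_subset_iff.2 hp₂))
  have hcard {p : α × α} (hp₁ : p.1 ∈ z) (hp₂ : p.2 ∈ z) (hne : p.1 ≠ p.2) :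
      #(z \ {p.1, p.2}) = #z - 2 := by
    rw [card_sdiff_of_subset (insert_subset hp₁ (singleton_subset_iff.2 hp₂)), card_pair hne]
  obtain ⟨τ, hτ₁, hτ₂, hτ⟩ := exists_perm_map_eq_triple
    (A := {p.1}) (B := {p.2}) (C := z \ {p.1, p.2}) (A' := {q.1}) (B' := {q.2})
    (C' := z \ {q.1, q.2}) (by simpa using hpne) (by simp) (by simp) (by simpa using hqne)
    (by simp) (by simp) rfl rfl ((hcard hp₁ hp₂ hpne).trans (hcard hq₁ hq₂ hqne).symm)
  refine ⟨τ, Prod.ext ?_ ?_, ?_⟩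
  · simpa using hτ₁
  · simpa using hτ₂
  · rw [← hinsert hp₁ hp₂, map_union, map_union, hτ₁, hτ₂, hτ, hinsert hq₁ hq₂, hinsert hp₁ hp₂]

variable [Fintype α] {φ : Finset α → ℤ}

/- The pairs `p` in `z` are exchangeable, and only boundedly many of them are heavy swaps of any
given weight function. -/
lemma relabelProb_heavySwap_le (hφ : ∀ W, 0 ≤ φ W) (hl : 0 < l) (ha : 0 < a) {p : α × α}
    (hp : p ∈ z.offDiag) :
    #z.offDiag * relabelProb φ (HeavySwap r l a z p) ≤ (r * (1 + 1 / a)) ^ 2 := by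
  have hcongr : ∀ q ∈ z.offDiag,
      relabelProb φ (HeavySwap r l a z q) = relabelProb φ (HeavySwap r l a z p) := by
    intro q hq
    obtain ⟨τ, hτ, hz⟩ := exists_perm_map_eq_of_mem_offDiag hp hq
    exact relabelProb_congr τ fun ψ ↦ by rw [heavySwap_relabel hz, hτ]
  rw [← nsmul_eq_mul, ← sum_const, ← sum_congr rfl hcongr]
  exact sum_relabelProb_le fun σ ↦ card_filter_heavySwap_le (fun W ↦ hφ _) hl ha

lemma relabelProb_exists_heavySwap_le (hφ : ∀ W, 0 ≤ φ W) (hl : 0 < l) (ha : 0 < a)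
    {U : Finset α} {y : α} (hy : y ∉ U) :
    (#U + 1) * relabelProb φ (fun ψ ↦ ∃ i ∈ U, HeavySwap r l a (insert y U) (i, y) ψ) ≤
      (r * (1 + 1 / a)) ^ 2 := by
  rcases U.eq_empty_or_nonempty with rfl | hU
  · rw [relabelProb_eq_zero (by simp), mul_zero]
    positivity
  have hmem : ∀ i ∈ U, (i, y) ∈ (insert y U).offDiag := fun i hi ↦ mem_offDiag.2
    ⟨mem_insert_of_mem hi, mem_insert_self y U, ne_of_mem_of_not_mem hi hy⟩
  have hcard : #(insert y U).offDiag = (#U + 1) * #U := by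
    rw [offDiag_card, card_insert_of_notMem hy, ← Nat.mul_sub_one, Nat.add_sub_cancel]
  have hunion : relabelProb φ (fun ψ ↦ ∃ i ∈ U, HeavySwap r l a (insert y U) (i, y) ψ) ≤
      ∑ i ∈ U, relabelProb φ (HeavySwap r l a (insert y U) (i, y)) :=
    relabelProb_le_sum fun _ h ↦ h
  refine le_of_mul_le_mul_left ?_ (Nat.cast_pos.2 hU.card_pos)
  calc _ ≤ (#U : ℝ) * ((#U + 1) *
        ∑ i ∈ U, relabelProb φ (HeavySwap r l a (insert y U) (i, y))) := by gcongr
    _ = ∑ i ∈ U, #(insert y U).offDiag *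
          relabelProb φ (HeavySwap r l a (insert y U) (i, y)) := by
        rw [hcard, ← mul_sum]
        push_cast
        ring
    _ ≤ #U * (r * (1 + 1 / a)) ^ 2 := by
        rw [← nsmul_eq_mul]
        exact sum_le_card_nsmul _ _ _ fun i hi ↦ relabelProb_heavySwap_le hφ hl ha (hmem i hi)

end HeavySwap

section FewHeavyVertices

lemma exists_edgeWeight_sdiff_union_ne {α : Type*} [DecidableEq α] {r l s : ℕ} {a : ℝ}
    {ψ : Finset α → ℤ} {U N R : Finset α} {i y : α} (hR : R ∈ U.powersetCard s) (hi : i ∈ R)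
    (hyN : y ∈ N) (hyU : y ∉ U) (hU : edgeWeight r ψ U = l)
    (hheavy : a * l ≤ ((weightedDegree r ψ i U : ℤ) : ℝ))
    (hswap : ¬ HeavySwap r l a (insert y U) (i, y) ψ) :
    ∃ A ∈ (R ∪ N).powersetCard s, edgeWeight r ψ (U \ R ∪ A) ≠ l := by
  obtain ⟨hRU, hRs⟩ := mem_powersetCard.1 hR
  have hne : i ≠ y := fun h ↦ hyU (h ▸ hRU hi)
  have hyR : y ∉ R.erase i := fun h ↦ hyU (hRU (mem_of_mem_erase h))
  have hset : U \ R ∪ insert y (R.erase i) = (insert y U).erase i := by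
    rw [erase_insert_of_ne hne.symm, union_insert, ← sdiff_union_of_subset hRU, erase_union_distrib,
      erase_eq_of_notMem (fun h ↦ (mem_sdiff.1 h).2 hi), sdiff_union_of_subset hRU]
  refine ⟨insert y (R.erase i), mem_powersetCard.2 ⟨?_, ?_⟩, fun h ↦ hswap ?_⟩
  · exact insert_subset (mem_union_right _ hyN) ((erase_subset _ _).trans subset_union_left)
  · rw [card_insert_of_notMem hyR, card_erase_add_one hi, hRs]
  · rw [hset] at h
    simpa only [HeavySwap, erase_insert hyU] using ⟨hU, h, hheavy⟩

lemma card_powersetCard_le_two_mul_card_filter_exists_ne {α : Type*} [DecidableEq α] {r l s : ℕ}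
    {a : ℝ} {ψ : Finset α → ℤ} {U N : Finset α} {y : α} (hyN : y ∈ N) (hyU : y ∉ U) (hs : s ≠ 0)
    (hheavy : #U ≤ #{v ∈ U | a * l ≤ ((weightedDegree r ψ v U : ℤ) : ℝ)} * s)
    (hU : edgeWeight r ψ U = l)
    (hswap : ∀ i ∈ U, ¬ HeavySwap r l a (insert y U) (i, y) ψ) :
    #(U.powersetCard s) ≤ 2 * #{R ∈ U.powersetCard s |
      ∃ A ∈ (R ∪ N).powersetCard s, edgeWeight r ψ (U \ R ∪ A) ≠ l} := by
  refine (card_powersetCard_le_two_mul_card_filter (filter_subset _ U) hs hheavy).trans ?_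
  gcongr 2 * #?_
  refine monotone_filter_right _ fun R hR hRH ↦ ?_
  obtain ⟨i, hiR, hiH⟩ := not_disjoint_iff.1 hRH
  obtain ⟨hiU, hi⟩ := mem_filter.1 hiH
  exact exists_edgeWeight_sdiff_union_ne hR hiR hyN hyU hU hi (hswap i hiU)

lemma relabelProb_card_heavy_le {α : Type*} [Fintype α] [DecidableEq α] {r l s M : ℕ} {a ε : ℝ}
    {φ : Finset α → ℤ} {U N : Finset α} (hφ : ∀ W, 0 ≤ φ W) (hl : 0 < l) (ha : 0 < a) (hs : s ≠ 0)
    (hsU : s ≤ #U) (hUM : #U ≤ M * s) (hUN : Disjoint U N) (hN : N.Nonempty)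
    (hconst : ∀ R ∈ U.powersetCard s, relabelProb φ (fun ψ ↦ edgeWeight r ψ U = l ∧
      ∃ A ∈ (R ∪ N).powersetCard s, edgeWeight r ψ (U \ R ∪ A) ≠ l) ≤ 1 / 2 * ε) :
    relabelProb φ (fun ψ ↦ edgeWeight r ψ U = l ∧
      M ≤ #{v ∈ U | a * l ≤ ((weightedDegree r ψ v U : ℤ) : ℝ)}) ≤
      (r * (1 + 1 / a)) ^ 2 / (#U + 1) + ε := by
  obtain ⟨y, hyN⟩ := hN
  have hyU : y ∉ U := disjoint_right.1 hUN hyN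
  have hswap : relabelProb φ (fun ψ ↦ ∃ i ∈ U, HeavySwap r l a (insert y U) (i, y) ψ) ≤
      (r * (1 + 1 / a)) ^ 2 / (#U + 1) := by
    rw [le_div_iff₀' (by positivity)]
    exact relabelProb_exists_heavySwap_le hφ hl ha hyU
  have hmarkov := mul_relabelProb_le_of_forall_le (φ := φ) (I := U.powersetCard s) (η := 1 / 2)
    (A := fun ψ ↦ edgeWeight r ψ U = l)
    (B := fun R ψ ↦ ∃ A ∈ (R ∪ N).powersetCard s, edgeWeight r ψ (U \ R ∪ A) ≠ l)
    (powersetCard_nonempty.2 hsU) hconst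
  refine le_trans (relabelProb_le_add fun σ ⟨hwU, hM⟩ ↦
    or_iff_not_imp_left.2 fun hno ↦ ⟨hwU, ?_⟩)
    (add_le_add hswap (le_of_mul_le_mul_left hmarkov (by norm_num)))
  push Not at hno
  rw [one_div, inv_mul_le_iff₀ two_pos]
  exact_mod_cast card_powersetCard_le_two_mul_card_filter_exists_ne hyN hyU hs
    (hUM.trans (Nat.mul_le_mul_right s hM)) hwU hno

lemma le_ceil_two_div_mul_floor_mul {θ : ℝ} (hθ : 0 < θ) {k : ℕ} (hk : 1 ≤ θ * k) :
    k ≤ ⌈2 / θ⌉₊ * ⌊θ * k⌋₊ := by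
  have hfloor : (1 : ℝ) ≤ ⌊θ * k⌋₊ := by exact_mod_cast Nat.floor_pos.2 hk
  have hceil := Nat.le_ceil (2 / θ)
  rw [div_le_iff₀ hθ] at hceil
  rify
  refine le_of_mul_le_mul_left ?_ hθ
  calc θ * k ≤ 2 * ⌊θ * k⌋₊ := by linarith [Nat.lt_floor_add_one (θ * k)]
    _ ≤ ⌈2 / θ⌉₊ * θ * ⌊θ * k⌋₊ := by gcongr
    _ = θ * (⌈2 / θ⌉₊ * ⌊θ * k⌋₊) := by ring

theorem exists_relabelProb_card_heavy_le (r : ℕ) {ε : ℝ} (hε : 0 < ε) :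
    ∃ M : ℕ, ∀ {a : ℝ}, 0 < a → ∃ K : ℕ, ∀ {α : Type u} [Fintype α] [DecidableEq α] {k l : ℕ}
      {φ : Finset α → ℤ} {U : Finset α}, K ≤ k → 2 * k ≤ Fintype.card α →
      (∀ W, 0 ≤ φ W) → 0 < l → #U = k →
      relabelProb φ (fun ψ ↦ edgeWeight r ψ U = l ∧
        M ≤ #{v ∈ U | a * l ≤ ((weightedDegree r ψ v U : ℤ) : ℝ)}) ≤ ε := by
  obtain ⟨θ', hθ', hconst⟩ := exists_relabelProb_nonconstant_le.{u} r (ε := 1 / 2 * (ε / 2))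
    (by positivity)
  set θ := min θ' 1
  have hθ : 0 < θ := lt_min hθ' one_pos
  refine ⟨⌈2 / θ⌉₊, fun {a} ha ↦ ⟨max ⌈1 / θ⌉₊ ⌈(r * (1 + 1 / a)) ^ 2 / (ε / 2)⌉₊,
    fun {α} _ _ {k l φ U} hk hkα hφ hl hU ↦ ?_⟩⟩
  obtain ⟨hkθ, hkC⟩ := max_le_iff.1 hk
  rw [Nat.ceil_le, div_le_iff₀' (by positivity)] at hkθ hkC
  set s := ⌊θ * k⌋₊
  have hs : s ≠ 0 := (Nat.floor_pos.2 hkθ).ne'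
  have hsθ : (s : ℝ) ≤ θ * k := Nat.floor_le (by positivity)
  have hsk : s ≤ k := by
    exact_mod_cast hsθ.trans (mul_le_of_le_one_left (Nat.cast_nonneg k) (min_le_right θ' 1))
  obtain ⟨N, hNU, hN⟩ : ∃ N ⊆ univ \ U, #N = s :=
    exists_subset_card_eq (by rw [← compl_eq_univ_sdiff, card_compl]; omega)
  have hUN : Disjoint U N := disjoint_of_subset_right hNU disjoint_sdiff
  refine (relabelProb_card_heavy_le (ε := ε / 2) hφ hl ha hs (hsk.trans_eq hU.symm)
    (hU.trans_le (le_ceil_two_div_mul_floor_mul hθ hkθ)) hUN (card_pos.1 (by omega))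
    fun R hR ↦ ?_).trans ?_
  · obtain ⟨hRU, hRs⟩ := mem_powersetCard.1 hR
    have hRN : Disjoint R N := hUN.mono_left hRU
    simpa only [sdiff_union_of_subset hRU] using hconst φ l hkα (b := U \ R) (P := R ∪ N) (R := R)
      (disjoint_union_right.2 ⟨sdiff_disjoint, hUN.mono_left sdiff_subset⟩)
      (mem_powersetCard.2 ⟨subset_union_left, hRs⟩)
      (by rw [card_union_of_disjoint hRN, hRs, hN, two_mul])
      (by rw [card_sdiff_of_subset hRU, hRs, hU, Nat.sub_add_cancel hsk])
      (hsθ.trans (by gcongr; exact min_le_left _ _))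
  · rw [hU, ← le_sub_iff_add_le, sub_half, div_le_iff₀' (by positivity)]
    linarith

end FewHeavyVertices

/-! ### Gaps in the weighted degrees -/

section RandomSubset

variable {α : Type*}

lemma card_mul_sum_powersetCard_sum {R : Type*} [CommSemiring R] (x : Finset α) (m : ℕ)
    (f : α → R) :
    (#x : R) * ∑ W ∈ x.powersetCard m, ∑ v ∈ W, f v = m * (#x).choose m * ∑ v ∈ x, f v := by
  classical
  obtain _ | m := m
  · simp
  have hswap : ∑ W ∈ x.powersetCard (m + 1), ∑ v ∈ W, f v =
      ∑ v ∈ x, #{W ∈ x.powersetCard (m + 1) | v ∈ W} * f v := by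
    rw [sum_comm' (t' := x) (s' := fun v ↦ {W ∈ x.powersetCard (m + 1) | v ∈ W})]
    · simp only [sum_const, nsmul_eq_mul]
    · simp only [mem_powersetCard, mem_filter]
      exact fun W v ↦ ⟨fun h ↦ ⟨h, h.1.1 h.2⟩, And.left⟩
  rw [hswap, mul_sum, mul_sum]
  refine sum_congr rfl fun v hv ↦ ?_
  have hcount := card_filter_superset_powersetCard (s := m + 1) (singleton_subset_iff.2 hv)
    (by simp)
  simp only [singleton_subset_iff, card_singleton, Nat.add_sub_cancel] at hcount
  have hchoose : #x * (#x - 1).choose m = (m + 1) * (#x).choose (m + 1) := by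
    have := Nat.add_one_mul_choose_eq (#x - 1) m
    rwa [Nat.sub_add_cancel (card_pos.2 ⟨v, hv⟩), mul_comm (Nat.choose _ _)] at this
  rw [hcount, ← mul_assoc]
  exact_mod_cast congrArg (fun j : ℕ ↦ (j : R) * f v) hchoose

lemma card_filter_lt_sum_mul_le {x : Finset α} {m : ℕ} {f : α → ℝ} (hf : ∀ v, 0 ≤ f v) (c : ℝ) :
    #{W ∈ x.powersetCard m | c < ∑ v ∈ W, f v} * c * #x ≤
      m * (#x).choose m * ∑ v ∈ x, f v := by
  rw [← card_mul_sum_powersetCard_sum, mul_comm (#x : ℝ)]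
  gcongr
  calc (#{W ∈ x.powersetCard m | c < ∑ v ∈ W, f v} : ℝ) * c
      = #{W ∈ x.powersetCard m | c < ∑ v ∈ W, f v} • c := (nsmul_eq_mul _ _).symm
    _ ≤ ∑ W ∈ x.powersetCard m with c < ∑ v ∈ W, f v, ∑ v ∈ W, f v :=
        card_nsmul_le_sum _ _ _ fun W hW ↦ (mem_filter.1 hW).2.le
    _ ≤ ∑ W ∈ x.powersetCard m, ∑ v ∈ W, f v :=
        sum_le_sum_of_subset_of_nonneg (filter_subset _ _) fun W _ _ ↦ sum_nonneg fun v _ ↦ hf v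

lemma sum_powerset_filter_card_le {R : Type*} [CommSemiring R] (F : Finset α) (M : ℕ)
    (f : ℕ → R) :
    ∑ S ∈ F.powerset with #S ≤ M, f #S = ∑ m ∈ range (M + 1), (#F).choose m * f m := by
  rw [← sum_fiberwise_of_maps_to (g := card) (t := range (M + 1)) fun S hS ↦
    mem_range_succ_iff.2 (mem_filter.1 hS).2]
  refine sum_congr rfl fun m hm ↦ ?_
  have hfibre : {S ∈ F.powerset.filter (#· ≤ M) | #S = m} = F.powersetCard m := by
    ext S
    simp only [mem_filter, mem_powerset, mem_powersetCard]
    have := mem_range_succ_iff.1 hm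
    lia
  rw [hfibre, sum_congr rfl fun S hS ↦ by rw [(mem_powersetCard.1 hS).2], sum_const,
    card_powersetCard, nsmul_eq_mul]

end RandomSubset

section RobustRemovals

variable {α : Type*} [DecidableEq α] {r l : ℕ} {b : ℝ} {φ : Finset α → ℤ} {x S : Finset α}

/-- The sets `W ⊆ x` with as many elements as `S` whose removal from `insert v x` costs weight at
most `b / 4`, for every `v ∈ S`; the sets `insert v x` are meant to have weight `l`. -/
noncomputable def robustRemovals (r l : ℕ) (b : ℝ) (φ : Finset α → ℤ) (x S : Finset α) :
    Finset (Finset α) :=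
  {W ∈ x.powersetCard #S | ∀ v ∈ S, l - b / 4 ≤ ((edgeWeight r φ (insert v x \ W) : ℤ) : ℝ)}

lemma mem_robustRemovals {W : Finset α} : W ∈ robustRemovals r l b φ x S ↔
    W ∈ x.powersetCard #S ∧ ∀ v ∈ S, l - b / 4 ≤ ((edgeWeight r φ (insert v x \ W) : ℤ) : ℝ) :=
  mem_filter

lemma card_filter_edgeWeight_insert_sdiff_lt_mul_le (hφ : ∀ W, 0 ≤ φ W) {v : α}
    (hv : edgeWeight r φ (insert v x) = l) (m : ℕ) :
    #{W ∈ x.powersetCard m | ((edgeWeight r φ (insert v x \ W) : ℤ) : ℝ) < l - b / 4} *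
        (b / 4) * #x ≤
      m * (#x).choose m * (r * l) := by
  rcases lt_or_ge b 0 with hb | hb
  · exact (mul_nonpos_of_nonpos_of_nonneg (mul_nonpos_of_nonneg_of_nonpos (by positivity)
      (by linarith)) (by positivity)).trans (by positivity)
  let degree (w : α) : ℝ := (weightedDegree r φ w (insert v x) : ℤ)
  have hdegree (w) : 0 ≤ degree w := Int.cast_nonneg (weightedDegree_nonneg hφ w _)
  have hsum : ∑ w ∈ x, degree w ≤ r * l := by
    have htotal := sum_weightedDegree r φ (insert v x)
    rw [hv, nsmul_eq_mul] at htotal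
    calc ∑ w ∈ x, degree w
        ≤ ∑ w ∈ insert v x, degree w :=
          sum_le_sum_of_subset_of_nonneg (subset_insert v x) fun w _ _ ↦ hdegree w
      _ = r * l := by
          simp only [degree]
          exact_mod_cast htotal
  have hsub :
      {W ∈ x.powersetCard m | ((edgeWeight r φ (insert v x \ W) : ℤ) : ℝ) < l - b / 4} ⊆
        {W ∈ x.powersetCard m | b / 4 < ∑ w ∈ W, degree w} := by
    refine monotone_filter_right _ fun W _ hW ↦ ?_
    have hremove := edgeWeight_le_sum_weightedDegree_add hφ (insert v x) W (r := r)
    rw [hv] at hremove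
    have : (l : ℝ) ≤ ∑ w ∈ W, degree w + (edgeWeight r φ (insert v x \ W) : ℤ) := by
      simp only [degree]
      exact_mod_cast hremove
    linarith
  calc (#{W ∈ x.powersetCard m | ((edgeWeight r φ (insert v x \ W) : ℤ) : ℝ) < l - b / 4} : ℝ) *
        (b / 4) * #x
      ≤ #{W ∈ x.powersetCard m | b / 4 < ∑ w ∈ W, degree w} * (b / 4) * #x := by
        grw [hsub]
    _ ≤ m * (#x).choose m * ∑ w ∈ x, degree w := card_filter_lt_sum_mul_le hdegree _
    _ ≤ m * (#x).choose m * (r * l) := by gcongr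

lemma one_sub_mul_choose_le_card_robustRemovals (hφ : ∀ W, 0 ≤ φ W)
    (hS : ∀ v ∈ S, edgeWeight r φ (insert v x) = l) (hb : 0 < b) (hx : x.Nonempty) {ε : ℝ}
    (hε : 4 * r * (#S : ℝ) ^ 2 * l ≤ ε * b * #x) :
    (1 - ε) * (#x).choose #S ≤ #(robustRemovals r l b φ x S) := by
  set fragile : α → Finset (Finset α) := fun v ↦
    {W ∈ x.powersetCard #S | ((edgeWeight r φ (insert v x \ W) : ℤ) : ℝ) < l - b / 4}
  have hcover : x.powersetCard #S ⊆ robustRemovals r l b φ x S ∪ S.biUnion fragile := by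
    intro W hW
    by_cases hrobust : ∀ v ∈ S, l - b / 4 ≤ ((edgeWeight r φ (insert v x \ W) : ℤ) : ℝ)
    · exact mem_union_left _ (mem_robustRemovals.2 ⟨hW, hrobust⟩)
    · push Not at hrobust
      obtain ⟨v, hv, hlt⟩ := hrobust
      exact mem_union_right _ (mem_biUnion.2 ⟨v, hv, mem_filter.2 ⟨hW, hlt⟩⟩)
  have hcount : (#x).choose #S ≤ #(robustRemovals r l b φ x S) + ∑ v ∈ S, #(fragile v) := by
    rw [← card_powersetCard]
    exact (card_le_card hcover).trans ((card_union_le _ _).trans (by grw [card_biUnion_le]))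
  have hcount' : ((#x).choose #S : ℝ) ≤
      #(robustRemovals r l b φ x S) + ∑ v ∈ S, (#(fragile v) : ℝ) := by exact_mod_cast hcount
  have hpos : 0 < b / 4 * #x := mul_pos (by positivity) (by exact_mod_cast hx.card_pos)
  have hfragile : (∑ v ∈ S, (#(fragile v) : ℝ)) * (b / 4 * #x) ≤
      ε * (#x).choose #S * (b / 4 * #x) :=
    calc (∑ v ∈ S, (#(fragile v) : ℝ)) * (b / 4 * #x)
        = ∑ v ∈ S, #(fragile v) * (b / 4) * #x := by simp only [sum_mul, mul_assoc]
      _ ≤ ∑ _ ∈ S, #S * (#x).choose #S * (r * l : ℝ) := sum_le_sum fun v hv ↦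
          card_filter_edgeWeight_insert_sdiff_lt_mul_le hφ (hS v hv) #S
      _ = 4 * r * (#S : ℝ) ^ 2 * l * ((#x).choose #S / 4) := by
          rw [sum_const, nsmul_eq_mul]
          ring
      _ ≤ ε * b * #x * ((#x).choose #S / 4) := by gcongr
      _ = ε * (#x).choose #S * (b / 4 * #x) := by ring
  linarith [le_of_mul_le_mul_right hfragile hpos]

end RobustRemovals

section Fibres

variable {α : Type*} [Fintype α] [LinearOrder α] {r k l M : ℕ} {a b : ℝ} {φ : Finset α → ℤ}

/-- The `k`-sets of weight `l` containing a vertex of weighted degree at least `b` but none whose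
weighted degree lies in the gap `[a, b)`. -/
noncomputable def gapSets (r k l : ℕ) (a b : ℝ) (φ : Finset α → ℤ) : Finset (Finset α) :=
  {U ∈ univ.powersetCard k | edgeWeight r φ U = l ∧
    (∃ v ∈ U, b ≤ ((weightedDegree r φ v U : ℤ) : ℝ)) ∧
    ∀ v ∈ U, ((weightedDegree r φ v U : ℤ) : ℝ) < a ∨ b ≤ ((weightedDegree r φ v U : ℤ) : ℝ)}

/-- The fibre over `x` of the map which removes from a set in `gapSets r k l a b φ` its largest
vertex of weighted degree at least `b`. The linear order only serves to make this vertex unique. -/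
noncomputable def gapFibre (r k l : ℕ) (a b : ℝ) (φ : Finset α → ℤ) (x : Finset α) : Finset α :=
  {v | v ∉ x ∧ insert v x ∈ gapSets r k l a b φ ∧
    b ≤ ((weightedDegree r φ v (insert v x) : ℤ) : ℝ) ∧
    ∀ u ∈ insert v x, b ≤ ((weightedDegree r φ u (insert v x) : ℤ) : ℝ) → u ≤ v}

/-- The triples `(x, S, W)` for which `x` may be moved to `(x ∪ S) \ W`, where `S` consists of at
most `M` elements of the fibre over `x` and `W ⊆ x` is a robust removal for `S`. -/
noncomputable def gapShifts (r k l M : ℕ) (a b : ℝ) (φ : Finset α → ℤ) :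
    Finset (Σ _ : Finset α, Σ _ : Finset α, Finset α) :=
  Finset.sigma {x | (gapFibre r k l a b φ x).Nonempty} fun x ↦
    Finset.sigma {S ∈ (gapFibre r k l a b φ x).powerset | #S ≤ M} fun S ↦
      robustRemovals r l b φ x S

lemma exists_mem_gapFibre_erase {U : Finset α} (hU : U ∈ gapSets r k l a b φ) :
    ∃ v ∈ U, v ∈ gapFibre r k l a b φ (U.erase v) := by
  obtain ⟨u, hu, hbu⟩ := (mem_filter.1 hU).2.2.1
  obtain ⟨v, hv, hmax⟩ := exists_max_image {v ∈ U | b ≤ ((weightedDegree r φ v U : ℤ) : ℝ)} id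
    ⟨u, mem_filter.2 ⟨hu, hbu⟩⟩
  obtain ⟨hvU, hbv⟩ := mem_filter.1 hv
  refine ⟨v, hvU, ?_⟩
  rw [gapFibre, mem_filter, insert_erase hvU]
  exact ⟨mem_univ v, notMem_erase v U, hU, hbv, fun w hw hbw ↦ hmax w (mem_filter.2 ⟨hw, hbw⟩)⟩

lemma card_gapSets_le (r k l : ℕ) (a b : ℝ) (φ : Finset α → ℤ) :
    #(gapSets r k l a b φ) ≤
      ∑ x with (gapFibre r k l a b φ x).Nonempty, #(gapFibre r k l a b φ x) := by
  rw [← card_sigma]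
  refine card_le_card_of_surjOn (fun t ↦ insert t.2 t.1) fun U hU ↦ ?_
  obtain ⟨v, hvU, hv⟩ := exists_mem_gapFibre_erase hU
  exact ⟨⟨U.erase v, v⟩, mem_sigma.2 ⟨mem_filter.2 ⟨mem_univ _, v, hv⟩, hv⟩, insert_erase hvU⟩

lemma disjoint_gapFibre (x : Finset α) : Disjoint x (gapFibre r k l a b φ x) :=
  disjoint_right.2 fun _ hv ↦ (mem_filter.1 hv).2.1

lemma card_of_gapFibre_nonempty {x : Finset α} (hx : (gapFibre r k l a b φ x).Nonempty) :
    #x = k - 1 := by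
  obtain ⟨v, hv⟩ := hx
  obtain ⟨-, hvx, hU, -⟩ := mem_filter.1 hv
  rw [← (mem_powersetCard.1 (mem_filter.1 hU).1).2, card_insert_of_notMem hvx, Nat.add_sub_cancel]

lemma edgeWeight_insert_of_mem_gapFibre {x : Finset α} {v : α}
    (hv : v ∈ gapFibre r k l a b φ x) : edgeWeight r φ (insert v x) = l :=
  (mem_filter.1 (mem_filter.1 hv).2.2.1).2.1

lemma edgeWeight_le_of_gapFibre_nonempty {x : Finset α}
    (hx : (gapFibre r k l a b φ x).Nonempty) : ((edgeWeight r φ x : ℤ) : ℝ) ≤ l - b := by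
  obtain ⟨v, hv⟩ := hx
  obtain ⟨-, hvx, -, hb, -⟩ := mem_filter.1 hv
  have hsplit := weightedDegree_add_edgeWeight_erase r φ v (insert v x)
  rw [erase_insert hvx, edgeWeight_insert_of_mem_gapFibre hv] at hsplit
  have : ((weightedDegree r φ v (insert v x) : ℤ) : ℝ) + (edgeWeight r φ x : ℤ) = l := by
    exact_mod_cast hsplit
  linarith

-- Otherwise `insert v x \ W` loses only vertices of weighted degree less than `a` when it is cut
-- down to a subset of `x'`, so its weight would be at most `l - b + M * a`.
lemma exists_lt_of_union_sdiff_eq (hφ : ∀ W, 0 ≤ φ W) (ha : 0 ≤ a) (hab : M * a ≤ b / 4)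
    (hb : 0 < b) {x S W x' S' W' : Finset α} (hS : S ⊆ gapFibre r k l a b φ x)
    (hW : W ∈ robustRemovals r l b φ x S) (hx' : (gapFibre r k l a b φ x').Nonempty)
    (hS' : #S' ≤ M) (hy : (x ∪ S) \ W = (x' ∪ S') \ W') {v : α} (hvS : v ∈ S) (hvS' : v ∉ S') :
    ∃ u ∈ S' \ S, u < v := by
  by_contra! hmin
  obtain ⟨-, -, hU, -, hmax⟩ := mem_filter.1 (hS hvS)
  have hgap := (mem_filter.1 hU).2.2.2
  set z := insert v x \ W
  have hlight : ∀ u ∈ S' ∩ z, ((weightedDegree r φ u z : ℤ) : ℝ) ≤ a := by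
    intro u hu
    obtain ⟨huS', huz⟩ := mem_inter.1 hu
    have hux : u ∈ x := mem_of_mem_insert_of_ne (mem_sdiff.1 huz).1 fun h ↦ hvS' (h ▸ huS')
    have huS : u ∉ S := fun h ↦ disjoint_left.1 (disjoint_gapFibre x) hux (hS h)
    have huv : ¬ u ≤ v := fun h ↦ hvS' (h.antisymm (hmin u (mem_sdiff.2 ⟨huS', huS⟩)) ▸ huS')
    have hsmall := (hgap u (mem_insert_of_mem hux)).resolve_right
      fun h ↦ huv (hmax u (mem_insert_of_mem hux) h)
    exact (Int.cast_le.2 (weightedDegree_mono hφ u sdiff_subset)).trans hsmall.le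
  have hrest : z \ (S' ∩ z) ⊆ x' := by
    intro u hu
    obtain ⟨huz, huS'⟩ := mem_sdiff.1 hu
    have huy : u ∈ (x' ∪ S') \ W' :=
      hy ▸ sdiff_subset_sdiff (insert_subset (mem_union_right x hvS) subset_union_left)
        subset_rfl huz
    exact (mem_union.1 (mem_sdiff.1 huy).1).resolve_right fun h ↦ huS' (mem_inter.2 ⟨h, huz⟩)
  have hloss : ∑ u ∈ S' ∩ z, ((weightedDegree r φ u z : ℤ) : ℝ) ≤ b / 4 := by
    calc ∑ u ∈ S' ∩ z, ((weightedDegree r φ u z : ℤ) : ℝ)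
        ≤ #(S' ∩ z) • a := sum_le_card_nsmul _ _ _ hlight
      _ ≤ M * a := by
          rw [nsmul_eq_mul]
          grw [inter_subset_left, hS']
      _ ≤ b / 4 := hab
  have hremove : ((edgeWeight r φ z : ℤ) : ℝ) ≤
      ∑ u ∈ S' ∩ z, ((weightedDegree r φ u z : ℤ) : ℝ) + (edgeWeight r φ (z \ (S' ∩ z)) : ℤ) := by
    exact_mod_cast edgeWeight_le_sum_weightedDegree_add hφ z (S' ∩ z)
  have hmono : ((edgeWeight r φ (z \ (S' ∩ z)) : ℤ) : ℝ) ≤ (edgeWeight r φ x' : ℤ) :=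
    Int.cast_le.2 (sum_le_sum_of_subset_of_nonneg (powersetCard_mono hrest) fun W _ _ ↦ hφ W)
  linarith [edgeWeight_le_of_gapFibre_nonempty hx', (mem_robustRemovals.1 hW).2 v hvS]

lemma mem_gapShifts {x S W : Finset α} :
    (⟨x, S, W⟩ : Σ _ : Finset α, Σ _ : Finset α, Finset α) ∈ gapShifts r k l M a b φ ↔
      (gapFibre r k l a b φ x).Nonempty ∧ (S ⊆ gapFibre r k l a b φ x ∧ #S ≤ M) ∧
        W ∈ robustRemovals r l b φ x S := by
  simp only [gapShifts, mem_sigma, mem_filter, mem_univ, true_and, mem_powerset]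

lemma eq_of_union_sdiff_eq (hφ : ∀ W, 0 ≤ φ W) (ha : 0 ≤ a) (hab : M * a ≤ b / 4) (hb : 0 < b)
    {x S W x' S' W' : Finset α} (h : ⟨x, S, W⟩ ∈ gapShifts r k l M a b φ)
    (h' : ⟨x', S', W'⟩ ∈ gapShifts r k l M a b φ) (hy : (x ∪ S) \ W = (x' ∪ S') \ W') :
    S = S' := by
  obtain ⟨hx, ⟨hS, hSM⟩, hW⟩ := mem_gapShifts.1 h
  obtain ⟨hx', ⟨hS', hSM'⟩, hW'⟩ := mem_gapShifts.1 h'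
  by_contra hne
  obtain ⟨v, hv, hmin⟩ := exists_min_image (symmDiff S S') id
    (nonempty_iff_ne_empty.2 fun h ↦ hne (symmDiff_eq_bot.1 h))
  rcases mem_symmDiff.1 hv with ⟨hvS, hvS'⟩ | ⟨hvS', hvS⟩
  · obtain ⟨u, hu, huv⟩ := exists_lt_of_union_sdiff_eq hφ ha hab hb hS hW hx' hSM' hy hvS hvS'
    exact (hmin u (mem_union_right _ hu)).not_gt huv
  · obtain ⟨u, hu, huv⟩ := exists_lt_of_union_sdiff_eq hφ ha hab hb hS' hW' hx hSM hy.symm hvS' hvS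
    exact (hmin u (mem_union_left _ hu)).not_gt huv

lemma card_union_sdiff_of_mem_gapShifts {x S W : Finset α}
    (h : ⟨x, S, W⟩ ∈ gapShifts r k l M a b φ) : #((x ∪ S) \ W) = k - 1 := by
  obtain ⟨hx, ⟨hS, -⟩, hW⟩ := mem_gapShifts.1 h
  obtain ⟨hWx, hWS⟩ := mem_powersetCard.1 (mem_robustRemovals.1 hW).1
  rw [card_sdiff_of_subset (hWx.trans subset_union_left),
    card_union_of_disjoint ((disjoint_gapFibre x).mono_right hS), hWS, Nat.add_sub_cancel,
    card_of_gapFibre_nonempty hx]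

lemma sdiff_union_eq_of_mem_gapShifts {x S W : Finset α}
    (h : ⟨x, S, W⟩ ∈ gapShifts r k l M a b φ) : ((x ∪ S) \ W) \ S ∪ W = x := by
  obtain ⟨-, ⟨hS, -⟩, hW⟩ := mem_gapShifts.1 h
  have hWx : W ⊆ x := (mem_powersetCard.1 (mem_robustRemovals.1 hW).1).1
  rw [sdiff_right_comm, union_sdiff_cancel_right ((disjoint_gapFibre x).mono_right hS),
    sdiff_union_of_subset hWx]

lemma sum_gapShifts_union_sdiff_eq_le_one (hφ : ∀ W, 0 ≤ φ W) (ha : 0 ≤ a) (hab : M * a ≤ b / 4)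
    (hb : 0 < b) (y : Finset α) :
    ∑ t ∈ gapShifts r k l M a b φ with (t.1 ∪ t.2.1) \ t.2.2 = y,
      (1 / (Fintype.card α - #y).choose #t.2.1 : ℝ) ≤ 1 := by
  rcases eq_empty_or_nonempty {t ∈ gapShifts r k l M a b φ | (t.1 ∪ t.2.1) \ t.2.2 = y} with
    hempty | ⟨⟨x₀, S₀, W₀⟩, h₀⟩
  · simp [hempty]
  obtain ⟨hmem₀, hy₀⟩ := mem_filter.1 h₀
  have hS {t} (ht : t ∈ {t ∈ gapShifts r k l M a b φ | (t.1 ∪ t.2.1) \ t.2.2 = y}) :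
      t.2.1 = S₀ :=
    eq_of_union_sdiff_eq hφ ha hab hb (mem_filter.1 ht).1 hmem₀
      ((mem_filter.1 ht).2.trans hy₀.symm)
  rw [sum_congr rfl fun t ht ↦ by rw [hS ht], sum_const, nsmul_eq_mul, mul_one_div]
  refine div_le_one_of_le₀ (Nat.cast_le.2 ?_) (Nat.cast_nonneg _)
  rw [← card_compl, ← card_powersetCard]
  refine card_le_card_of_injOn (fun t ↦ t.2.2) ?_ ?_
  · rintro ⟨x, S, W⟩ ht
    obtain ⟨hmem, hy⟩ := mem_filter.1 (mem_coe.1 ht)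
    have hcard : #W = #S :=
      (mem_powersetCard.1 (mem_robustRemovals.1 (mem_gapShifts.1 hmem).2.2).1).2
    refine mem_powersetCard.2 ⟨subset_compl_comm.1 ?_, hcard.trans (congrArg card (hS ht))⟩
    exact hy ▸ fun v hv ↦ mem_compl.2 (mem_sdiff.1 hv).2
  · rintro ⟨x, S, W⟩ ht ⟨x', S', W'⟩ ht' rfl
    obtain rfl : S = S' := (hS ht).trans (hS ht').symm
    obtain ⟨hmem, hy⟩ := mem_filter.1 (mem_coe.1 ht)
    obtain ⟨hmem', hy'⟩ := mem_filter.1 (mem_coe.1 ht')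
    obtain rfl : x = x' := by
      rw [← sdiff_union_eq_of_mem_gapShifts hmem, ← sdiff_union_eq_of_mem_gapShifts hmem']
      exact congrArg (· \ S ∪ W) (hy.trans hy'.symm)
    rfl

lemma sum_gapShifts_le_choose (hφ : ∀ W, 0 ≤ φ W) (ha : 0 ≤ a) (hab : M * a ≤ b / 4)
    (hb : 0 < b) :
    ∑ t ∈ gapShifts r k l M a b φ, (1 / (Fintype.card α - (k - 1)).choose #t.2.1 : ℝ) ≤
      (Fintype.card α).choose (k - 1) := by
  have hmaps : ∀ t ∈ gapShifts r k l M a b φ,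
      (t.1 ∪ t.2.1) \ t.2.2 ∈ (univ : Finset α).powersetCard (k - 1) := fun t ht ↦
    mem_powersetCard.2 ⟨subset_univ _, card_union_sdiff_of_mem_gapShifts ht⟩
  rw [← sum_fiberwise_of_maps_to hmaps]
  refine (sum_le_card_nsmul _ _ 1 fun y hy ↦ ?_).trans_eq
    (by rw [card_powersetCard, card_univ, nsmul_eq_mul, mul_one])
  rw [← (mem_powersetCard.1 hy).2]
  exact sum_gapShifts_union_sdiff_eq_le_one hφ ha hab hb y

theorem one_sub_mul_sum_choose_gapFibre_le (hφ : ∀ W, 0 ≤ φ W) (ha : 0 ≤ a)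
    (hab : M * a ≤ b / 4) (hb : 0 < b) (hk : 2 ≤ k) {ε : ℝ}
    (hε : 4 * r * (M : ℝ) ^ 2 * l ≤ ε * b * (k - 1 : ℕ)) :
    (1 - ε) * ∑ x with (gapFibre r k l a b φ x).Nonempty, ∑ m ∈ range (M + 1),
        (#(gapFibre r k l a b φ x)).choose m *
          ((k - 1).choose m / (Fintype.card α - (k - 1)).choose m : ℝ) ≤
      (Fintype.card α).choose (k - 1) := by
  refine le_trans ?_ (sum_gapShifts_le_choose (r := r) (l := l) hφ ha hab hb)
  rw [gapShifts, sum_sigma, mul_sum]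
  refine sum_le_sum fun x hx ↦ ?_
  have hcard : #x = k - 1 := card_of_gapFibre_nonempty (mem_filter.1 hx).2
  rw [← sum_powerset_filter_card_le _ M fun m ↦
    ((k - 1).choose m / (Fintype.card α - (k - 1)).choose m : ℝ), sum_sigma, mul_sum]
  refine sum_le_sum fun S hS ↦ ?_
  obtain ⟨hSF, hSM⟩ := mem_filter.1 hS
  dsimp only
  rw [sum_const, nsmul_eq_mul, mul_one_div, mul_div_assoc', ← hcard]
  gcongr
  refine one_sub_mul_choose_le_card_robustRemovals hφ
    (fun v hv ↦ edgeWeight_insert_of_mem_gapFibre (mem_powerset.1 hSF hv)) hb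
    (card_pos.1 (by omega)) ?_
  rw [hcard]
  exact le_trans (by gcongr) hε

end Fibres

section TruncatedExponential

lemma exists_exp_le_sum_pow_div_factorial_add (R : ℝ) {δ : ℝ} (hδ : 0 < δ) :
    ∃ N : ℕ, ∀ M, N ≤ M → ∀ u ∈ Set.Icc 0 R,
      Real.exp u ≤ ∑ m ∈ range M, u ^ m / (m.factorial : ℝ) + δ := by
  have hunif := tendstoUniformlyOn_tsum_nat (f := fun m (u : ℝ) ↦ u ^ m / (m.factorial : ℝ))
    (s := Set.Icc 0 R) (Real.summable_pow_div_factorial R) fun m u hu ↦ by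
      have := hu.1
      rw [Real.norm_of_nonneg (by positivity)]
      gcongr
      exact hu.2
  obtain ⟨N, hN⟩ := Filter.eventually_atTop.1 (Metric.tendstoUniformlyOn_iff.1 hunif δ hδ)
  refine ⟨N, fun M hM u hu ↦ ?_⟩
  have hdist := hN M hM u hu
  rw [← congrFun NormedSpace.exp_eq_tsum_div u, ← Real.exp_eq_exp_ℝ, Real.dist_eq] at hdist
  linarith [le_abs_self (Real.exp u - ∑ m ∈ range M, u ^ m / (m.factorial : ℝ))]

/-- A truncated form of `u ≤ e⁻¹ * exp u`. This inequality is the source of the constant `1 / e`. -/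
lemma exists_le_mul_sum_pow_div_factorial {δ : ℝ} (hδ : 0 < δ) :
    ∃ M : ℕ, ∀ u : ℝ, 0 ≤ u →
      u ≤ ((Real.exp 1)⁻¹ + δ) * ∑ m ∈ range (M + 1), u ^ m / (m.factorial : ℝ) := by
  obtain ⟨N, hN⟩ := exists_exp_le_sum_pow_div_factorial_add 6 hδ
  refine ⟨max N 2, fun u hu ↦ ?_⟩
  set P := ∑ m ∈ range (max N 2 + 1), u ^ m / (m.factorial : ℝ)
  have hterm : ∀ m ≤ 2, u ^ m / (m.factorial : ℝ) ≤ P := fun m hm ↦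
    single_le_sum (f := fun m ↦ u ^ m / (m.factorial : ℝ)) (fun _ _ ↦ by positivity)
      (mem_range.2 (by omega))
  have hone : 1 ≤ P := by simpa using hterm 0 zero_le_two
  rw [← mul_le_mul_iff_right₀ (Real.exp_pos 1), ← mul_assoc, mul_add,
    mul_inv_cancel₀ (Real.exp_ne_zero 1)]
  obtain hu6 | hu6 := le_or_gt u 6
  · calc Real.exp 1 * u ≤ Real.exp u := Real.exp_one_mul_le_exp
      _ ≤ P + δ := hN _ (by omega) u ⟨hu, hu6⟩
      _ ≤ (1 + Real.exp 1 * δ) * P := by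
        nlinarith [Real.one_lt_exp_iff.2 one_pos, mul_pos hδ (one_pos.trans_le hone)]
  · have hquad : u ^ 2 / 2 ≤ P := by simpa using hterm 2 le_rfl
    calc Real.exp 1 * u ≤ u ^ 2 / 2 := by nlinarith [Real.exp_one_lt_three]
      _ ≤ P := hquad
      _ ≤ (1 + Real.exp 1 * δ) * P := le_mul_of_one_le_left (by positivity)
        (le_add_of_nonneg_right (by positivity))

lemma sub_pow_div_factorial_le_choose {m M s : ℕ} (hm : m ≤ M) (hM : M ≤ s + 1) :
    ((s + 1 - M : ℝ) ^ m / (m.factorial : ℝ)) ≤ s.choose m := by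
  refine le_trans ?_ (Nat.pow_le_choose m s)
  rw [Nat.cast_sub (hm.trans hM)]
  push_cast
  have : (m : ℝ) ≤ M := Nat.cast_le.2 hm
  have : (M : ℝ) ≤ s + 1 := mod_cast hM
  gcongr

lemma pow_div_factorial_le_choose_mul_div {m M k p S : ℕ} (hm : m ≤ M) (hMS : M ≤ S)
    (hMk : M < k) (hMp : M ≤ p) (hp : 0 < p) :
    ((S - M) * (k - M) / p : ℝ) ^ m / (m.factorial : ℝ) ≤
      S.choose m * ((k - 1).choose m / p.choose m) := by
  have hS : (S - M : ℝ) ^ m / (m.factorial : ℝ) ≤ S.choose m := by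
    have : (M : ℝ) ≤ S := Nat.cast_le.2 hMS
    refine le_trans ?_ (sub_pow_div_factorial_le_choose hm (by omega))
    gcongr
    linarith
  have hk : (k - M : ℝ) ^ m / (m.factorial : ℝ) ≤ (k - 1).choose m := by
    have := sub_pow_div_factorial_le_choose (s := k - 1) hm (by omega)
    rwa [Nat.cast_sub (by omega), Nat.cast_one, sub_add_cancel] at this
  have hkM : (0 : ℝ) ≤ k - M := sub_nonneg.2 (Nat.cast_le.2 hMk.le)
  have : (0 : ℝ) < p := Nat.cast_pos.2 hp
  have hchoose : (0 : ℝ) < p.choose m := Nat.cast_pos.2 (Nat.choose_pos (hm.trans hMp))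
  calc ((S - M) * (k - M) / p : ℝ) ^ m / (m.factorial : ℝ)
      = (S - M : ℝ) ^ m / (m.factorial : ℝ) *
        ((k - M : ℝ) ^ m / (m.factorial : ℝ) / ((p : ℝ) ^ m / (m.factorial : ℝ))) := by
        rw [div_pow, mul_pow]
        field_simp
    _ ≤ S.choose m * ((k - 1).choose m / p.choose m) := by
        gcongr
        exact Nat.choose_le_pow_div m p

lemma mul_div_le_mul_sum_choose {d : ℝ} {M k p S : ℕ} (hd : 0 ≤ d)
    (hM : ∀ u : ℝ, 0 ≤ u →
      u ≤ ((Real.exp 1)⁻¹ + d) * ∑ m ∈ range (M + 1), u ^ m / (m.factorial : ℝ))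
    (hMk : M < k) (hk : M * (1 + d) ≤ d * k) (hMp : M ≤ p) (hp : 0 < p) (hkp : M * k ≤ d * p) :
    (S * k : ℝ) / p ≤ ((1 + d) * ((Real.exp 1)⁻¹ + d) + d) *
      ∑ m ∈ range (M + 1), (S.choose m : ℝ) * ((k - 1).choose m / p.choose m) := by
  set P := ∑ m ∈ range (M + 1), (S.choose m : ℝ) * ((k - 1).choose m / p.choose m : ℝ)
  have hone : 1 ≤ P := by
    simpa using single_le_sum
      (f := fun m ↦ (S.choose m : ℝ) * ((k - 1).choose m / p.choose m : ℝ))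
      (fun m _ ↦ by positivity) (mem_range.2 M.succ_pos)
  have hp' : (0 : ℝ) < p := Nat.cast_pos.2 hp
  have hMk' : (M : ℝ) ≤ k := Nat.cast_le.2 hMk.le
  obtain hS | hS := le_or_gt S M
  · have hSM : (S : ℝ) ≤ M := Nat.cast_le.2 hS
    calc (S * k : ℝ) / p ≤ d := (div_le_iff₀ hp').2 (le_trans (by gcongr) hkp)
      _ ≤ d * P := le_mul_of_one_le_right hd hone
      _ ≤ ((1 + d) * ((Real.exp 1)⁻¹ + d) + d) * P := by
        gcongr
        exact le_add_of_nonneg_left (by positivity)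
  · have hSM : (M : ℝ) ≤ S := Nat.cast_le.2 hS.le
    set u : ℝ := (S - M) * (k - M) / p with hu
    have hu0 : 0 ≤ u :=
      div_nonneg (mul_nonneg (sub_nonneg.2 hSM) (sub_nonneg.2 hMk')) hp'.le
    have huP : u ≤ ((Real.exp 1)⁻¹ + d) * P := (hM u hu0).trans <|
      mul_le_mul_of_nonneg_left (sum_le_sum fun m hm ↦ pow_div_factorial_le_choose_mul_div
        (Nat.le_of_lt_succ (mem_range.1 hm)) hS.le hMk hMp hp) (by positivity)
    calc (S * k : ℝ) / p ≤ (1 + d) * u + d := by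
          rw [hu, mul_div_assoc', div_add' _ _ _ hp'.ne', div_le_div_iff_of_pos_right hp']
          nlinarith [mul_le_mul_of_nonneg_left hk (sub_nonneg.2 hSM)]
      _ ≤ (1 + d) * (((Real.exp 1)⁻¹ + d) * P) + d * P := by
          gcongr
          exact le_mul_of_one_le_right hd hone
      _ = ((1 + d) * ((Real.exp 1)⁻¹ + d) + d) * P := by ring

lemma exists_mul_div_le_mul_sum_choose {δ : ℝ} (hδ : 0 < δ) :
    ∃ M K : ℕ, ∀ k, K ≤ k → ∃ N : ℕ, ∀ p, N ≤ p → ∀ S : ℕ,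
      (S * k : ℝ) / p ≤ ((Real.exp 1)⁻¹ + δ) *
        ∑ m ∈ range (M + 1), (S.choose m : ℝ) * ((k - 1).choose m / p.choose m) := by
  obtain ⟨d, hd, hdδ, hd1⟩ : ∃ d : ℝ, 0 < d ∧ d ≤ δ / 4 ∧ d ≤ 1 :=
    ⟨min (δ / 4) 1, by positivity, min_le_left _ _, min_le_right _ _⟩
  obtain ⟨M, hM⟩ := exists_le_mul_sum_pow_div_factorial hd
  refine ⟨M, max (M + 1) ⌈M * (1 + d) / d⌉₊, fun k hk ↦
    ⟨max (M + 1) ⌈M * k / d⌉₊, fun p hp S ↦ ?_⟩⟩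
  rw [max_le_iff, Nat.ceil_le, div_le_iff₀' hd] at hk hp
  have hconst : (1 + d) * ((Real.exp 1)⁻¹ + d) + d ≤ (Real.exp 1)⁻¹ + δ := by
    have he : (Real.exp 1)⁻¹ ≤ 1 := inv_le_one_of_one_le₀ (Real.one_le_exp zero_le_one)
    nlinarith
  exact (mul_div_le_mul_sum_choose hd.le hM hk.1 hk.2 (by omega) (by omega) hp.2).trans
    (mul_le_mul_of_nonneg_right hconst (by positivity))

end TruncatedExponential

section GapCount

lemma one_sub_mul_card_gapSets_le {α : Type*} [Fintype α] [LinearOrder α] {r k l M : ℕ}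
    {a b c ε : ℝ} {φ : Finset α → ℤ} (hφ : ∀ W, 0 ≤ φ W) (ha : 0 ≤ a) (hab : M * a ≤ b / 4)
    (hb : 0 < b) (hk : 2 ≤ k) (hkα : k ≤ Fintype.card α)
    (hε : 4 * r * (M : ℝ) ^ 2 * l ≤ ε * b * (k - 1 : ℕ)) (hε1 : ε ≤ 1) (hc : 0 ≤ c)
    (hS : ∀ S : ℕ, (S * k : ℝ) / (Fintype.card α - (k - 1) : ℕ) ≤
      c * ∑ m ∈ range (M + 1),
        (S.choose m : ℝ) * ((k - 1).choose m / (Fintype.card α - (k - 1)).choose m)) :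
    (1 - ε) * #(gapSets r k l a b φ) ≤ c * (Fintype.card α).choose k := by
  have hpack := one_sub_mul_sum_choose_gapFibre_le (ε := ε) hφ ha hab hb hk hε
  set p := Fintype.card α - (k - 1)
  have hp : (0 : ℝ) < p := Nat.cast_pos.2 (by omega)
  have hk0 : (0 : ℝ) < k := Nat.cast_pos.2 (by omega)
  set X : Finset (Finset α) := {x | (gapFibre r k l a b φ x).Nonempty}
  set T := ∑ x ∈ X, ∑ m ∈ range (M + 1), ((#(gapFibre r k l a b φ x)).choose m : ℝ) *
    ((k - 1).choose m / p.choose m)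
  have hcard : (#(gapSets r k l a b φ) : ℝ) * k ≤ c * T * p := by
    rw [mul_sum, ← div_le_iff₀ hp]
    refine le_trans ?_ (sum_le_sum fun x _ ↦ hS #(gapFibre r k l a b φ x))
    rw [← sum_div, ← sum_mul]
    gcongr
    exact mod_cast card_gapSets_le r k l a b φ
  have hchoose : ((Fintype.card α).choose k : ℝ) * k = (Fintype.card α).choose (k - 1) * p := by
    have := Nat.choose_succ_right_eq (Fintype.card α) (k - 1)
    rw [Nat.sub_add_cancel (by omega)] at this
    exact mod_cast this
  refine le_of_mul_le_mul_right ?_ hk0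
  calc (1 - ε) * #(gapSets r k l a b φ) * k ≤ (1 - ε) * (c * T * p) := by
        rw [mul_assoc]
        exact mul_le_mul_of_nonneg_left hcard (sub_nonneg.2 hε1)
    _ = c * p * ((1 - ε) * T) := by ring
    _ ≤ c * p * (Fintype.card α).choose (k - 1) := by gcongr
    _ = c * (Fintype.card α).choose k * k := by rw [mul_assoc c _ (k : ℝ), hchoose]; ring

theorem exists_card_gapSets_le (r : ℕ) {δ : ℝ} (hδ : 0 < δ) :
    ∃ M : ℕ, ∀ β : ℝ, 0 < β → ∃ K : ℕ, ∀ k, K ≤ k → ∃ N : ℕ,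
      ∀ {α : Type u} [Fintype α] [LinearOrder α] {φ : Finset α → ℤ} {l : ℕ} {a b : ℝ},
        N ≤ Fintype.card α → (∀ W, 0 ≤ φ W) → 0 < l → β * l ≤ b → 0 ≤ a → M * a ≤ b / 4 →
        (#(gapSets r k l a b φ) : ℝ) ≤ ((Real.exp 1)⁻¹ + δ) * (Fintype.card α).choose k := by
  obtain ⟨M, K, hK⟩ := exists_mul_div_le_mul_sum_choose (half_pos hδ)
  set ε := δ / (4 * (1 + δ)) with hε
  have hε0 : 0 < ε := by positivity
  have hε1 : ε < 1 := by rw [hε, div_lt_one (by positivity)]; linarith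
  have hconst : (Real.exp 1)⁻¹ + δ / 2 ≤ (1 - ε) * ((Real.exp 1)⁻¹ + δ) := by
    have he : (Real.exp 1)⁻¹ ≤ 1 := inv_le_one_of_one_le₀ (Real.one_le_exp zero_le_one)
    have : ε * (1 + δ) = δ / 4 := by rw [hε]; field_simp
    nlinarith
  refine ⟨M, fun β hβ ↦ ⟨max (max K 2) (⌈4 * r * (M : ℝ) ^ 2 / (ε * β)⌉₊ + 1), fun k hk ↦ ?_⟩⟩
  obtain ⟨⟨hkK, hk2⟩, hkM⟩ : (K ≤ k ∧ 2 ≤ k) ∧ _ := by simpa only [max_le_iff] using hk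
  have hkM' : 4 * r * (M : ℝ) ^ 2 ≤ ε * β * (k - 1 : ℕ) :=
    (div_le_iff₀' (by positivity)).1 (Nat.ceil_le.1 (Nat.le_sub_one_of_lt hkM))
  obtain ⟨N, hN⟩ := hK k hkK
  refine ⟨N + k, fun {α} _ _ {φ l a b} hα hφ hl hb ha hab ↦ ?_⟩
  have hb0 : 0 < b := lt_of_lt_of_le (by positivity) hb
  have hεb : 4 * r * (M : ℝ) ^ 2 * l ≤ ε * b * (k - 1 : ℕ) := calc
    4 * r * (M : ℝ) ^ 2 * l ≤ ε * β * (k - 1 : ℕ) * l := by gcongr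
    _ = ε * (β * l) * (k - 1 : ℕ) := by ring
    _ ≤ ε * b * (k - 1 : ℕ) := by gcongr
  have hcount := one_sub_mul_card_gapSets_le hφ ha hab hb0 hk2 (by omega) hεb hε1.le
    (by positivity) (hN _ (by omega))
  refine le_of_mul_le_mul_left (hcount.trans ?_) (sub_pos.2 hε1)
  rw [← mul_assoc]
  gcongr

end GapCount

/-! ### Sets of a given weight -/

section Counting

variable {α : Type*} [Fintype α] {k : ℕ}

lemma card_filter_relabel {β : Type*} {Q : Finset α → (Finset α → β) → Prop}
    [∀ U, DecidablePred (Q U)]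
    (hQ : ∀ U τ ψ, Q U (relabel τ ψ) ↔ Q (U.map τ.toEmbedding) ψ) (τ : Equiv.Perm α)
    (φ : Finset α → β) :
    #{U ∈ univ.powersetCard k | Q U (relabel τ φ)} = #{U ∈ univ.powersetCard k | Q U φ} := by
  simp only [hQ]
  conv_rhs => rw [← map_univ_equiv τ, powersetCard_map, filter_map, card_map]
  rfl

lemma card_filter_le_of_relabelProb_le [DecidableEq α] {β : Type*} {φ : Finset α → β}
    {Q : Finset α → (Finset α → β) → Prop} [∀ U, DecidablePred (Q U)] {ε : ℝ}
    (hQ : ∀ U τ ψ, Q U (relabel τ ψ) ↔ Q (U.map τ.toEmbedding) ψ)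
    (h : ∀ U, #U = k → relabelProb φ (Q U) ≤ ε) :
    (#{U ∈ univ.powersetCard k | Q U φ} : ℝ) ≤ ε * (Fintype.card α).choose k := calc
  (#{U ∈ univ.powersetCard k | Q U φ} : ℝ)
    = ∑ U ∈ univ.powersetCard k, relabelProb φ (Q U) := by
      rw [sum_relabelProb]
      simp only [card_filter_relabel hQ]
      rw [sum_const, card_univ, nsmul_eq_mul, mul_div_cancel_left₀ _ card_perm_pos.ne']
  _ ≤ ε * (Fintype.card α).choose k := by
      rw [mul_comm, ← card_univ, ← card_powersetCard, ← nsmul_eq_mul]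
      exact sum_le_card_nsmul _ _ _ fun U hU ↦ h U (mem_powersetCard.1 hU).2

end Counting

section Scales

lemma exists_mul_card_filter_exists_mem_Ico_le {ι κ : Type*} (I : Finset ι) (V : ι → Finset κ)
    (f : ι → κ → ℝ) {t : ℕ → ℝ} (ht : Antitone t) (M : ℕ) {L : ℕ} (hL : 0 < L) :
    ∃ j < L, L * #{i ∈ I | #{v ∈ V i | t L ≤ f i v} < M ∧
      ∃ v ∈ V i, f i v ∈ Set.Ico (t (j + 1)) (t j)} ≤ M * #I := by
  set Q : ℕ → ι → Prop := fun j i ↦ #{v ∈ V i | t L ≤ f i v} < M ∧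
    ∃ v ∈ V i, f i v ∈ Set.Ico (t (j + 1)) (t j)
  have hfew : ∀ i ∈ I, #{j ∈ range L | Q j i} ≤ M := fun i _ ↦ by
    by_cases hM : #{v ∈ V i | t L ≤ f i v} < M
    · refine (card_le_card_of_forall_subsingleton
        (fun j v ↦ f i v ∈ Set.Ico (t (j + 1)) (t j)) (fun j hj ↦ ?_)
        fun v _ j hj j' hj' ↦ ?_).trans hM.le
      · obtain ⟨hjL, -, v, hv, hfv⟩ := mem_filter.1 hj
        exact ⟨v, mem_filter.2 ⟨hv, (ht (mem_range.1 hjL)).trans hfv.1⟩, hfv⟩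
      · exact ht.pairwise_disjoint_on_Ico_succ.eq (Set.not_disjoint_iff.2 ⟨_, hj.2, hj'.2⟩)
    · simp [Q, hM]
  have hdouble : ∑ j ∈ range L, #{i ∈ I | Q j i} ≤ M * #I := calc
    _ = ∑ i ∈ I, #{j ∈ range L | Q j i} := sum_card_bipartiteAbove_eq_sum_card_bipartiteBelow Q
    _ ≤ M * #I := by simpa [mul_comm] using sum_le_card_nsmul I _ M hfew
  obtain ⟨j, hj, hle⟩ := exists_le_of_sum_le (s := range L) (nonempty_range_iff.2 hL.ne')
    (f := fun j ↦ L * #{i ∈ I | Q j i}) (g := fun _ ↦ M * #I) (by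
      rw [← mul_sum, sum_const, card_range, smul_eq_mul]
      exact Nat.mul_le_mul_left L hdouble)
  exact ⟨j, mem_range.1 hj, hle⟩

lemma card_filter_edgeWeight_eq_le_add {α : Type*} [Fintype α] [LinearOrder α] (r k l M : ℕ)
    {a b β : ℝ} (hb : b ≤ β) (c : ℝ) (φ : Finset α → ℤ) :
    #{U ∈ univ.powersetCard k | edgeWeight r φ U = l} ≤
      #{U ∈ univ.powersetCard k |
        edgeWeight r φ U = l ∧ ∀ v ∈ U, ((weightedDegree r φ v U : ℤ) : ℝ) < β} +
      #{U ∈ univ.powersetCard k |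
        edgeWeight r φ U = l ∧ M ≤ #{v ∈ U | c ≤ ((weightedDegree r φ v U : ℤ) : ℝ)}} +
      #{U ∈ univ.powersetCard k | #{v ∈ U | c ≤ ((weightedDegree r φ v U : ℤ) : ℝ)} < M ∧
        ∃ v ∈ U, ((weightedDegree r φ v U : ℤ) : ℝ) ∈ Set.Ico a b} +
      #(gapSets r k l a b φ) := by
  refine le_trans (card_le_card ?_) <| (card_union_le _ _).trans <| Nat.add_le_add_right
    ((card_union_le _ _).trans <| Nat.add_le_add_right (card_union_le _ _) _) _
  intro U hU
  obtain ⟨hUk, hw⟩ := mem_filter.1 hU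
  simp only [mem_union, gapSets, mem_filter, hUk, hw, true_and]
  by_contra! hcon
  obtain ⟨⟨⟨⟨v, hv, hβv⟩, hM⟩, hgap⟩, hnot⟩ := hcon
  obtain ⟨w, hw, haw, hwb⟩ := hnot ⟨v, hv, hb.trans hβv⟩
  exact hgap hM w hw ⟨haw, hwb⟩

/-- A `k`-set of weight `l` either has no vertex of degree at least `t 0`, or has at least `M`
vertices of degree at least `t L`, or has a vertex with degree in the gap `[t (j + 1), t j)`, or
belongs to `gapSets` for this gap. The first two cases are rare by assumption, and the third one is
rare for some `j` by pigeonholing over the disjoint gaps. -/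
lemma card_filter_edgeWeight_eq_le {α : Type*} [Fintype α] [LinearOrder α] {r k l M L : ℕ}
    {c ε : ℝ} {φ : Finset α → ℤ} {t : ℕ → ℝ} (ht : Antitone t) (hL0 : 0 < L) (hL : M ≤ ε * L)
    (hlight : ∀ U, #U = k → relabelProb φ (fun ψ ↦ edgeWeight r ψ U = l ∧
      ∀ v ∈ U, ((weightedDegree r ψ v U : ℤ) : ℝ) < t 0) ≤ ε)
    (hheavy : ∀ U, #U = k → relabelProb φ (fun ψ ↦ edgeWeight r ψ U = l ∧
      M ≤ #{v ∈ U | t L ≤ ((weightedDegree r ψ v U : ℤ) : ℝ)}) ≤ ε)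
    (hgap : ∀ j < L,
      (#(gapSets r k l (t (j + 1)) (t j) φ) : ℝ) ≤ c * (Fintype.card α).choose k) :
    (#{U ∈ (univ : Finset α).powersetCard k | edgeWeight r φ U = l} : ℝ) ≤
      (c + 3 * ε) * (Fintype.card α).choose k := by
  obtain ⟨j, hj, hscale⟩ := exists_mul_card_filter_exists_mem_Ico_le
    ((univ : Finset α).powersetCard k) id
    (fun U v ↦ ((weightedDegree r φ v U : ℤ) : ℝ)) ht M hL0
  rw [card_powersetCard, card_univ] at hscale
  have hlight' := card_filter_le_of_relabelProb_le (fun U τ ψ ↦ by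
    simp only [edgeWeight_relabel, weightedDegree_relabel, forall_mem_map, Equiv.coe_toEmbedding])
    hlight
  have hheavy' := card_filter_le_of_relabelProb_le (fun U τ ψ ↦ by
    simp only [edgeWeight_relabel, weightedDegree_relabel, filter_map, card_map]
    rfl) hheavy
  have hscale' : (#{U ∈ (univ : Finset α).powersetCard k |
      #{v ∈ U | t L ≤ ((weightedDegree r φ v U : ℤ) : ℝ)} < M ∧
      ∃ v ∈ U, ((weightedDegree r φ v U : ℤ) : ℝ) ∈ Set.Ico (t (j + 1)) (t j)} : ℝ) ≤
      ε * (Fintype.card α).choose k := by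
    refine le_of_mul_le_mul_left (b := (_ : ℝ)) ?_ (Nat.cast_pos.2 hL0)
    refine le_trans (b := (M : ℝ) * (Fintype.card α).choose k) (mod_cast hscale) ?_
    rw [← mul_assoc, mul_comm (L : ℝ)]
    gcongr
  have hsum := Nat.cast_le (α := ℝ).2 (card_filter_edgeWeight_eq_le_add r k l M
    (a := t (j + 1)) (ht (Nat.zero_le j)) (t L) φ)
  push_cast at hsum
  linarith [hgap j hj]

theorem exists_card_filter_edgeWeight_eq_le {r : ℕ} (hr : r ≠ 0) {ε : ℝ} (hε : 0 < ε) :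
    ∃ K : ℕ, ∀ k, K ≤ k → ∃ N : ℕ, ∀ {α : Type u} [Fintype α] {φ : Finset α → ℤ} {l : ℕ},
      N ≤ Fintype.card α → (∀ W, φ W = 0 ∨ φ W = 1) → 0 < l → 2 * l ≤ k.choose r →
      (#{U ∈ (univ : Finset α).powersetCard k | edgeWeight r φ U = l} : ℝ) ≤
        ((Real.exp 1)⁻¹ + ε) * (Fintype.card α).choose k := by
  have hε4 : 0 < ε / 4 := by positivity
  obtain ⟨m, hgap⟩ := exists_card_gapSets_le.{u} r hε4
  obtain ⟨β, hβ, K₁, hlight⟩ := exists_relabelProb_weightedDegree_lt_le.{u} hr hε4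
  obtain ⟨M, hheavy⟩ := exists_relabelProb_card_heavy_le.{u} r hε4
  obtain ⟨L, hL⟩ := exists_nat_gt (M / (ε / 4))
  have hL0 : (0 : ℝ) < L := lt_of_le_of_lt (by positivity) hL
  set q : ℝ := 1 / (4 * (m + 1)) with hq
  have hq0 : 0 < q := by positivity
  have hq1 : q ≤ 1 := by rw [hq, div_le_one (by positivity)]; linarith [m.cast_nonneg (α := ℝ)]
  have hmq : m * q ≤ 1 / 4 := by rw [hq]; field_simp; linarith
  obtain ⟨K₂, hheavy⟩ := hheavy (a := β * q ^ L) (by positivity)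
  obtain ⟨K₃, hgap⟩ := hgap (β * q ^ L) (by positivity)
  refine ⟨max K₁ (max K₂ K₃), fun k hk ↦ ?_⟩
  simp only [max_le_iff] at hk
  obtain ⟨N, hgap⟩ := hgap k hk.2.2
  refine ⟨max N (2 * k), fun {α} _ {φ l} hα hφ hl hlk ↦ ?_⟩
  rw [max_le_iff] at hα
  let _ : LinearOrder α := LinearOrder.lift' (Fintype.equivFin α) (Fintype.equivFin α).injective
  have hφ0 : ∀ W, 0 ≤ φ W := fun W ↦ by obtain h | h := hφ W <;> simp [h]
  set t : ℕ → ℝ := fun j ↦ β * q ^ j * l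
  have ht : Antitone t := fun i j hij ↦ by
    have := pow_le_pow_of_le_one hq0.le hq1 hij
    dsimp only [t]
    gcongr
  have htq (j : ℕ) : m * t (j + 1) ≤ t j / 4 := calc
    m * t (j + 1) = m * q * t j := by simp only [t]; ring
    _ ≤ 1 / 4 * t j := by gcongr
    _ = t j / 4 := by ring
  refine (card_filter_edgeWeight_eq_le (c := (Real.exp 1)⁻¹ + ε / 4) (ε := ε / 4) (M := M) ht
    (Nat.cast_pos.1 hL0) ((div_le_iff₀' hε4).1 hL.le) (fun U hU ↦ ?_)
    (fun U hU ↦ hheavy hk.2.1 hα.2 hφ0 hl hU)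
    fun j hj ↦ hgap hα.1 hφ0 hl (ht hj.le) (by positivity) (htq j)).trans_eq (by ring)
  simpa only [t, pow_zero, mul_one] using hlight hk.1 hα.2 hφ hl hlk hU

end Scales

/-! ### Edge statistics of hypergraphs -/

section Hypergraphs

variable {α : Type*}

lemma edgeWeight_ite_mem [DecidableEq α] {r : ℕ} {E : Finset (Finset α)}
    (hE : ∀ e ∈ E, #e = r) (U : Finset α) :
    edgeWeight r (fun W ↦ if W ∈ E then (1 : ℤ) else 0) U = #{e ∈ E | e ⊆ U} := by
  rw [edgeWeight, sum_boole]
  congr 2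
  ext W
  simp only [mem_filter, mem_powersetCard]
  exact ⟨fun h ↦ ⟨h.2, h.1.1⟩, fun h ↦ ⟨⟨h.2, hE W h.1⟩, h.1⟩⟩

lemma edgeWeight_one_sub (r : ℕ) (ψ : Finset α → ℤ) (U : Finset α) :
    edgeWeight r (fun W ↦ 1 - ψ W) U = (#U).choose r - edgeWeight r ψ U := by
  simp [edgeWeight, sum_sub_distrib]

/-- Passing to the complementary hypergraph replaces `l` by `k.choose r - l`, so one may assume
`2 * l ≤ k.choose r`. -/
theorem exists_card_filter_card_subset_eq_le {r : ℕ} (hr : r ≠ 0) {ε : ℝ} (hε : 0 < ε) :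
    ∃ K : ℕ, ∀ k, K ≤ k → ∃ N : ℕ, ∀ {α : Type u} [Fintype α] [DecidableEq α]
      {E : Finset (Finset α)} {l : ℕ},
      N ≤ Fintype.card α → (∀ e ∈ E, #e = r) → 0 < l → l < k.choose r →
      (#{U ∈ (univ : Finset α).powersetCard k | #{e ∈ E | e ⊆ U} = l} : ℝ) ≤
        ((Real.exp 1)⁻¹ + ε) * (Fintype.card α).choose k := by
  obtain ⟨K, hK⟩ := exists_card_filter_edgeWeight_eq_le.{u} hr hε
  refine ⟨K, fun k hk ↦ (hK k hk).imp fun N hN {α} _ _ {E l} hα hE hl hlk ↦ ?_⟩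
  set φ : Finset α → ℤ := fun W ↦ if W ∈ E then 1 else 0
  have hweight : ∀ U, edgeWeight r φ U = #{e ∈ E | e ⊆ U} := edgeWeight_ite_mem hE
  have hφ : ∀ W, φ W = 0 ∨ φ W = 1 := fun W ↦ (ite_eq_or_eq (W ∈ E) 1 0).symm
  obtain h | h := le_or_gt (2 * l) (k.choose r)
  · refine le_trans (Nat.cast_le.2 (card_le_card ?_)) (hN hα hφ hl h)
    refine monotone_filter_right _ fun U _ hU ↦ ?_
    rw [hweight, hU]
  · refine le_trans (Nat.cast_le.2 (card_le_card ?_)) (hN (φ := fun W ↦ 1 - φ W)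
      (l := k.choose r - l) hα (fun W ↦ ?_) (Nat.sub_pos_of_lt hlk) (by omega))
    · refine fun U hU ↦ ?_
      obtain ⟨hUk, hU⟩ := mem_filter.1 hU
      rw [mem_filter, edgeWeight_one_sub, hweight, hU, (mem_powersetCard.1 hUk).2,
        Nat.cast_sub hlk.le]
      exact ⟨hUk, rfl⟩
    · obtain h | h := hφ W <;> simp [h]

lemma Nmax_le {r k l n : ℕ} {c : ℝ} (h : ∀ E : Finset (Finset (Fin n)), (∀ e ∈ E, #e = r) →
      (#{U ∈ (univ : Finset (Fin n)).powersetCard k | #{e ∈ E | e ⊆ U} = l} : ℝ) ≤ c) :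
    (Nmax r k l n : ℝ) ≤ c := by
  obtain ⟨E, hE, hcard⟩ : ∃ E : Finset (Finset (Fin n)), (∀ e ∈ E, #e = r) ∧
      Nmax r k l n = #{U ∈ (univ : Finset (Fin n)).powersetCard k | #{e ∈ E | e ⊆ U} = l} := by
    refine Nat.sSup_mem (s := {c : ℕ | ∃ E : Finset (Finset (Fin n)), (∀ e ∈ E, #e = r) ∧
      c = #{U ∈ (univ : Finset (Fin n)).powersetCard k | #{e ∈ E | e ⊆ U} = l}})
      ⟨_, ∅, by simp, rfl⟩ ⟨#((univ : Finset (Fin n)).powersetCard k), ?_⟩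
    rintro _ ⟨E, -, rfl⟩
    exact card_filter_le _ _
  exact hcard ▸ h E hE

end Hypergraphs

end EdgeStatistics

theorem stmt_17 (r : ℕ) (hr : 0 < r) (ε : ℝ) (hε : 0 < ε) :
    ∃ K : ℕ, ∀ k : ℕ, K ≤ k → ∀ ℓ : ℕ, 0 < ℓ → ℓ < k.choose r →
      ∀ L : ℝ,
        Filter.Tendsto (fun n : ℕ => (Nmax r k ℓ n : ℝ) / (n.choose k : ℝ))
          Filter.atTop (nhds L) →
        L ≤ (Real.exp 1)⁻¹ + ε := by
  obtain ⟨K, hK⟩ := EdgeStatistics.exists_card_filter_card_subset_eq_le hr.ne' hε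
  refine ⟨K, fun k hk ℓ hℓ hℓk L hL ↦ le_of_tendsto hL ?_⟩
  obtain ⟨N, hN⟩ := hK k hk
  filter_upwards [Filter.eventually_ge_atTop (max N k)] with n hn
  rw [max_le_iff] at hn
  rw [div_le_iff₀ (Nat.cast_pos.2 (Nat.choose_pos hn.2))]
  refine EdgeStatistics.Nmax_le fun E hE ↦ ?_
  simpa only [Fintype.card_fin] using hN (hn.1.trans_eq (Fintype.card_fin n).symm) hE hℓ hℓk
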